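/- arXiv:1701.05490 — 2 statements merged into one kernel-verified Lean document; each statement's English description precedes it below -/
import Mathlib

section
/- For every prime power q ≥ 7, the group PGL_2(q) satisfies the two-prime hypothesis. -/
open CategoryTheory

/-- The set of degrees of the complex irreducible characters of `G`. -/
def charDegrees (G : Type) [Group G] : Set ℕ :=
  {n | ∃ V : FDRep ℂ G, Simple V ∧ Module.finrank ℂ V = n}

/-- `G` satisfies the two-prime hypothesis: for any distinct irreducible character degrees
`a`, `b`, the gcd `gcd a b` has at most two prime divisors counted with multiplicity. -/
def TwoPrimeHypothesis (G : Type) [Group G] : Prop :=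
  ∀ a ∈ charDegrees G, ∀ b ∈ charDegrees G, a ≠ b →
    (Nat.gcd a b).primeFactorsList.length ≤ 2

/-- `PGL₂(F)`: the quotient of `GL₂(F)` by its center. -/
abbrev PGL2 (F : Type) [Field F] : Type :=
  Matrix.GeneralLinearGroup (Fin 2) F ⧸
    Subgroup.center (Matrix.GeneralLinearGroup (Fin 2) F)

/-!
Restrict an irreducible representation `V` of `GL₂(F)`, `q = |F|`, to the group `U ≅ F` of upper
unipotent matrices. The diagonal torus permutes the nontrivial characters of `U` transitively, so
they all occur in `V` with the same multiplicity `m`, and `dim V = dim V^U + (q - 1) m`. The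
anti-involution `g ↦ w gᵀ w` fixes `U` pointwise and the Hecke algebra of a nontrivial character of
`U` elementwise; this algebra is therefore commutative and `m ≤ 1`. If `m = 0`, then `U` acts
trivially, hence so does `SL₂(F)`, and `dim V = 1`. If `m = 1`, then `dim V ≥ q - 1`, with equality
when `V^U = 0`; when `V^U ≠ 0`, the torus has an eigenvector in it, which spans a line stable under
the Borel subgroup, of index `q + 1`, so `dim V ≤ q + 1`. Hence every irreducible character degree
of a quotient of `GL₂(F)` is `1` or lies in `[q - 1, q + 1]`, and two distinct such numbers have gcd
dividing `2`.
-/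

section Irreducible

variable {k G V : Type*} [Field k] [AddCommGroup V] [Module k V]

lemma exists_common_eigenvector [IsAlgClosed k] [FiniteDimensional k V] {ι : Type*}
    {T : ι → Module.End k V} (hT : ∀ i j, Commute (T i) (T j)) {W : Submodule k V} (hW : W ≠ ⊥)
    (hTW : ∀ i, ∀ w ∈ W, T i w ∈ W) :
    ∃ v ∈ W, v ≠ 0 ∧ ∀ i, ∃ c : k, T i v = c • v := by
  obtain ⟨U, ⟨hUW, hU, hTU⟩, hmin⟩ := wellFounded_lt.has_min
    {U : Submodule k V | U ≤ W ∧ U ≠ ⊥ ∧ ∀ i, ∀ u ∈ U, T i u ∈ U} ⟨W, le_rfl, hW, hTW⟩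
  obtain ⟨v, hvU, hv⟩ := U.exists_mem_ne_zero_of_ne_bot hU
  refine ⟨v, hUW hvU, hv, fun i ↦ ?_⟩
  have : Nontrivial U := U.nontrivial_iff_ne_bot.2 hU
  obtain ⟨μ, hμ⟩ := Module.End.exists_eigenvalue ((T i).restrict (hTU i))
  obtain ⟨u, hu⟩ := hμ.exists_hasEigenvector
  have hu_mem : (u : V) ∈ U ⊓ (T i).eigenspace μ :=
    ⟨u.2, Module.End.mem_eigenspace_iff.2 (congrArg Subtype.val hu.apply_eq_smul)⟩
  have hU_le : U ≤ (T i).eigenspace μ := by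
    by_contra hlt
    refine hmin _ ⟨inf_le_left.trans hUW, ?_, fun j w hw ↦ ⟨hTU j w hw.1, ?_⟩⟩
      (inf_lt_left.2 hlt)
    · exact Submodule.ne_bot_iff _ |>.2 ⟨u, hu_mem, fun h ↦ hu.2 (Subtype.ext h)⟩
    · exact Module.End.mapsTo_genEigenspace_of_comm (hT i j) μ 1 hw.2
  exact ⟨μ, Module.End.mem_eigenspace_iff.1 (hU_le hvU)⟩

section Monoid

variable [Monoid G] (ρ : Representation k G V) [ρ.IsIrreducible]

lemma span_orbit_eq_top {v : V} (hv : v ≠ 0) :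
    Submodule.span k (Set.range fun g ↦ ρ g v) = ⊤ := by
  let W : Subrepresentation ρ :=
    { toSubmodule := Submodule.span k (Set.range fun g ↦ ρ g v)
      apply_mem_toSubmodule := fun g w hw ↦ by
        refine Submodule.span_induction ?_ (by simp) (fun _ _ _ _ hx hy ↦ ?_)
          (fun c _ _ hx ↦ ?_) hw
        · rintro _ ⟨h, rfl⟩
          exact Submodule.subset_span ⟨g * h, by simp⟩
        · simpa using add_mem hx hy
        · simpa using Submodule.smul_mem _ c hx }
  have hvW : v ∈ W.toSubmodule := Submodule.subset_span ⟨1, by simp⟩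
  have hW : W ≠ ⊥ := fun h ↦ hv (by rw [h] at hvW; exact hvW)
  exact congrArg Subrepresentation.toSubmodule ((eq_bot_or_eq_top W).resolve_left hW)

lemma finrank_range_le_one_of_commute [IsAlgClosed k] [FiniteDimensional k V]
    {e : Module.End k V} (he : IsIdempotentElem e)
    (hcomm : ∀ g h, Commute (e * ρ g * e) (e * ρ h * e)) :
    Module.finrank k e.range ≤ 1 := by
  by_cases hbot : e.range = ⊥
  · rw [hbot, finrank_bot]
    exact zero_le_one
  obtain ⟨v, ⟨w, rfl⟩, hv, heigen⟩ := exists_common_eigenvector hcomm hbot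
    fun g _ _ ↦ ⟨_, rfl⟩
  have hle : e.range ≤ Submodule.span k {e w} := by
    rw [LinearMap.range_eq_map, ← span_orbit_eq_top ρ hv, Submodule.map_span_le]
    rintro _ ⟨g, rfl⟩
    obtain ⟨c, hc⟩ := heigen g
    have hew : e (e w) = e w := DFunLike.congr_fun he.eq w
    rw [Module.End.mul_apply, Module.End.mul_apply, hew] at hc
    exact Submodule.mem_span_singleton.2 ⟨c, hc.symm⟩
  exact (Submodule.finrank_mono hle).trans (finrank_span_singleton hv).le

lemma finrank_eq_one_of_commute [IsAlgClosed k] [FiniteDimensional k V]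
    (hcomm : ∀ g h, Commute (ρ g) (ρ h)) : Module.finrank k V = 1 := by
  have : Nontrivial V := IsSimpleModule.nontrivial (MonoidAlgebra k G) ρ.asModule
  have hle := finrank_range_le_one_of_commute ρ IsIdempotentElem.one (by simpa using hcomm)
  rw [LinearMap.range_eq_top.2 Function.surjective_id, finrank_top] at hle
  exact hle.antisymm Module.finrank_pos

end Monoid

lemma finrank_le_index [Group G] (ρ : Representation k G V) [ρ.IsIrreducible] {H : Subgroup G}
    [H.FiniteIndex] {v : V} (hv : v ≠ 0) (hH : ∀ h ∈ H, ∃ c : k, ρ h v = c • v) :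
    Module.finrank k V ≤ H.index := by
  have : Fintype (G ⧸ H) := Fintype.ofFinite _
  have hspan : Submodule.span k (Set.range fun x : G ⧸ H ↦ ρ x.out v) = ⊤ := by
    rw [eq_top_iff, ← span_orbit_eq_top ρ hv, Submodule.span_le]
    rintro _ ⟨g, rfl⟩
    obtain ⟨h, hh⟩ := QuotientGroup.mk_out_eq_mul H g
    obtain ⟨c, hc⟩ := hH _ (inv_mem h.2)
    have hg : ρ g v = c • ρ (g : G ⧸ H).out v := by
      rw [← map_smul, ← hc, ← Module.End.mul_apply, ← map_mul, hh, mul_inv_cancel_right]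
    change ρ g v ∈ Submodule.span k _
    rw [hg]
    exact Submodule.smul_mem _ c (Submodule.subset_span ⟨_, rfl⟩)
  calc Module.finrank k V = (Set.range fun x : G ⧸ H ↦ ρ x.out v).finrank k := by
        rw [Set.finrank, hspan, finrank_top]
    _ ≤ Fintype.card (G ⧸ H) := finrank_range_le_card _
    _ = H.index := by rw [Subgroup.index, Nat.card_eq_fintype_card]

end Irreducible

lemma isIrreducible_comp_of_surjective {k G H V : Type*} [Field k] [AddCommGroup V] [Module k V]
    [Monoid G] [Monoid H] (ρ : Representation k H V) [ρ.IsIrreducible] {f : G →* H}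
    (hf : Function.Surjective f) :
    Representation.IsIrreducible (ρ.comp f : Representation k G V) := by
  let e : Subrepresentation (A := k) (W := V) (ρ.comp f) ≃o Subrepresentation ρ :=
    { toFun W := ⟨W.toSubmodule, hf.forall.2 W.apply_mem_toSubmodule⟩
      invFun W := ⟨W.toSubmodule, fun g ↦ W.apply_mem_toSubmodule (f g)⟩
      left_inv _ := rfl
      right_inv _ := rfl
      map_rel_iff' := Iff.rfl }
  exact e.isSimpleOrder

lemma isIrreducible_of_simple {k G : Type*} [Field k] [Monoid G] (V : FDRep k G)
    [Simple V] : Representation.IsIrreducible V.ρ := by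
  have hV : Nontrivial V := by
    by_contra h
    rw [not_nontrivial_iff_subsingleton] at h
    exact id_nonzero V (by ext v; exact Subsingleton.elim (α := V) _ _)
  refine
    { exists_pair_ne := ⟨⊥, ⊤, fun h ↦ ?_⟩
      eq_bot_or_eq_top := fun W ↦ ?_ }
  · exact bot_ne_top (congrArg Subrepresentation.toSubmodule h)
  let f : FDRep.of W.toRepresentation ⟶ V :=
    { hom := FGModuleCat.ofHom W.toSubmodule.subtype
      comm := fun _ ↦ rfl }
  have hf : Mono f := by
    have : Mono ((forget₂ (FDRep k G) (FGModuleCat k)).map f) :=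
      ConcreteCategory.mono_of_injective _ Subtype.val_injective
    exact Functor.mono_of_mono_map _ this
  rcases eq_or_ne f 0 with h0 | h0
  · left
    refine Subrepresentation.toSubmodule_injective ((Submodule.eq_bot_iff _).2 fun w hw ↦ ?_)
    have hw' : f.hom.hom.hom ⟨w, hw⟩ = w := rfl
    rw [← hw', h0]
    rfl
  · right
    have : IsIso f := (Simple.mono_isIso_iff_nonzero f).2 h0
    refine Subrepresentation.toSubmodule_injective (Submodule.eq_top_iff'.2 fun v ↦ ?_)
    have hv : (inv f ≫ f).hom.hom.hom v = v := by rw [IsIso.inv_hom_id]; rfl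
    rw [← hv]
    exact ((inv f).hom.hom.hom v).2

section CharProj

variable {A k E : Type*} [AddGroup A] [Fintype A] [Field k] [Ring E] [Algebra k E]

/-- The averaging operator `|A|⁻¹ ∑ x, χ(-x) U(x)`, which projects a representation `U` of a finite
additive group `A` onto its `χ`-eigenspace; it is `0` if `|A|` vanishes in `k`. It is written in an
arbitrary `k`-algebra `E`; the case of interest is `E = Module.End k V`. -/
noncomputable def charProj (U : AddChar A E) (χ : AddChar A k) : E :=
  (Fintype.card A : k)⁻¹ • ∑ x, χ (-x) • U x

variable (U : AddChar A E) (χ : AddChar A k)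

lemma apply_mul_charProj (y : A) : U y * charProj U χ = χ y • charProj U χ := by
  rw [charProj, mul_smul_comm, smul_comm (χ y)]
  congr 1
  rw [Finset.mul_sum, Finset.smul_sum,
    ← Equiv.sum_comp (Equiv.addLeft y) fun x ↦ χ y • χ (-x) • U x]
  refine Finset.sum_congr rfl fun x _ ↦ ?_
  rw [mul_smul_comm, ← AddChar.map_add_eq_mul, Equiv.coe_addLeft, smul_smul, neg_add_rev,
    mul_comm, ← AddChar.map_add_eq_mul, neg_add_cancel_right]

lemma charProj_mul_apply (y : A) : charProj U χ * U y = χ y • charProj U χ := by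
  rw [charProj, smul_mul_assoc, smul_comm (χ y)]
  congr 1
  rw [Finset.sum_mul, Finset.smul_sum,
    ← Equiv.sum_comp (Equiv.addRight y) fun x ↦ χ y • χ (-x) • U x]
  refine Finset.sum_congr rfl fun x _ ↦ ?_
  rw [smul_mul_assoc, ← AddChar.map_add_eq_mul, Equiv.coe_addRight, smul_smul, neg_add_rev,
    ← AddChar.map_add_eq_mul, add_neg_cancel_left]

lemma charProj_mul_charProj_of_ne {χ χ' : AddChar A k} (h : χ ≠ χ') :
    charProj U χ * charProj U χ' = 0 := by
  obtain ⟨y, hy⟩ := DFunLike.ne_iff.1 h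
  have hsmul : χ y • (charProj U χ * charProj U χ') = χ' y • (charProj U χ * charProj U χ') := by
    rw [← smul_mul_assoc, ← charProj_mul_apply, mul_assoc, apply_mul_charProj, mul_smul_comm]
  rw [← sub_eq_zero, ← sub_smul] at hsmul
  exact (smul_eq_zero.1 hsmul).resolve_left (sub_ne_zero.2 hy)

lemma isIdempotentElem_charProj (hA : (Fintype.card A : k) ≠ 0) :
    IsIdempotentElem (charProj U χ) := by
  rw [IsIdempotentElem]
  nth_rw 1 [charProj]
  rw [smul_mul_assoc, Finset.sum_mul]
  have h (x : A) : χ (-x) • U x * charProj U χ = charProj U χ := by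
    rw [smul_mul_assoc, apply_mul_charProj, smul_smul, ← AddChar.map_add_eq_mul, neg_add_cancel,
      AddChar.map_zero_eq_one, one_smul]
  simp only [h, Finset.sum_const, Finset.card_univ]
  rw [← Nat.cast_smul_eq_nsmul k, inv_smul_smul₀ hA]

variable {U} in
lemma mul_charProj_of_semiconj {T : E} {e : A ≃+ A} (hT : ∀ x, T * U x = U (e x) * T) :
    T * charProj U (χ.compAddMonoidHom e) = charProj U χ * T := by
  rw [charProj, charProj, mul_smul_comm, smul_mul_assoc, Finset.mul_sum, Finset.sum_mul,
    ← e.toEquiv.sum_comp fun x ↦ χ (-x) • U x * T]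
  simp [hT]

lemma charProj_mul_map_mul_charProj {G : Type*} [Monoid G] (R : G →* E) (u : AddChar A G)
    (x y : A) (g : G) :
    charProj (R.compAddChar u) χ * R (u x * g * u y) * charProj (R.compAddChar u) χ =
      (χ x * χ y) • (charProj (R.compAddChar u) χ * R g * charProj (R.compAddChar u) χ) := calc
  _ = charProj (R.compAddChar u) χ * R.compAddChar u x * R g *
        (R.compAddChar u y * charProj (R.compAddChar u) χ) := by
    simp only [map_mul, MonoidHom.compAddChar_apply, Function.comp_apply, mul_assoc]
  _ = _ := by
    rw [charProj_mul_apply, apply_mul_charProj, smul_mul_assoc, smul_mul_assoc, mul_smul_comm,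
      smul_smul]

lemma commute_charProj_of_antiautomorphism {G : Type*} [Monoid G] (R : G →* E) (u : AddChar A G)
    (hA : (Fintype.card A : k) ≠ 0) {τ : G → G} (hτ : ∀ g h, τ (g * h) = τ h * τ g)
    (hτu : ∀ x, τ (u x) = u x)
    (hτR : ∀ g, charProj (R.compAddChar u) χ * R (τ g) * charProj (R.compAddChar u) χ =
      charProj (R.compAddChar u) χ * R g * charProj (R.compAddChar u) χ) (g h : G) :
    Commute (charProj (R.compAddChar u) χ * R g * charProj (R.compAddChar u) χ)
      (charProj (R.compAddChar u) χ * R h * charProj (R.compAddChar u) χ) := by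
  set e := charProj (R.compAddChar u) χ
  have expand (g h : G) : e * R g * e * (e * R h * e) =
      (Fintype.card A : k)⁻¹ • ∑ x, χ (-x) • (e * R (g * u x * h) * e) := calc
    _ = e * R g * (e * e) * R h * e := by simp only [mul_assoc]
    _ = e * R g * e * R h * e := by rw [isIdempotentElem_charProj _ _ hA]
    _ = e * R g * ((Fintype.card A : k)⁻¹ • ∑ x, χ (-x) • R (u x)) * R h * e := rfl
    _ = _ := by
      simp only [mul_smul_comm, smul_mul_assoc, Finset.mul_sum, Finset.sum_mul, map_mul, mul_assoc]
  calc
    _ = (Fintype.card A : k)⁻¹ • ∑ x, χ (-x) • (e * R (τ (g * u x * h)) * e) := by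
      rw [expand]
      simp only [hτR]
    _ = e * R (τ h) * e * (e * R (τ g) * e) := by
      rw [expand]
      simp only [hτ, hτu, mul_assoc]
    _ = _ := by rw [hτR, hτR]

end CharProj

lemma sum_charProj_mulShift {F k E : Type*} [Field F] [Fintype F] [Field k] [Ring E]
    [Algebra k E] (hF : (Fintype.card F : k) ≠ 0) (U : AddChar F E) {ψ : AddChar F k}
    (hψ : ψ.IsPrimitive) :
    ∑ a, charProj U (ψ.mulShift a) = 1 := by
  classical
  simp only [charProj, ← Finset.smul_sum]
  rw [Finset.sum_comm]
  simp only [← Finset.sum_smul, AddChar.mulShift_apply, AddChar.sum_mulShift _ hψ, neg_eq_zero]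
  simp [hF]

open Matrix.GeneralLinearGroup

section GL2

variable {F : Type*} [Field F]

/-- The diagonal torus element with diagonal entries `a` and `d`. -/
def diagGL (a d : Fˣ) : GL (Fin 2) F := mkOfDetNeZero !![(a : F), 0; 0, d] (by simp)

variable (F) in
/-- The representative of determinant `1` of the nontrivial Weyl group element of `GL₂`. -/
def weylElement : GL (Fin 2) F := mkOfDetNeZero !![0, 1; -1, 0] (by simp)

/-- Reflection of a matrix in its antidiagonal: the anti-automorphism `g ↦ w gᵀ w` of `GL₂`, where
`w` is the permutation matrix of the swap. -/
def antiTranspose (g : GL (Fin 2) F) : GL (Fin 2) F :=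
  mkOfDetNeZero !![g 1 1, g 0 1; g 1 0, g 0 0] (by
    simpa [Matrix.det_fin_two, mul_comm] using g.det_ne_zero)

@[simp]
lemma coe_diagGL (a d : Fˣ) :
    (diagGL a d : Matrix (Fin 2) (Fin 2) F) = !![(a : F), 0; 0, d] := rfl

@[simp]
lemma coe_weylElement : (weylElement F : Matrix (Fin 2) (Fin 2) F) = !![0, 1; -1, 0] := rfl

@[simp]
lemma coe_antiTranspose (g : GL (Fin 2) F) :
    (antiTranspose g : Matrix (Fin 2) (Fin 2) F) = !![g 1 1, g 0 1; g 1 0, g 0 0] := rfl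

lemma commute_diagGL (a d b c : Fˣ) : Commute (diagGL a d) (diagGL b c) := by
  ext i j
  fin_cases i <;> fin_cases j <;> simp [mul_comm]

lemma diagGL_mul_upperRightHom (a d : Fˣ) (x : F) :
    diagGL a d * upperRightHom x = upperRightHom ((a / d) • x) * diagGL a d := by
  ext i j
  fin_cases i <;> fin_cases j <;> simp [Units.smul_def, div_mul_eq_mul_div]

lemma weylElement_mul_diagGL (a d : Fˣ) :
    weylElement F * diagGL a d = diagGL d a * weylElement F := by
  ext i j
  fin_cases i <;> fin_cases j <;> simp

lemma weylElement_eq_upperRightHom_mul :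
    weylElement F = upperRightHom 1 * (weylElement F * upperRightHom 1 * (weylElement F)⁻¹) *
      upperRightHom 1 := by
  ext i j
  fin_cases i <;> fin_cases j <;> simp [Matrix.inv_def, Matrix.adjugate_fin_two]

lemma exists_eq_diagGL_mul_upperRightHom {g : GL (Fin 2) F} (hg : g 1 0 = 0) :
    ∃ (a d : Fˣ) (x : F), g = diagGL a d * upperRightHom x := by
  have hdet := g.det_ne_zero
  rw [Matrix.det_fin_two, hg, mul_zero, sub_zero, mul_ne_zero_iff] at hdet
  refine ⟨Units.mk0 _ hdet.1, Units.mk0 _ hdet.2, g 0 1 / g 0 0, ?_⟩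
  ext i j
  fin_cases i <;> fin_cases j <;> simp [hg, mul_div_cancel₀ _ hdet.1]

lemma exists_eq_upperRightHom_mul_weylElement_mul {g : GL (Fin 2) F} (hg : g 1 0 ≠ 0) :
    ∃ (x y : F) (a d : Fˣ),
      g = upperRightHom x * (diagGL a d * weylElement F) * upperRightHom y := by
  have hdet := g.det_ne_zero
  rw [Matrix.det_fin_two] at hdet
  refine ⟨g 0 0 / g 1 0, g 1 1 / g 1 0,
    Units.mk0 (-(g 0 0 * g 1 1 - g 0 1 * g 1 0) / g 1 0) (div_ne_zero (neg_ne_zero.2 hdet) hg),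
    Units.mk0 (-g 1 0) (neg_ne_zero.2 hg), ?_⟩
  have hentry : g 0 1 =
      g 0 0 * (g 1 1 / g 1 0) + (g 0 1 * g 1 0 - g 0 0 * g 1 1) / g 1 0 := by
    field_simp
    ring
  ext i j
  fin_cases i <;> fin_cases j <;> simp [hg, mul_div_cancel₀, ← hentry]

lemma exists_map_eq_map_diagGL {M : Type*} [Monoid M] {R : GL (Fin 2) F →* M}
    (hR : ∀ x, R (upperRightHom x) = 1) (g : GL (Fin 2) F) : ∃ a d, R g = R (diagGL a d) := by
  have hweyl : R (weylElement F) = 1 := by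
    rw [weylElement_eq_upperRightHom_mul]
    simp only [map_mul, hR, one_mul, mul_one]
    rw [← map_mul, mul_inv_cancel, map_one]
  by_cases hg : g 1 0 = 0
  · obtain ⟨a, d, x, rfl⟩ := exists_eq_diagGL_mul_upperRightHom hg
    exact ⟨a, d, by rw [map_mul, hR, mul_one]⟩
  · obtain ⟨x, y, a, d, rfl⟩ := exists_eq_upperRightHom_mul_weylElement_mul hg
    exact ⟨a, d, by simp only [map_mul, hR, hweyl, one_mul, mul_one]⟩

lemma antiTranspose_mul (g h : GL (Fin 2) F) :
    antiTranspose (g * h) = antiTranspose h * antiTranspose g := by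
  ext i j
  fin_cases i <;> fin_cases j <;> simp [Matrix.mul_apply, mul_comm, add_comm]

@[simp]
lemma antiTranspose_upperRightHom (x : F) :
    antiTranspose (upperRightHom x) = upperRightHom x := by
  ext i j
  fin_cases i <;> fin_cases j <;> simp

@[simp]
lemma antiTranspose_diagGL (a d : Fˣ) : antiTranspose (diagGL a d) = diagGL d a := by
  ext i j
  fin_cases i <;> fin_cases j <;> simp

@[simp]
lemma antiTranspose_weylElement : antiTranspose (weylElement F) = weylElement F := by
  ext i j
  fin_cases i <;> fin_cases j <;> simp

lemma index_stabilizer_infty_le [Fintype F] [DecidableEq F] :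
    (MulAction.stabilizer (GL (Fin 2) F) (OnePoint.infty : OnePoint F)).index ≤
      Fintype.card F + 1 := by
  rw [MulAction.index_stabilizer, ← Nat.card_eq_fintype_card, ← Finite.card_option]
  exact Set.ncard_le_card _

end GL2

section Representation

variable {F k V : Type*} [Field F] [Fintype F] [Field k] [AddCommGroup V] [Module k V]
  (ρ : Representation k (GL (Fin 2) F) V)

/-- The projection of a representation of `GL₂(F)` onto the `χ`-eigenspace of its upper unipotent
subgroup, identified with `F`. -/
noncomputable abbrev unipotentProj (χ : AddChar F k) : Module.End k V :=
  charProj (MonoidHom.compAddChar ρ upperRightHom) χ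

lemma map_diagGL_mul_unipotentProj (χ : AddChar F k) (a d : Fˣ) :
    ρ (diagGL a d) * unipotentProj ρ (χ.mulShift ((a / d : Fˣ) : F)) =
      unipotentProj ρ χ * ρ (diagGL a d) :=
  mul_charProj_of_semiconj χ (e := DistribMulAction.toAddEquiv F (a / d)) fun x ↦ by
    simp only [MonoidHom.compAddChar_apply, Function.comp_apply, DistribMulAction.toAddEquiv_apply]
    rw [← map_mul, ← map_mul, diagGL_mul_upperRightHom]

lemma unipotentProj_mul_map_diagGL_mul_unipotentProj {ψ : AddChar F k} (hψ : ψ.IsPrimitive)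
    {a d : Fˣ} (had : a ≠ d) :
    unipotentProj ρ ψ * ρ (diagGL a d) * unipotentProj ρ ψ = 0 := by
  have hne : ψ.mulShift ((a / d : Fˣ) : F) ≠ ψ := fun h ↦ had <| div_eq_one.1 <| Units.ext <|
    AddChar.to_mulShift_inj_of_isPrimitive hψ (h.trans ψ.mulShift_one.symm)
  rw [← map_diagGL_mul_unipotentProj, mul_assoc, charProj_mul_charProj_of_ne _ hne, mul_zero]

lemma unipotentProj_mul_map_antiTranspose_mul_unipotentProj {ψ : AddChar F k} (hψ : ψ.IsPrimitive)
    (g : GL (Fin 2) F) :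
    unipotentProj ρ ψ * ρ (antiTranspose g) * unipotentProj ρ ψ =
      unipotentProj ρ ψ * ρ g * unipotentProj ρ ψ := by
  by_cases hg : g 1 0 = 0
  · obtain ⟨a, d, x, rfl⟩ := exists_eq_diagGL_mul_upperRightHom hg
    have hleft := charProj_mul_map_mul_charProj ψ ρ upperRightHom x 0 (diagGL d a)
    have hright := charProj_mul_map_mul_charProj ψ ρ upperRightHom 0 x (diagGL a d)
    simp only [AddChar.map_zero_eq_one, one_mul, mul_one] at hleft hright
    rw [antiTranspose_mul, antiTranspose_upperRightHom, antiTranspose_diagGL, hleft, hright]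
    by_cases had : a = d
    · rw [had]
    · rw [unipotentProj_mul_map_diagGL_mul_unipotentProj ρ hψ had,
        unipotentProj_mul_map_diagGL_mul_unipotentProj ρ hψ (Ne.symm had)]
  · obtain ⟨x, y, a, d, rfl⟩ := exists_eq_upperRightHom_mul_weylElement_mul hg
    have hτ : antiTranspose (upperRightHom x * (diagGL a d * weylElement F) * upperRightHom y) =
        upperRightHom y * (diagGL a d * weylElement F) * upperRightHom x := by
      simp only [antiTranspose_mul, antiTranspose_upperRightHom, antiTranspose_diagGL,
        antiTranspose_weylElement, weylElement_mul_diagGL, mul_assoc]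
    rw [hτ, charProj_mul_map_mul_charProj, charProj_mul_map_mul_charProj, mul_comm]

section CharZero

variable [CharZero k]

lemma isIdempotentElem_unipotentProj (χ : AddChar F k) : IsIdempotentElem (unipotentProj ρ χ) :=
  isIdempotentElem_charProj _ χ (Nat.cast_ne_zero.2 Fintype.card_ne_zero)

lemma finrank_range_unipotentProj_le_one [ρ.IsIrreducible] [IsAlgClosed k] [FiniteDimensional k V]
    {ψ : AddChar F k} (hψ : ψ.IsPrimitive) :
    Module.finrank k (unipotentProj ρ ψ).range ≤ 1 :=
  finrank_range_le_one_of_commute ρ (isIdempotentElem_unipotentProj ρ ψ) <|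
    commute_charProj_of_antiautomorphism ψ ρ upperRightHom
      (Nat.cast_ne_zero.2 Fintype.card_ne_zero) antiTranspose_mul antiTranspose_upperRightHom
      (unipotentProj_mul_map_antiTranspose_mul_unipotentProj ρ hψ)

lemma trace_unipotentProj [FiniteDimensional k V] (χ : AddChar F k) :
    LinearMap.trace k V (unipotentProj ρ χ) = Module.finrank k (unipotentProj ρ χ).range :=
  (LinearMap.IsIdempotentElem.isProj_range _ (isIdempotentElem_unipotentProj ρ χ)).trace

lemma finrank_range_unipotentProj_mulShift [FiniteDimensional k V] (χ : AddChar F k) {a : F}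
    (ha : a ≠ 0) :
    Module.finrank k (unipotentProj ρ (χ.mulShift a)).range =
      Module.finrank k (unipotentProj ρ χ).range := by
  have hconj := map_diagGL_mul_unipotentProj ρ χ (Units.mk0 a ha) 1
  rw [div_one, Units.val_mk0] at hconj
  have hinv : ρ (diagGL (Units.mk0 a ha) 1)⁻¹ * ρ (diagGL (Units.mk0 a ha) 1) = 1 := by
    rw [← map_mul, inv_mul_cancel, map_one]
  refine Nat.cast_injective (R := k) ?_
  rw [← trace_unipotentProj, ← trace_unipotentProj,
    ← one_mul (unipotentProj ρ (χ.mulShift a)), ← hinv, mul_assoc, hconj,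
    LinearMap.trace_mul_comm, mul_assoc, mul_eq_one_comm.1 hinv, mul_one]

lemma finrank_eq_finrank_range_unipotentProj_add [FiniteDimensional k V] {ψ : AddChar F k}
    (hψ : ψ.IsPrimitive) :
    Module.finrank k V = Module.finrank k (unipotentProj ρ 1).range +
      (Fintype.card F - 1) * Module.finrank k (unipotentProj ρ ψ).range := by
  classical
  have hsum : Module.finrank k V =
      ∑ a, Module.finrank k (unipotentProj ρ (ψ.mulShift a)).range := by
    refine Nat.cast_injective (R := k) ?_
    rw [← LinearMap.trace_one, ← sum_charProj_mulShift (Nat.cast_ne_zero.2 Fintype.card_ne_zero)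
        (MonoidHom.compAddChar ρ upperRightHom) hψ,
      map_sum, Nat.cast_sum]
    exact Finset.sum_congr rfl fun a _ ↦ trace_unipotentProj ρ _
  rw [hsum, ← Finset.add_sum_erase _ _ (Finset.mem_univ 0), AddChar.mulShift_zero,
    Finset.sum_congr rfl fun a ha ↦
      finrank_range_unipotentProj_mulShift ρ ψ (Finset.ne_of_mem_erase ha)]
  simp [Finset.card_erase_of_mem]

lemma map_upperRightHom_eq_one_of_unipotentProj_eq_zero [FiniteDimensional k V]
    {ψ : AddChar F k} (hψ : ψ.IsPrimitive) (h : unipotentProj ρ ψ = 0) (x : F) :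
    ρ (upperRightHom x) = 1 := by
  have hzero (a : F) (ha : a ≠ 0) : unipotentProj ρ (ψ.mulShift a) = 0 := by
    have := finrank_range_unipotentProj_mulShift ρ ψ ha
    rwa [h, LinearMap.range_zero, finrank_bot, Submodule.finrank_eq_zero,
      LinearMap.range_eq_bot] at this
  have hone : unipotentProj ρ (1 : AddChar F k) = 1 := by
    rw [← sum_charProj_mulShift (Nat.cast_ne_zero.2 Fintype.card_ne_zero)
        (MonoidHom.compAddChar ρ upperRightHom) hψ,
      Finset.sum_eq_single 0 (fun a _ ha ↦ hzero a ha) (by simp), AddChar.mulShift_zero]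
  have := apply_mul_charProj (MonoidHom.compAddChar ρ upperRightHom) (1 : AddChar F k) x
  simpa [hone] using this

end CharZero

variable [IsAlgClosed k] [FiniteDimensional k V] [ρ.IsIrreducible]

lemma finrank_le_card_add_one (h : unipotentProj ρ (1 : AddChar F k) ≠ 0) :
    Module.finrank k V ≤ Fintype.card F + 1 := by
  classical
  have hrange : (unipotentProj ρ 1).range ≠ ⊥ := LinearMap.range_eq_bot.not.2 h
  obtain ⟨_, ⟨w, rfl⟩, hv, htorus⟩ := exists_common_eigenvector
    (T := fun t : Fˣ × Fˣ ↦ ρ (diagGL t.1 t.2))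
    (fun s t ↦ (commute_diagGL s.1 s.2 t.1 t.2).map ρ) hrange fun t ↦ by
      rintro _ ⟨w, rfl⟩
      have hcomm : ρ (diagGL t.1 t.2) * unipotentProj ρ 1 =
          unipotentProj ρ 1 * ρ (diagGL t.1 t.2) :=
        map_diagGL_mul_unipotentProj ρ 1 t.1 t.2
      exact ⟨_, congr($hcomm.symm w)⟩
  refine (finrank_le_index ρ hv fun g hg ↦ ?_).trans index_stabilizer_infty_le
  obtain ⟨a, d, x, rfl⟩ := exists_eq_diagGL_mul_upperRightHom
    (OnePoint.smul_infty_eq_self_iff.1 (MulAction.mem_stabilizer_iff.1 hg))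
  have hx : ρ (upperRightHom x) (unipotentProj ρ 1 w) = unipotentProj ρ 1 w := by
    have hmul := apply_mul_charProj (MonoidHom.compAddChar ρ upperRightHom) (1 : AddChar F k) x
    simpa using congr($hmul w)
  rw [map_mul, Module.End.mul_apply, hx]
  exact htorus (a, d)

lemma finrank_eq_one_of_unipotentProj_eq_zero [CharZero k] {ψ : AddChar F k}
    (hψ : ψ.IsPrimitive) (h : unipotentProj ρ ψ = 0) : Module.finrank k V = 1 := by
  have htorus := exists_map_eq_map_diagGL
    (map_upperRightHom_eq_one_of_unipotentProj_eq_zero ρ hψ h)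
  refine finrank_eq_one_of_commute ρ fun g g' ↦ ?_
  obtain ⟨a, d, hg⟩ := htorus g
  obtain ⟨b, c, hg'⟩ := htorus g'
  rw [hg, hg']
  exact (commute_diagGL a d b c).map ρ

end Representation

lemma finrank_eq_one_or_mem_Icc {F k V : Type*} [Field F] [Fintype F] [Field k] [IsAlgClosed k]
    [CharZero k] [AddCommGroup V] [Module k V] [FiniteDimensional k V]
    (ρ : Representation k (GL (Fin 2) F) V) [ρ.IsIrreducible] {ψ : AddChar F k}
    (hψ : ψ.IsPrimitive) :
    Module.finrank k V = 1 ∨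
      Module.finrank k V ∈ Set.Icc (Fintype.card F - 1) (Fintype.card F + 1) := by
  by_cases hzero : unipotentProj ρ ψ = 0
  · exact .inl (finrank_eq_one_of_unipotentProj_eq_zero ρ hψ hzero)
  have hrank : Module.finrank k (unipotentProj ρ ψ).range = 1 :=
    (finrank_range_unipotentProj_le_one ρ hψ).antisymm <| Nat.one_le_iff_ne_zero.2 fun h ↦
      hzero (LinearMap.range_eq_bot.1 (Submodule.finrank_eq_zero.1 h))
  have hfinrank := finrank_eq_finrank_range_unipotentProj_add ρ hψ
  rw [hrank, mul_one] at hfinrank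
  refine .inr ⟨hfinrank ▸ Nat.le_add_left _ _, ?_⟩
  by_cases hone : unipotentProj ρ (1 : AddChar F k) = 0
  · rw [hfinrank, hone, LinearMap.range_zero, finrank_bot]
    lia
  · exact finrank_le_card_add_one ρ hone

lemma gcd_dvd_two_of_mem_Icc {m a b : ℕ} (ha : a ∈ Set.Icc m (m + 2)) (hb : b ∈ Set.Icc m (m + 2))
    (hab : a ≠ b) : Nat.gcd a b ∣ 2 := by
  wlog h : a < b generalizing a b
  · rw [Nat.gcd_comm]
    exact this hb ha hab.symm (hab.lt_or_gt.resolve_left h)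
  have hdvd : Nat.gcd a b ∣ b - a := Nat.dvd_sub (Nat.gcd_dvd_right a b) (Nat.gcd_dvd_left a b)
  obtain hsub | hsub : b - a = 1 ∨ b - a = 2 := by
    have := ha.1
    have := hb.2
    lia
  · exact (hsub ▸ hdvd).trans (one_dvd 2)
  · exact hsub ▸ hdvd

lemma mem_charDegrees_of_surjective {F : Type*} [Field F] [Fintype F] {G : Type} [Group G]
    {f : GL (Fin 2) F →* G} (hf : Function.Surjective f) {n : ℕ} (hn : n ∈ charDegrees G) :
    n = 1 ∨ n ∈ Set.Icc (Fintype.card F - 1) (Fintype.card F + 1) := by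
  obtain ⟨V, hV, rfl⟩ := hn
  have := isIrreducible_of_simple V
  have := isIrreducible_comp_of_surjective V.ρ hf
  exact finrank_eq_one_or_mem_Icc (V.ρ.comp f : Representation ℂ (GL (Fin 2) F) V)
    (AddChar.FiniteField.primitiveChar_to_Complex_isPrimitive F)

theorem pgl2_two_prime_hypothesis_general {F : Type*} [Field F] [Finite F] {G : Type} [Group G]
    {f : GL (Fin 2) F →* G} (hf : Function.Surjective f) {a b : ℕ} (ha : a ∈ charDegrees G)
    (hb : b ∈ charDegrees G) (hab : a ≠ b) : Nat.gcd a b ∣ 2 := by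
  have := Fintype.ofFinite F
  obtain rfl | ha := mem_charDegrees_of_surjective hf ha
  · simp
  obtain rfl | hb := mem_charDegrees_of_surjective hf hb
  · simp
  have hcard : Fintype.card F + 1 = Fintype.card F - 1 + 2 := by
    have := Fintype.card_pos (α := F)
    lia
  rw [hcard] at ha hb
  exact gcd_dvd_two_of_mem_Icc ha hb hab

/-- For every prime power `q ≥ 7`, the group `PGL₂(q)` satisfies the two-prime hypothesis. -/
theorem pgl2_two_prime_hypothesis
    (q : ℕ) (hq : 7 ≤ q) (hpp : IsPrimePow q)
    (F : Type) [Field F] [Fintype F] (hF : Fintype.card F = q) :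
    TwoPrimeHypothesis (PGL2 F) := by
  intro a ha b hb hab
  have hdvd : Nat.gcd a b ∣ 2 :=
    pgl2_two_prime_hypothesis_general (QuotientGroup.mk'_surjective _) ha hb hab
  exact (Nat.primeFactorsList_sublist_of_dvd hdvd two_ne_zero).length_le.trans (by simp)
end

section
/- Let G be a finite group satisfying the two-prime hypothesis with normal subgroups N ≤ M such that M/N ≅ PSL_2(8) and the centralizer of M/N in G/N is trivial. Then |cd(G)| ≤ 13. -/
open CategoryTheory

/-- `PSL₂(F)`: the quotient of `SL₂(F)` by its center. -/
abbrev PSL2 (F : Type) [Field F] : Type :=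
  Matrix.SpecialLinearGroup (Fin 2) F ⧸
    Subgroup.center (Matrix.SpecialLinearGroup (Fin 2) F)

/-!
Let `M₁` be the preimage of the inner automorphisms of `SL(2, 8)` under the action of `G` by
conjugation; it maps onto `SL(2, 8)`, and its index divides `3`, the index of the inner
automorphisms in `Aut SL(2, 8)`. By Clifford theory a degree of `M₁` has the form
`[SL(2, 8) : H] * m * d`, where `m` is the degree of a constituent of the restriction to the kernel,
`H` is its inertia group modulo the kernel and `d` is a projective degree of `H`. A subgroup `H` of
`SL(2, 8)` is the whole group, a Borel subgroup (of index `9`), or has index divisible by `8`, `28`,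
`36` or `63`. In the first two cases the Schur multiplier of `H` is trivial, so that `d` runs over
the ordinary degrees of `H`.

The action of `G` on the nine Sylow `2`-subgroups of `SL(2, 8)` is two-transitive, hence `8` is a
degree of `G`, and by the two-prime hypothesis it is the only one divisible by `8`. If `H` is the
whole group this forces `m = 1`, because `8 * m` is then also a degree of `M₁`. If `H` is a Borel
subgroup, then `63 * m` is a degree of `M₁`; so either `m = 1`, or `9 * m` has at least three prime
factors and the given degree of `G` is divisible by `63`. The numbers `28`, `36` and `63` have at
least three prime factors, so each of them divides at most one degree of `G`, and only the nine
numbers `1`, `3`, `7`, `8`, `9`, `14`, `21`, `27` and `42` remain.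
-/

namespace TwoPrime

/-! ### Semisimplicity and irreducible characters -/

section Irreducible

open Module Representation
open scoped MonoidAlgebra

variable {k G V W : Type*} [Field k] [Group G] [AddCommGroup V] [Module k V]
  [AddCommGroup W] [Module k W] {ρ : Representation k G V} {σ : Representation k G W}

theorem nontrivial_of_isIrreducible (ρ : Representation k G V) [ρ.IsIrreducible] :
    Nontrivial V := by
  by_contra h
  rw [not_nontrivial_iff_subsingleton] at h
  exact bot_ne_top (α := Subrepresentation ρ)
    (Subrepresentation.toSubmodule_injective (Subsingleton.elim _ _))

theorem eq_bot_or_eq_top_of_invariant [ρ.IsIrreducible] (p : Submodule k V)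
    (hp : ∀ g, ∀ v ∈ p, ρ g v ∈ p) : p = ⊥ ∨ p = ⊤ :=
  (eq_bot_or_eq_top (⟨p, fun g _ ↦ hp g _⟩ : Subrepresentation ρ)).imp
    (congrArg Subrepresentation.toSubmodule) (congrArg Subrepresentation.toSubmodule)

theorem finrank_eq_one_of_ker_eq_top (ρ : Representation k G V)
    [ρ.IsIrreducible]
    (h : ρ.ker = ⊤) : finrank k V = 1 := by
  have := nontrivial_of_isIrreducible ρ
  obtain ⟨v, hv⟩ := exists_ne (0 : V)
  have htriv (g : G) (w : V) : ρ g w = w := by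
    rw [MonoidHom.mem_ker.1 (h ▸ Subgroup.mem_top g : g ∈ ρ.ker), Module.End.one_apply]
  obtain hbot | htop := eq_bot_or_eq_top_of_invariant (ρ := ρ) (k ∙ v) fun g w hw ↦ by
    rwa [htriv]
  · exact (hv (Submodule.span_singleton_eq_bot.1 hbot)).elim
  · rw [← finrank_top, ← htop, finrank_span_singleton hv]

theorem isIrreducible_of_invariant [Nontrivial V]
    (h : ∀ p : Submodule k V, (∀ g, ∀ v ∈ p, ρ g v ∈ p) → p = ⊥ ∨ p = ⊤) :
    ρ.IsIrreducible where
  exists_pair_ne := ⟨⊥, ⊤, fun e ↦ bot_ne_top (congrArg Subrepresentation.toSubmodule e)⟩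
  eq_bot_or_eq_top p := (h p.toSubmodule fun g _ hv ↦ p.apply_mem_toSubmodule g hv).imp
    (Subrepresentation.toSubmodule_injective ·) (Subrepresentation.toSubmodule_injective ·)

theorem exists_isIrreducible_subrepresentation [FiniteDimensional k V] [Nontrivial V]
    (ρ : Representation k G V) :
    ∃ p : Subrepresentation ρ, p.toRepresentation.IsIrreducible := by
  have : WellFoundedLT (Subrepresentation ρ) :=
    StrictMono.wellFoundedLT (f := Subrepresentation.toSubmodule) fun _ _ h ↦ h
  have : Nontrivial (Subrepresentation ρ) :=
    ⟨⊥, ⊤, fun e ↦ bot_ne_top (congrArg Subrepresentation.toSubmodule e)⟩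
  obtain ⟨p, hp, -⟩ :=
    (IsAtomic.eq_bot_or_exists_atom_le (⊤ : Subrepresentation ρ)).resolve_left top_ne_bot
  have hp0 : p.toSubmodule ≠ ⊥ := fun h ↦ hp.1 (Subrepresentation.toSubmodule_injective h)
  have := Submodule.nontrivial_iff_ne_bot.2 hp0
  refine ⟨p, isIrreducible_of_invariant fun q hq ↦ ?_⟩
  have hle : (⟨q.map p.toSubmodule.subtype, ?_⟩ : Subrepresentation ρ) ≤ p :=
    Submodule.map_subtype_le _ q
  · refine (hp.le_iff.1 hle).imp (fun h ↦ ?_) fun h ↦ ?_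
    · exact (Submodule.map_injective_of_injective p.toSubmodule.injective_subtype
        ((congrArg Subrepresentation.toSubmodule h).trans (Submodule.map_bot _).symm))
    · refine Submodule.map_injective_of_injective p.toSubmodule.injective_subtype ?_
      rw [Submodule.map_subtype_top]
      exact congrArg Subrepresentation.toSubmodule h
  · rintro g _ ⟨v, hv, rfl⟩
    exact ⟨p.toRepresentation g v, hq g v hv, rfl⟩

theorem isIrreducible_of_equiv [ρ.IsIrreducible] (e : ρ.Equiv σ) : σ.IsIrreducible := by
  have := nontrivial_of_isIrreducible ρ
  have := e.toLinearEquiv.symm.toEquiv.nontrivial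
  refine isIrreducible_of_invariant fun p hp ↦ ?_
  refine (eq_bot_or_eq_top_of_invariant (ρ := ρ) (p.comap e.toLinearEquiv.toLinearMap)
    fun g v hv ↦ ?_).imp (fun h ↦ ?_) fun h ↦ ?_
  · have := hp g _ hv
    rwa [LinearEquiv.coe_coe, e.toLinearEquiv_apply,
      ← e.toIntertwiningMap.isIntertwining ρ σ g v] at this
  · rw [← Submodule.map_comap_eq_of_surjective e.toLinearEquiv.surjective p, h, Submodule.map_bot]
  · rw [← Submodule.map_comap_eq_of_surjective e.toLinearEquiv.surjective p, h, Submodule.map_top,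
      LinearEquiv.range]

theorem isIrreducible_comp {H : Type*} [Group H] {φ : H →* G}
    (hφ : Function.Surjective φ) (ρ : Representation k G V) [ρ.IsIrreducible] :
    Representation.IsIrreducible (ρ.comp φ : Representation k H V) := by
  have := nontrivial_of_isIrreducible ρ
  refine isIrreducible_of_invariant fun p hp ↦
    eq_bot_or_eq_top_of_invariant (ρ := ρ) p (hφ.forall.2 hp)

variable [Finite G] [NeZero (Nat.card G : k)]

theorem exists_ne_zero_intertwiningMap_symm {f : ρ.IntertwiningMap σ} (hf : f ≠ 0) :
    ∃ g : σ.IntertwiningMap ρ, g ≠ 0 := by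
  let F := IntertwiningMap.equivLinearMapAsModule ρ σ f
  obtain ⟨s, hs⟩ := IsSemisimpleModule.lifting_property F.rangeRestrict
    F.surjective_rangeRestrict LinearMap.id
  obtain ⟨h, hh⟩ := IsSemisimpleModule.extension_property F.range.subtype
    F.range.injective_subtype s
  refine ⟨(IntertwiningMap.equivLinearMapAsModule σ ρ).symm h, fun h0 ↦ hf ?_⟩
  rw [LinearEquiv.map_eq_zero_iff] at h0
  have hs0 : s = 0 := by rw [← hh, h0, LinearMap.zero_comp]
  rw [hs0, LinearMap.comp_zero] at hs
  have : F = 0 := LinearMap.ext fun v ↦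
    congrArg Subtype.val (LinearMap.congr_fun hs (F.rangeRestrict v)).symm
  exact (LinearEquiv.map_eq_zero_iff _).1 this

theorem isIrreducible_of_finrank_intertwiningMap_eq_one
    (h : finrank k (ρ.IntertwiningMap ρ) = 1) : ρ.IsIrreducible := by
  rw [LinearEquiv.finrank_eq (IntertwiningMap.equivLinearMapAsModule ρ ρ)] at h
  have hEnd : Nontrivial (End k[G] ρ.asModule) := nontrivial_of_finrank_eq_succ h
  have : Nontrivial ρ.asModule := by
    by_contra hV
    rw [not_nontrivial_iff_subsingleton] at hV
    exact zero_ne_one (α := End k[G] ρ.asModule) (Subsingleton.elim _ _)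
  rw [irreducible_iff_isSimpleModule_asModule, isSimpleModule_iff]
  refine ⟨fun p ↦ ?_⟩
  obtain ⟨q, hpq⟩ := exists_isCompl p
  obtain ⟨c, hc⟩ := (finrank_eq_one_iff_of_nonzero' (1 : End k[G] ρ.asModule) one_ne_zero).1 h
    (p.projection q hpq)
  obtain rfl | hc0 := eq_or_ne c 0
  · left
    rw [← Submodule.range_projection hpq, ← hc, zero_smul, LinearMap.range_zero]
  · have hq : q = ⊥ := by
      rw [← Submodule.ker_projection hpq, ← hc, LinearMap.ker_eq_bot']
      exact fun v hv ↦ (smul_eq_zero_iff_right hc0).1 hv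
    exact .inr (eq_top_of_isCompl_bot (hq ▸ hpq))

omit [NeZero (Nat.card G : k)] in
theorem finrank_sq_le_card [IsAlgClosed k] [FiniteDimensional k V] (ρ : Representation k G V)
    [ρ.IsIrreducible] : finrank k V ^ 2 ≤ Nat.card G := by
  have hsurj : Function.Surjective ρ.asAlgebraHom := fun f ↦ by
    let f₀ : ρ.asModule →ₗ[k] ρ.asModule := f
    have hf (a : End k[G] ρ.asModule) (v : ρ.asModule) : f₀ (a • v) = a • f₀ v := by
      obtain ⟨c, rfl⟩ := (IsSimpleModule.algebraMap_end_bijective_of_isAlgClosed k).2 a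
      exact f₀.map_smul c v
    let f' : End (End k[G] ρ.asModule) ρ.asModule :=
      { toFun := f₀, map_add' := f₀.map_add, map_smul' := hf }
    let b := finBasis k V
    obtain ⟨r, hr⟩ := jacobson_density f' (Set.finite_range b).toFinset
    exact ⟨r, b.ext fun i ↦ (hr _ ((Set.finite_range b).mem_toFinset.2 ⟨i, rfl⟩)).symm⟩
  have := Fintype.ofFinite G
  have hdim := LinearMap.finrank_le_finrank_of_surjective (f := ρ.asAlgebraHom.toLinearMap) hsurj
  rwa [finrank_linearMap, ← sq, (MonoidAlgebra.coeffLinearEquiv k).finrank_eq,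
    finrank_finsupp_self, ← Nat.card_eq_fintype_card] at hdim

end Irreducible

section Degrees

open Module Representation

variable {G V : Type} [Group G] [AddCommGroup V] [Module ℂ V]

theorem finrank_fdRep_end (X : FDRep ℂ G) :
    finrank ℂ (X ⟶ X) = finrank ℂ (IntertwiningMap X.ρ X.ρ) :=
  ((FDRep.forget₂HomLinearEquiv X X).symm.trans (Rep.homLinearEquiv _ _)).finrank_eq

variable [Finite G]

theorem finrank_mem_charDegrees [FiniteDimensional ℂ V] (ρ : Representation ℂ G V)
    [ρ.IsIrreducible] : finrank ℂ V ∈ charDegrees G :=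
  ⟨.of ρ, (FDRep.simple_iff_end_is_rank_one _).2
    ((finrank_fdRep_end _).trans (IsIrreducible.finrank_intertwiningMap_self ρ)), rfl⟩

theorem one_mem_charDegrees : 1 ∈ charDegrees G := by
  have := isIrreducible_of_invariant (ρ := Representation.trivial ℂ G ℂ) fun p _ ↦
    eq_bot_or_eq_top p
  simpa using finrank_mem_charDegrees (Representation.trivial ℂ G ℂ)

theorem exists_isIrreducible_of_mem_charDegrees {n : ℕ} (hn : n ∈ charDegrees G) :
    ∃ ρ : Representation ℂ G (Fin n → ℂ), ρ.IsIrreducible := by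
  obtain ⟨X, hX, rfl⟩ := hn
  have := isIrreducible_of_finrank_intertwiningMap_eq_one
    ((finrank_fdRep_end X).symm.trans ((FDRep.simple_iff_end_is_rank_one X).1 hX))
  let e := (finBasis ℂ X).equivFun
  let σ : Representation ℂ G (Fin (finrank ℂ X) → ℂ) :=
    (e.conjAlgEquiv ℂ : End ℂ X →* End ℂ _).comp X.ρ
  exact ⟨σ, isIrreducible_of_equiv
    (Representation.Equiv.mk (ρ := X.ρ) (σ := σ) e fun g ↦ by ext; simp [σ])⟩

theorem charDegrees_congr {H : Type} [Group H] [Finite H] (e : G ≃* H) :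
    charDegrees G = charDegrees H := by
  have hsubset {G H : Type} [Group G] [Finite G] [Group H] [Finite H] (e : G ≃* H) :
      charDegrees G ⊆ charDegrees H := fun n hn ↦ by
    obtain ⟨ρ, hρ⟩ := exists_isIrreducible_of_mem_charDegrees hn
    have := isIrreducible_comp (φ := e.symm.toMonoidHom) e.symm.surjective ρ
    simpa using finrank_mem_charDegrees (ρ.comp e.symm.toMonoidHom : Representation ℂ H _)
  exact (hsubset e).antisymm (hsubset e.symm)

theorem charDegrees_eq_singleton_of_isMulCommutative [IsMulCommutative G] :
    charDegrees G = {1} := by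
  refine (Set.singleton_subset_iff.2 one_mem_charDegrees).antisymm' fun n hn ↦ ?_
  obtain ⟨ρ, hρ⟩ := exists_isIrreducible_of_mem_charDegrees hn
  simpa using IsIrreducible.finrank_eq_one_of_isMulCommutative ρ

end Degrees

/-! ### Clifford theory -/

section Independence

open Representation

variable {k N V W W' ι : Type*} [Field k] [Group N] [AddCommGroup V] [Module k V]
  [AddCommGroup W] [Module k W] [AddCommGroup W'] [Module k W']
  {ρ : Representation k N V} {σ : Representation k N W'} {θ : ι → Representation k N W}

theorem exists_eq_sum_of_isIrreducible [Fintype ι] [σ.IsIrreducible]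
    (f : ∀ i, (θ i).IntertwiningMap ρ)
    (hf : ∀ x : ι → W, ∑ i, f i (x i) = 0 → x = 0) (g : σ.IntertwiningMap ρ)
    {w : W'} (hw : w ≠ 0) {x : ι → W} (hwx : g w = ∑ i, f i (x i)) :
    ∃ φ : ∀ i, σ.IntertwiningMap (θ i), ∀ v, g v = ∑ i, f i (φ i v) := by
  let F : (ι → W) →ₗ[k] V := ∑ i, (f i).toLinearMap ∘ₗ LinearMap.proj i
  have hF (y : ι → W) : F y = ∑ i, f i (y i) := by simp [F]
  have hFinj : Function.Injective F := (injective_iff_map_eq_zero F).2 fun y h ↦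
    hf y ((hF y).symm.trans h)
  have hFn (n : N) (y : ι → W) : F (fun i ↦ θ i n (y i)) = ρ n (F y) := by
    simp only [hF, map_sum, (f _).isIntertwining]
  have htop : F.range.comap g.toLinearMap = ⊤ := by
    refine (eq_bot_or_eq_top_of_invariant (ρ := σ) _ fun n v ↦ ?_).resolve_left fun h ↦
      hw ((Submodule.mem_bot k).1 (h ▸ ⟨x, (hF x).trans hwx.symm⟩))
    rintro ⟨y, hy⟩
    exact ⟨fun i ↦ θ i n (y i), (hFn n y).trans ((congrArg (ρ n) hy).trans
      (g.isIntertwining σ ρ n v).symm)⟩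
  let L : W' →ₗ[k] ι → W := (LinearEquiv.ofInjective F hFinj).symm.toLinearMap ∘ₗ
    g.toLinearMap.codRestrict F.range fun v ↦ Submodule.eq_top_iff'.1 htop v
  have hL (v : W') : F (L v) = g v :=
    congrArg Subtype.val ((LinearEquiv.ofInjective F hFinj).apply_symm_apply _)
  have hLn (n : N) (v : W') : L (σ n v) = fun i ↦ θ i n (L v i) := hFinj (by
    rw [hFn, hL, hL, g.isIntertwining])
  exact ⟨fun i ↦ ⟨LinearMap.proj i ∘ₗ L, fun n ↦ LinearMap.ext fun v ↦ congrFun (hLn n v) i⟩,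
    fun v ↦ (hL v).symm.trans (hF _)⟩

theorem eq_zero_of_sum_eq_zero_of_isIrreducible [Fintype ι] [∀ i, (θ i).IsIrreducible]
    (f : ∀ i, (θ i).IntertwiningMap ρ)
    (hf : ∀ i, ∀ φ : ∀ j, (θ i).IntertwiningMap (θ j), φ i = 0 →
      ∃ w, f i w ≠ ∑ j, f j (φ j w))
    (x : ι → W) (hx : ∑ i, f i (x i) = 0) : x = 0 := by
  classical
  suffices hzero : ∀ (s : Finset ι) (x : ι → W), ∑ i ∈ s, f i (x i) = 0 → ∀ i ∈ s, x i = 0 from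
    funext fun i ↦ hzero Finset.univ x hx i (Finset.mem_univ i)
  clear x hx
  intro s x hx
  induction s using Finset.induction_on generalizing x with
  | empty => simp
  | insert a s ha ih =>
    have hs (y : s → W) (hy : ∑ i : s, f i (y i) = 0) : y = 0 := by
      let z : ι → W := Function.extend Subtype.val y 0
      have hz (i : s) : z i = y i := Subtype.val_injective.extend_apply y 0 i
      refine funext fun i ↦ (hz i).symm.trans (ih z ?_ i i.2)
      rw [← hy, ← Finset.sum_coe_sort s]
      simp only [hz]
    rw [Finset.sum_insert ha] at hx
    have hxa : x a = 0 := by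
      by_contra hxa
      obtain ⟨φ, hφ⟩ := exists_eq_sum_of_isIrreducible (fun i : s ↦ f i) hs (f a)
        (neg_ne_zero.2 hxa) (x := fun i ↦ x i) (by
          rw [map_neg, Finset.sum_coe_sort s fun i ↦ f i (x i)]
          exact neg_eq_of_add_eq_zero_right hx)
      obtain ⟨w, hw⟩ := hf a (fun j ↦ if h : j ∈ s then φ ⟨j, h⟩ else 0) (dif_neg ha)
      refine hw ((hφ w).trans ?_)
      rw [← Finset.sum_subset (Finset.subset_univ s) fun j _ hj ↦ by simp [dif_neg hj],
        ← Finset.sum_coe_sort s]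
      simp
    rw [hxa, map_zero, zero_add] at hx
    exact (Finset.forall_mem_insert _ _ _).2 ⟨hxa, ih x hx⟩

end Independence

section Inertia

open Representation

variable {k N G Q V W : Type*} [Field k] [Group N] [Group G] [Group Q] [AddCommGroup V]
  [Module k V] [AddCommGroup W] [Module k W]

/-- The pairs `(g, A)` for which `A` is an isomorphism from the representation `θ` of the kernel
`N` of a group extension to its conjugate by `g`. -/
def twistGroup (S : GroupExtension N G Q) (θ : Representation k N W) :
    Subgroup (G × (W ≃ₗ[k] W)) where
  carrier := {p | ∀ n w, p.2 (θ n w) = θ (S.conjAct p.1 n) (p.2 w)}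
  one_mem' n w := by simp
  mul_mem' {p q} hp hq n w := by
    simp only [Prod.fst_mul, Prod.snd_mul, map_mul, MulAut.mul_apply]
    exact (congrArg p.2 (hq n w)).trans (hp _ _)
  inv_mem' {p} hp n w := by
    apply p.2.injective
    rw [hp]
    simp only [Prod.fst_inv, Prod.snd_inv, map_inv, MulAut.apply_inv_self]
    exact (p.2.apply_symm_apply _).trans (congrArg (θ n) (p.2.apply_symm_apply w).symm)

/-- The inertia group of a representation of the kernel of a group extension. -/
def inertia (S : GroupExtension N G Q) (θ : Representation k N W) : Subgroup G :=
  (twistGroup S θ).map (MonoidHom.fst _ _)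

variable (S : GroupExtension N G Q) (θ : Representation k N W) (ρ : Representation k G V)

/-- The restriction of a representation of `G` to the kernel of a group extension. -/
abbrev kerRes : Representation k N V := ρ.comp S.inl

variable {S θ}

theorem twist_apply (p : twistGroup S θ) (n : N) (w : W) :
    p.1.2 (θ n w) = θ (S.conjAct p.1.1 n) (p.1.2 w) :=
  p.2 n w

theorem twist_symm_apply (p : twistGroup S θ) (n : N) (w : W) :
    p.1.2.symm (θ (S.conjAct p.1.1 n) w) = θ n (p.1.2.symm w) := by
  rw [LinearEquiv.symm_apply_eq, twist_apply, LinearEquiv.apply_symm_apply]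

theorem apply_inl_conjAct (g : G) (n : N) (v : V) :
    ρ (S.inl (S.conjAct g n)) (ρ g v) = ρ g (ρ (S.inl n) v) := by
  rw [S.inl_conjAct_comm, ← Module.End.mul_apply, ← map_mul, ← Module.End.mul_apply, ← map_mul,
    inv_mul_cancel_right]

variable (S θ)

/-- The action `f ↦ ρ g ∘ f ∘ A⁻¹` of the pairs `(g, A)` on the multiplicity space of `θ`. -/
def multiplicityRep : Representation k (twistGroup S θ) (θ.IntertwiningMap (kerRes S ρ)) where
  toFun p :=
    { toFun f := ⟨ρ p.1.1 ∘ₗ f.toLinearMap ∘ₗ p.1.2.symm.toLinearMap, fun n ↦ by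
        ext w
        obtain ⟨m, rfl⟩ := (S.conjAct p.1.1).surjective n
        simp only [LinearMap.comp_apply, LinearEquiv.coe_coe, twist_symm_apply,
          IntertwiningMap.toLinearMap_apply, f.isIntertwining]
        exact (apply_inl_conjAct ρ _ _ _).symm⟩
      map_add' f f' := by ext; simp
      map_smul' c f := by ext; simp }
  map_one' := by ext; simp; rfl
  map_mul' p q := by ext; simp; rfl

@[simp]
theorem multiplicityRep_apply (p : twistGroup S θ) (f : θ.IntertwiningMap (kerRes S ρ)) (w : W) :
    multiplicityRep S θ ρ p f w = ρ p.1.1 (f (p.1.2.symm w)) :=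
  rfl

end Inertia

section Clifford

open Module Representation TensorProduct

variable {k N G Q V W : Type*} [Field k] [Group N] [Group G] [Group Q] [AddCommGroup V]
  [Module k V] [AddCommGroup W] [Module k W]

theorem finrank_le_index_mul_finrank (T : Subgroup G) [T.FiniteIndex] [FiniteDimensional k V]
    (ρ : Representation k G V) [ρ.IsIrreducible] {X : Submodule k V} (hX : X ≠ ⊥)
    (hT : ∀ t ∈ T, ∀ v ∈ X, ρ t v ∈ X) : finrank k V ≤ T.index * finrank k X := by
  classical
  have := T.fintypeQuotientOfFiniteIndex
  let F : (G ⧸ T → X) →ₗ[k] V := ∑ q : G ⧸ T, ρ q.out ∘ₗ X.subtype ∘ₗ LinearMap.proj q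
  have hF (y : G ⧸ T → X) : F y = ∑ q : G ⧸ T, ρ q.out (y q) := by simp [F]
  have hmem (g : G) {v : V} (hv : v ∈ X) : ρ g v ∈ F.range := by
    obtain ⟨t, ht⟩ := QuotientGroup.mk_out_eq_mul T g
    refine ⟨Pi.single (g : G ⧸ T) ⟨ρ (t : G)⁻¹ v, hT _ (T.inv_mem t.2) v hv⟩, ?_⟩
    rw [hF, Finset.sum_eq_single_of_mem (g : G ⧸ T) (Finset.mem_univ _) fun q _ hq ↦ by
      rw [Pi.single_eq_of_ne hq, ZeroMemClass.coe_zero, map_zero]]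
    rw [Pi.single_eq_same, ht, map_mul, Module.End.mul_apply, self_inv_apply]
  have hinv (g : G) : ∀ v ∈ F.range, ρ g v ∈ F.range := by
    rintro _ ⟨y, rfl⟩
    rw [hF, map_sum]
    refine Submodule.sum_mem _ fun q _ ↦ ?_
    rw [← Module.End.mul_apply, ← map_mul]
    exact hmem _ (y q).2
  obtain ⟨v, hv, hv0⟩ := X.ne_bot_iff.1 hX
  have htop : F.range = ⊤ := (eq_bot_or_eq_top_of_invariant _ hinv).resolve_left fun h ↦
    hv0 ((Submodule.mem_bot k).1 (h ▸ by simpa using hmem 1 hv))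
  have := F.finrank_range_le
  rwa [htop, finrank_top, finrank_pi_fintype, Finset.sum_const, Finset.card_univ,
    ← Nat.card_eq_fintype_card, smul_eq_mul] at this

variable {S : GroupExtension N G Q} {θ : Representation k N W} {ρ : Representation k G V}

theorem finrank_le_of_multiplicityRep [Finite G] [FiniteDimensional k V] [FiniteDimensional k W]
    [ρ.IsIrreducible] {U : Submodule k (θ.IntertwiningMap (kerRes S ρ))} (hU : U ≠ ⊥)
    (h : ∀ t ∈ inertia S θ, ∃ p : twistGroup S θ, p.1.1 = t ∧
      ∀ f ∈ U, multiplicityRep S θ ρ p f ∈ U) :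
    finrank k V ≤ (inertia S θ).index * (finrank k W * finrank k U) := by
  let ev : U →ₗ[k] W →ₗ[k] V :=
    { toFun f := f.1.toLinearMap
      map_add' _ _ := rfl
      map_smul' _ _ := rfl }
  have hev (f : U) (w : W) : f.1 w ∈ (TensorProduct.lift ev).range :=
    ⟨f ⊗ₜ w, TensorProduct.lift.tmul _ _⟩
  have hX : (TensorProduct.lift ev).range ≠ ⊥ := fun h0 ↦ by
    refine hU ((Submodule.eq_bot_iff _).2 fun f hf ↦
      IntertwiningMap.ext (LinearMap.ext fun w ↦ ?_))
    exact (Submodule.mem_bot k).1 (h0 ▸ hev ⟨f, hf⟩ w)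
  have hT (t : G) (ht : t ∈ inertia S θ) :
      (TensorProduct.lift ev).range ≤ (TensorProduct.lift ev).range.comap (ρ t) := by
    obtain ⟨p, rfl, hp⟩ := h t ht
    rintro _ ⟨x, rfl⟩
    induction x with
    | zero => simp
    | add x y hx hy => simpa using Submodule.add_mem _ hx hy
    | tmul f w =>
      have := hev ⟨_, hp f f.2⟩ (p.1.2 w)
      rwa [multiplicityRep_apply, LinearEquiv.symm_apply_apply] at this
  refine (finrank_le_index_mul_finrank _ ρ hX hT).trans (Nat.mul_le_mul_left _ ?_)
  rw [mul_comm, ← finrank_tensorProduct]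
  exact LinearMap.finrank_range_le _

variable (S θ) in
/-- The conjugate by `g` of a representation of the kernel of a group extension. -/
noncomputable def conjRep (g : G) : Representation k N W :=
  θ.comp (S.conjAct g⁻¹).toMonoidHom

theorem isIrreducible_conjRep [θ.IsIrreducible] (g : G) : (conjRep S θ g).IsIrreducible :=
  isIrreducible_comp (S.conjAct g⁻¹).surjective θ

theorem inv_mul_mem_inertia [θ.IsIrreducible] {g h : G}
    {φ : (conjRep S θ g).IntertwiningMap (conjRep S θ h)} (hφ : φ ≠ 0) :
    h⁻¹ * g ∈ inertia S θ := by
  have := isIrreducible_conjRep (S := S) (θ := θ) g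
  have := isIrreducible_conjRep (S := S) (θ := θ) h
  let e := LinearEquiv.ofBijective φ.toLinearMap
    ((IsIrreducible.bijective_or_eq_zero φ).resolve_right hφ)
  refine ⟨(h⁻¹ * g, e), fun n w ↦ ?_, rfl⟩
  have := φ.isIntertwining _ _ (S.conjAct g n) w
  simpa [conjRep, e, map_mul] using this

variable (S θ ρ) in
/-- The translate by `g` of an element of the multiplicity space of `θ`, which intertwines the
conjugate of `θ` by `g`. -/
noncomputable def translate (g : G) (f : θ.IntertwiningMap (kerRes S ρ)) :
    (conjRep S θ g).IntertwiningMap (kerRes S ρ) where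
  toLinearMap := ρ g ∘ₗ f.toLinearMap
  isIntertwining' n := LinearMap.ext fun w ↦ by
    obtain ⟨m, rfl⟩ := (S.conjAct g).surjective n
    have h := apply_inl_conjAct (S := S) ρ g m (f w)
    have h' := f.isIntertwining _ _ m w
    simp_all [conjRep]

@[simp]
theorem translate_apply (g : G) (f : θ.IntertwiningMap (kerRes S ρ)) (w : W) :
    translate S θ ρ g f w = ρ g (f w) :=
  rfl

variable [IsAlgClosed k] [FiniteDimensional k W] [θ.IsIrreducible]

theorem exists_translate_ne_sum [Finite G] {ι : Type*} [Fintype ι]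
    [Fintype (G ⧸ inertia S θ)] (b : Basis ι k (θ.IntertwiningMap (kerRes S ρ)))
    (i : (G ⧸ inertia S θ) × ι)
    (φ : ∀ j : (G ⧸ inertia S θ) × ι,
      (conjRep S θ i.1.out).IntertwiningMap (conjRep S θ j.1.out)) (hi : φ i = 0) :
    ∃ w, translate S θ ρ i.1.out (b i.2) w ≠
      ∑ j, translate S θ ρ j.1.out (b j.2) (φ j w) := by
  classical
  by_contra! hsum
  have hne (q : G ⧸ inertia S θ) (hq : q ≠ i.1) (j) : φ (q, j) = 0 := by
    by_contra h0
    have := QuotientGroup.eq.2 (inv_mul_mem_inertia h0)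
    rw [QuotientGroup.out_eq', QuotientGroup.out_eq'] at this
    exact hq this
  have := isIrreducible_conjRep (S := S) (θ := θ) i.1.out
  choose c hc using fun j ↦
    (IsIrreducible.algebraMap_intertwiningMap_bijective_of_isAlgClosed
      (ρ := conjRep S θ i.1.out)).2 (φ (i.1, j))
  have hφ (j) (w : W) : φ (i.1, j) w = c j • w := by rw [← hc]; rfl
  have hb : b i.2 = ∑ j, c j • b j := by
    refine IntertwiningMap.ext (LinearMap.ext fun w ↦ (ρ.apply_bijective i.1.out).1 ?_)
    refine (hsum w).trans ?_
    rw [Fintype.sum_prod_type, Fintype.sum_eq_single i.1 fun q hq ↦ by simp [hne q hq]]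
    simp [hφ, IntertwiningMap.toLinearMap_sum]
  have hci : c i.2 = 1 := by
    simpa [Finsupp.single_apply] using (congrArg (fun x ↦ b.repr x i.2) hb).symm
  obtain ⟨w, hw⟩ := @exists_ne W (nontrivial_of_isIrreducible θ) 0
  exact hw (by rw [← one_smul k w, ← hci, ← hφ, Prod.mk.eta, hi]; rfl)

variable (S θ ρ) in
theorem index_mul_finrank_le [Finite G] [FiniteDimensional k V] :
    (inertia S θ).index * (finrank k W * finrank k (θ.IntertwiningMap (kerRes S ρ))) ≤
      finrank k V := by
  have := (inertia S θ).fintypeQuotientOfFiniteIndex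
  have (g : G) := isIrreducible_conjRep (S := S) (θ := θ) g
  let b := finBasis k (θ.IntertwiningMap (kerRes S ρ))
  let f (i : (G ⧸ inertia S θ) × Fin (finrank k (θ.IntertwiningMap (kerRes S ρ)))) :=
    translate S θ ρ i.1.out (b i.2)
  let F : (_ → W) →ₗ[k] V := ∑ i, (f i).toLinearMap ∘ₗ LinearMap.proj i
  have hF : Function.Injective F := (injective_iff_map_eq_zero F).2 fun x hx ↦
    eq_zero_of_sum_eq_zero_of_isIrreducible f (exists_translate_ne_sum b) x (by simpa [F] using hx)
  refine le_of_eq_of_le ?_ (LinearMap.finrank_le_finrank_of_injective hF)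
  rw [finrank_pi_fintype, Finset.sum_const, Finset.card_univ, Fintype.card_prod,
    Fintype.card_fin, ← Nat.card_eq_fintype_card, smul_eq_mul, Subgroup.index]
  ring

end Clifford

/-- The vanishing of the Schur multiplier of `Q` over `k`: every central extension of `Q` by `kˣ`
splits, which is expressed by a retraction onto `kˣ`. -/
def HasTrivialMultiplier (k Q : Type) [Field k] [Group Q] : Prop :=
  ∀ (E : Type) [Group E] (S : GroupExtension kˣ E Q), S.inl.range ≤ Subgroup.center E →
    ∃ δ : E →* kˣ, ∀ c, δ (S.inl c) = c

section Extension

open Representation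

variable {k N G Q V W : Type*} [Field k] [Group N] [Group G] [Group Q] [AddCommGroup V]
  [Module k V] [AddCommGroup W] [Module k W] (S : GroupExtension N G Q) (θ : Representation k N W)

/-- The image in `Q` of the inertia group of `θ`. -/
def inertiaQuotient : Subgroup Q :=
  (inertia S θ).map S.rightHom

/-- The canonical pairs `(n, θ n)` of the twist group. -/
def kerTwist : N →* twistGroup S θ :=
  (S.inl.prod ((LinearMap.GeneralLinearGroup.generalLinearEquiv k W).toMonoidHom.comp
    θ.asGroupHom)).codRestrict _ fun n m w ↦ by
      change θ n (θ m w) = θ (S.conjAct (S.inl n) m) (θ n w)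
      have h : S.conjAct (S.inl n) m = n * m * n⁻¹ := S.inl_injective (by
        rw [S.inl_conjAct_comm, map_mul, map_mul, map_inv])
      rw [← Module.End.mul_apply, ← Module.End.mul_apply, ← map_mul, ← map_mul, h,
        inv_mul_cancel_right]

@[simp]
theorem fst_kerTwist (n : N) : (kerTwist S θ n).1.1 = S.inl n :=
  rfl

@[simp]
theorem snd_kerTwist_apply (n : N) (w : W) : (kerTwist S θ n).1.2 w = θ n w :=
  rfl

@[simp]
theorem snd_kerTwist_symm_apply (n : N) (w : W) : (kerTwist S θ n).1.2.symm w = θ n⁻¹ w :=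
  rfl

/-- The pairs `(1, c)` of the twist group, where `c` is a scalar. -/
def scalarTwist : kˣ →* twistGroup S θ :=
  ((1 : kˣ →* G).prod (DistribMulAction.toModuleAut k W)).codRestrict _ fun c n w ↦ by
    change c • θ n w = θ (S.conjAct 1 n) (c • w)
    rw [map_one, MulAut.one_apply]
    exact ((θ n).map_smul (c : k) w).symm

@[simp]
theorem fst_scalarTwist (c : kˣ) : (scalarTwist S θ c).1.1 = 1 :=
  rfl

@[simp]
theorem snd_scalarTwist_apply (c : kˣ) (w : W) : (scalarTwist S θ c).1.2 w = c • w :=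
  rfl

theorem scalarTwist_mem_center (c : kˣ) :
    scalarTwist S θ c ∈ Subgroup.center (twistGroup S θ) := by
  refine Subgroup.mem_center_iff.2 fun p ↦ Subtype.ext (Prod.ext ?_ (LinearEquiv.ext fun w ↦ ?_))
  · simp
  · exact p.1.2.map_smul (c : k) w

/-- The projection of the twist group to the image in `Q` of the inertia group. -/
def twistProj : twistGroup S θ →* inertiaQuotient S θ :=
  (S.rightHom.comp ((MonoidHom.fst _ _).comp (twistGroup S θ).subtype)).codRestrict _ fun p ↦
    ⟨p.1.1, ⟨p.1, p.2, rfl⟩, rfl⟩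

theorem twistProj_surjective : Function.Surjective (twistProj S θ) := by
  rintro ⟨_, _, ⟨p, hp, rfl⟩, rfl⟩
  exact ⟨⟨p, hp⟩, rfl⟩

theorem rightHom_inl (n : N) : S.rightHom (S.inl n) = 1 :=
  MonoidHom.mem_ker.1 (S.range_inl_eq_ker_rightHom ▸ ⟨n, rfl⟩)

theorem exists_inl_eq_of_rightHom_eq_one {g : G} (hg : S.rightHom g = 1) :
    ∃ n, S.inl n = g :=
  MonoidHom.mem_range.1 (S.range_inl_eq_ker_rightHom ▸ MonoidHom.mem_ker.2 hg)

theorem inl_mem_inertia (n : N) : S.inl n ∈ inertia S θ :=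
  ⟨_, (kerTwist S θ n).2, rfl⟩

theorem index_inertiaQuotient : (inertiaQuotient S θ).index = (inertia S θ).index := by
  refine Subgroup.index_map_eq _ S.rightHom_surjective ?_
  rw [← S.range_inl_eq_ker_rightHom]
  rintro _ ⟨n, rfl⟩
  exact inl_mem_inertia S θ n

instance : (kerTwist S θ).range.Normal where
  conj_mem := by
    rintro _ ⟨n, rfl⟩ p
    refine ⟨S.conjAct p.1.1 n, Subtype.ext (Prod.ext S.inl_conjAct_comm ?_)⟩
    ext w
    exact ((twist_apply p n _).trans (congrArg _ (p.1.2.apply_symm_apply w))).symm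

variable [IsAlgClosed k] [FiniteDimensional k W] [θ.IsIrreducible]

theorem exists_scalarTwist_eq {p : twistGroup S θ} (hp : p.1.1 = 1) :
    ∃ c, scalarTwist S θ c = p := by
  have := nontrivial_of_isIrreducible θ
  let φ : θ.IntertwiningMap θ := ⟨p.1.2.toLinearMap, fun n ↦ LinearMap.ext fun w ↦ by
    simpa [hp] using twist_apply p n w⟩
  obtain ⟨c, hc⟩ := (IsIrreducible.algebraMap_intertwiningMap_bijective_of_isAlgClosed
    (ρ := θ)).2 φ
  have hφ (w : W) : c • w = p.1.2 w := by
    change _ = φ w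
    rw [← hc]
    rfl
  obtain ⟨w, hw⟩ := exists_ne (0 : W)
  have hc0 : c ≠ 0 := by
    rintro rfl
    exact hw (p.1.2.map_eq_zero_iff.1 (by rw [← hφ, zero_smul]))
  exact ⟨Units.mk0 c hc0, Subtype.ext (Prod.ext hp.symm (LinearEquiv.ext hφ))⟩

theorem exists_kerTwist_mul_scalarTwist_eq {p : twistGroup S θ} (hp : twistProj S θ p = 1) :
    ∃ n c, kerTwist S θ n * scalarTwist S θ c = p := by
  obtain ⟨n, hn⟩ := exists_inl_eq_of_rightHom_eq_one S (congrArg Subtype.val hp)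
  obtain ⟨c, hc⟩ := exists_scalarTwist_eq S θ (p := (kerTwist S θ n)⁻¹ * p) (by simp [hn])
  exact ⟨n, c, by rw [hc, mul_inv_cancel_left]⟩

/-- The central extension whose class is the obstruction to extending `θ` to its inertia group. -/
def twistExtension :
    GroupExtension kˣ (twistGroup S θ ⧸ (kerTwist S θ).range) (inertiaQuotient S θ) where
  inl := (QuotientGroup.mk' _).comp (scalarTwist S θ)
  rightHom := QuotientGroup.lift _ (twistProj S θ) (by
    rintro _ ⟨n, rfl⟩
    exact Subtype.ext (rightHom_inl S n))
  inl_injective := (injective_iff_map_eq_one _).2 fun c hc ↦ by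
    obtain ⟨n, hn⟩ := (QuotientGroup.eq_one_iff _).1 hc
    have := nontrivial_of_isIrreducible θ
    obtain ⟨w, hw⟩ := exists_ne (0 : W)
    have hn1 : n = 1 := S.inl_injective ((congrArg (fun p ↦ p.1.1) hn).trans (map_one _).symm)
    have hcw : (c : k) • w = w := by
      simpa [hn1, Units.smul_def] using (congrArg (fun p ↦ p.1.2 w) hn).symm
    exact Units.ext ((smul_left_injective k hw) (hcw.trans (one_smul k w).symm))
  range_inl_eq_ker_rightHom := by
    refine le_antisymm ?_ fun q hq ↦ ?_
    · rintro _ ⟨c, rfl⟩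
      exact Subtype.ext (map_one S.rightHom)
    · obtain ⟨p, rfl⟩ := QuotientGroup.mk_surjective q
      obtain ⟨n, c, rfl⟩ := exists_kerTwist_mul_scalarTwist_eq S θ hq
      refine ⟨c, ((QuotientGroup.mk_mul _ _ _).trans ?_).symm⟩
      rw [(QuotientGroup.eq_one_iff _).2 (MonoidHom.mem_range.2 ⟨n, rfl⟩), one_mul]
      rfl
  rightHom_surjective := QuotientGroup.lift_surjective_of_surjective _ _
    (twistProj_surjective S θ) _

end Extension

section Section

open Representation

variable {k N G Q W : Type} [Field k] [Group N] [Group G] [Group Q] [AddCommGroup W] [Module k W]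
  (S : GroupExtension N G Q) (θ : Representation k N W) [IsAlgClosed k] [FiniteDimensional k W]
  [θ.IsIrreducible]

/-- A section of the twist group over the inertia group amounts to an extension of `θ`. -/
theorem exists_section_twistGroup (h : HasTrivialMultiplier k (inertiaQuotient S θ)) :
    ∃ τ : inertia S θ →* twistGroup S θ, (∀ t, (τ t).1.1 = t) ∧
      ∀ n, τ ⟨S.inl n, inl_mem_inertia S θ n⟩ = kerTwist S θ n := by
  obtain ⟨δ, hδ⟩ := h _ (twistExtension S θ) (by
    rintro _ ⟨c, rfl⟩
    exact Subgroup.mem_center_iff.2 (QuotientGroup.mk_surjective.forall.2 fun p ↦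
      congrArg _ (Subgroup.mem_center_iff.1 (scalarTwist_mem_center S θ c) p)))
  let χ : twistGroup S θ →* kˣ := δ.comp (QuotientGroup.mk' _)
  have hχ (c : kˣ) : χ (scalarTwist S θ c) = c := hδ c
  have hχN (n : N) : kerTwist S θ n ∈ χ.ker := MonoidHom.mem_ker.2 (by
    change δ (QuotientGroup.mk' _ _) = 1
    rw [QuotientGroup.mk'_apply,
      (QuotientGroup.eq_one_iff _).2 (MonoidHom.mem_range.2 ⟨n, rfl⟩), map_one])
  let π : χ.ker →* inertia S θ := ((MonoidHom.fst G (W ≃ₗ[k] W)).comp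
    ((twistGroup S θ).subtype.comp χ.ker.subtype)).codRestrict _ fun p ↦ ⟨p.1.1, p.1.2, rfl⟩
  have hπ : Function.Bijective π := by
    refine ⟨(injective_iff_map_eq_one _).2 fun p hp ↦ ?_, ?_⟩
    · obtain ⟨c, hc⟩ := exists_scalarTwist_eq S θ (p := p.1) (congrArg Subtype.val hp)
      have hc1 : c = 1 := by rw [← hχ c, hc, MonoidHom.mem_ker.1 p.2]
      exact Subtype.ext (by rw [← hc, hc1, map_one, Subgroup.coe_one])
    · rintro ⟨_, p, hp, rfl⟩
      refine ⟨⟨⟨p, hp⟩ * (scalarTwist S θ (χ ⟨p, hp⟩))⁻¹, ?_⟩, Subtype.ext ?_⟩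
      · rw [MonoidHom.mem_ker, map_mul, map_inv, hχ, mul_inv_cancel]
      · change p.1 * (1 : G)⁻¹ = p.1
        simp
  let e := MulEquiv.ofBijective π hπ
  refine ⟨χ.ker.subtype.comp e.symm.toMonoidHom, fun t ↦ congrArg Subtype.val
    (e.apply_symm_apply t), fun n ↦ ?_⟩
  exact congrArg Subtype.val (e.symm_apply_eq.2 (Subtype.ext rfl) :
    e.symm ⟨S.inl n, inl_mem_inertia S θ n⟩ = ⟨kerTwist S θ n, hχN n⟩)

end Section

section Multiplicity

open Module Representation

variable {k N G Q V W : Type*} [Field k] [Group N] [Group G] [Group Q] [AddCommGroup V]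
  [Module k V] [AddCommGroup W] [Module k W]

theorem isIrreducible_of_isIrreducible_comp {φ : N →* G} {ρ : Representation k G V}
    (h : Representation.IsIrreducible (ρ.comp φ : Representation k N V)) : ρ.IsIrreducible := by
  have := nontrivial_of_isIrreducible (ρ.comp φ : Representation k N V)
  exact isIrreducible_of_invariant fun p hp ↦
    eq_bot_or_eq_top_of_invariant (ρ := (ρ.comp φ : Representation k N V)) p fun n ↦ hp (φ n)

theorem exists_comp_eq_of_surjective {π : G →* Q} (hπ : Function.Surjective π)
    (ψ : Representation k G V) (hψ : ∀ g, π g = 1 → ψ g = 1) :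
    ∃ ω : Representation k Q V, (ω.comp π : Representation k G V) = ψ :=
  ⟨(QuotientGroup.lift π.ker ψ hψ).comp
    (QuotientGroup.quotientKerEquivOfSurjective π hπ).symm.toMonoidHom, MonoidHom.ext fun g ↦
      congrArg (QuotientGroup.lift π.ker ψ hψ) ((MulEquiv.symm_apply_eq _).2 rfl :
        (QuotientGroup.quotientKerEquivOfSurjective π hπ).symm (π g) = (g : G ⧸ π.ker))⟩

variable [Finite G] [IsAlgClosed k] [FiniteDimensional k V] [FiniteDimensional k W]
  (S : GroupExtension N G Q) (θ : Representation k N W) [θ.IsIrreducible]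
  (ρ : Representation k G V) [ρ.IsIrreducible] [Nontrivial (θ.IntertwiningMap (kerRes S ρ))]

theorem finrank_eq_index_mul_finrank :
    finrank k V = (inertiaQuotient S θ).index *
      (finrank k W * finrank k (θ.IntertwiningMap (kerRes S ρ))) := by
  rw [index_inertiaQuotient]
  refine le_antisymm ?_ (index_mul_finrank_le S θ ρ)
  rw [← finrank_top k (θ.IntertwiningMap _)]
  exact finrank_le_of_multiplicityRep top_ne_bot fun t ⟨p, hp, hpt⟩ ↦
    ⟨⟨p, hp⟩, hpt, fun _ _ ↦ Submodule.mem_top⟩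

theorem isIrreducible_multiplicityRep_comp {τ : inertia S θ →* twistGroup S θ}
    (hτ : ∀ t, (τ t).1.1 = t) :
    Representation.IsIrreducible ((multiplicityRep S θ ρ).comp τ :
      Representation k (inertia S θ) _) := by
  have := nontrivial_of_isIrreducible θ
  refine isIrreducible_of_invariant fun p hp ↦ or_iff_not_imp_left.2 fun hp0 ↦
    Submodule.eq_top_of_finrank_eq (le_antisymm p.finrank_le ?_)
  have h := (finrank_eq_index_mul_finrank S θ ρ).symm.trans_le
    (finrank_le_of_multiplicityRep hp0 fun t ht ↦ ⟨τ ⟨t, ht⟩, hτ _, hp ⟨t, ht⟩⟩)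
  rw [index_inertiaQuotient] at h
  exact Nat.le_of_mul_le_mul_left (Nat.le_of_mul_le_mul_left h
    (Nat.pos_of_ne_zero Subgroup.FiniteIndex.index_ne_zero)) finrank_pos

end Multiplicity

section Frobenius

open Representation

variable {H G X : Type} [Group H] [Group G] [Finite H] [AddCommGroup X] [Module ℂ X]

theorem exists_isIrreducible_intertwiningMap_of_forall_ne_zero {Z : Type} [AddCommGroup Z]
    [Module ℂ Z] [FiniteDimensional ℂ Z] [Nontrivial Z] {φ : H →* G} {σ : Representation ℂ H X}
    (κ : Representation ℂ G Z)
    (ε : IntertwiningMap (κ.comp φ : Representation ℂ H Z) σ)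
    (hε : ∀ z ≠ 0, ∃ g, ε (κ g z) ≠ 0) :
    ∃ (V : Type) (_ : AddCommGroup V) (_ : Module ℂ V) (_ : FiniteDimensional ℂ V)
      (ρ : Representation ℂ G V), ρ.IsIrreducible ∧
        ∃ j : σ.IntertwiningMap (ρ.comp φ : Representation ℂ H V), j ≠ 0 := by
  obtain ⟨p, hp⟩ := exists_isIrreducible_subrepresentation κ
  let i : IntertwiningMap (p.toRepresentation.comp φ : Representation ℂ H p.toSubmodule)
      (κ.comp φ : Representation ℂ H Z) := ⟨p.toSubmodule.subtype, fun _ ↦ rfl⟩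
  have hi : ε.comp i ≠ 0 := fun h0 ↦ by
    have := nontrivial_of_isIrreducible p.toRepresentation
    obtain ⟨z, hz⟩ := exists_ne (0 : p.toSubmodule)
    obtain ⟨g, hg⟩ := hε z (mt (fun h ↦ Subtype.ext h) hz)
    exact hg (congrArg (fun e ↦ e (p.toRepresentation g z)) h0)
  exact ⟨p.toSubmodule, _, _, inferInstance, _, hp, exists_ne_zero_intertwiningMap_symm hi⟩

variable [Finite G] [FiniteDimensional ℂ X] [Nontrivial X]

/-- Frobenius reciprocity: `V` is found among the constituents of the coinduction of `σ`. -/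
theorem exists_isIrreducible_intertwiningMap_comp {φ : H →* G}
    (hφ : Function.Injective φ) (σ : Representation ℂ H X) :
    ∃ (V : Type) (_ : AddCommGroup V) (_ : Module ℂ V) (_ : FiniteDimensional ℂ V)
      (ρ : Representation ℂ G V), ρ.IsIrreducible ∧
        ∃ j : σ.IntertwiningMap (ρ.comp φ : Representation ℂ H V), j ≠ 0 := by
  classical
  obtain ⟨x, hx⟩ := exists_ne (0 : X)
  let F (g : G) : X := if h : g ∈ φ.range then σ h.choose x else 0
  have hF1 (h : H) : F (φ h) = σ h x := by
    have hh : φ h ∈ φ.range := ⟨h, rfl⟩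
    simp only [F, dif_pos hh]
    exact congrArg (σ · x) (hφ hh.choose_spec)
  have hF : F ∈ coindV φ σ := fun h g ↦ by
    by_cases hg : g ∈ φ.range
    · obtain ⟨h', rfl⟩ := hg
      rw [← map_mul, hF1, hF1, map_mul, Module.End.mul_apply]
    · have hhg : φ h * g ∉ φ.range :=
        mt (Subgroup.mul_mem_cancel_left φ.range (MonoidHom.mem_range.2 ⟨h, rfl⟩)).1 hg
      simp only [F, dif_neg hg, dif_neg hhg, map_zero]
  have : Nontrivial (coindV φ σ) := ⟨⟨F, hF⟩, 0, fun h ↦ hx (by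
    have h1 := hF1 1
    rw [map_one σ] at h1
    exact h1.symm.trans (congrFun (congrArg Subtype.val h) (φ 1)))⟩
  refine exists_isIrreducible_intertwiningMap_of_forall_ne_zero (coind φ σ)
    ⟨LinearMap.proj 1 ∘ₗ (coindV φ σ).subtype, fun h ↦ LinearMap.ext fun f ↦ ?_⟩ fun f hf ↦ ?_
  · have := f.2 h 1
    rw [mul_one] at this
    exact (congrArg f.1 (one_mul (φ h))).trans this
  · by_contra! h0
    refine hf (Subtype.ext (funext fun g ↦ ?_))
    exact (congrArg f.1 (one_mul g)).symm.trans (h0 g)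

end Frobenius

section CliffordDegrees

open Module Representation TensorProduct

variable {N G Q W : Type} [Group N] [Group G] [Group Q] [AddCommGroup W]
  [Module ℂ W] (S : GroupExtension N G Q) (θ : Representation ℂ N W)

/-- The projection of the inertia group of `θ` to its image in `Q`. -/
noncomputable def inertiaProj : inertia S θ →* inertiaQuotient S θ :=
  S.rightHom.subgroupMap (inertia S θ)

@[simp]
theorem inertiaProj_inl (n : N) : inertiaProj S θ ⟨S.inl n, inl_mem_inertia S θ n⟩ = 1 :=
  Subtype.ext (rightHom_inl S n)

variable {S θ} {τ : inertia S θ →* twistGroup S θ} {Y : Type} [AddCommGroup Y] [Module ℂ Y]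

variable (τ) in
/-- The tensor product of the extension of `θ` given by `τ` with the inflation of `ω`. -/
noncomputable def extTensor
    (ω : Representation ℂ (inertiaQuotient S θ) Y) : Representation ℂ (inertia S θ) (W ⊗[ℂ] Y) :=
  tprod ((LinearEquiv.automorphismGroup.toLinearMapMonoidHom).comp ((MonoidHom.snd _ _).comp
    ((twistGroup S θ).subtype.comp τ))) (ω.comp (inertiaProj S θ))

theorem extTensor_tmul (ω : Representation ℂ (inertiaQuotient S θ) Y) (t : inertia S θ)
    (w : W) (y : Y) :
    extTensor τ ω t (w ⊗ₜ y) = (τ t).1.2 w ⊗ₜ ω (inertiaProj S θ t) y :=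
  rfl

theorem exists_intertwiningMap_multiplicityRep_ne_zero (hτ : ∀ t, (τ t).1.1 = t)
    (hτN : ∀ n, τ ⟨S.inl n, inl_mem_inertia S θ n⟩ = kerTwist S θ n) {V : Type} [AddCommGroup V]
    [Module ℂ V] {ρ : Representation ℂ G V} {ω : Representation ℂ (inertiaQuotient S θ) Y}
    {j : IntertwiningMap (extTensor τ ω)
      (ρ.comp (inertia S θ).subtype : Representation ℂ (inertia S θ) V)} (hj : j ≠ 0) :
    ∃ b : IntertwiningMap (ω.comp (inertiaProj S θ) : Representation ℂ (inertia S θ) Y)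
      ((multiplicityRep S θ ρ).comp τ : Representation ℂ (inertia S θ) _), b ≠ 0 := by
  let a (y : Y) : θ.IntertwiningMap (kerRes S ρ) :=
    ⟨j.toLinearMap ∘ₗ (TensorProduct.mk ℂ W Y).flip y, fun n ↦ LinearMap.ext fun w ↦ by
      have := j.isIntertwining _ _ ⟨S.inl n, inl_mem_inertia S θ n⟩ (w ⊗ₜ y)
      rw [extTensor_tmul, hτN] at this
      simpa using this⟩
  have ha (y : Y) (w : W) : a y w = j (w ⊗ₜ y) := rfl
  let b : IntertwiningMap (ω.comp (inertiaProj S θ) : Representation ℂ (inertia S θ) _)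
      ((multiplicityRep S θ ρ).comp τ : Representation ℂ (inertia S θ) _) :=
    ⟨{ toFun := a
       map_add' y y' := by ext; simp [ha, tmul_add]
       map_smul' c y := by ext; simp [ha] }, fun t ↦ LinearMap.ext fun y ↦
        IntertwiningMap.ext (LinearMap.ext fun w ↦ by
          have := j.isIntertwining _ _ t ((τ t).1.2.symm w ⊗ₜ y)
          rw [extTensor_tmul, LinearEquiv.apply_symm_apply] at this
          simpa [ha, hτ] using this)⟩
  exact ⟨b, fun h0 ↦ hj (IntertwiningMap.ext (TensorProduct.ext' fun w y ↦
    congrArg (fun e ↦ (e y) w) h0))⟩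

variable [FiniteDimensional ℂ W] [θ.IsIrreducible]

section Upper

variable [Finite G] {V : Type} [AddCommGroup V] [Module ℂ V] [FiniteDimensional ℂ V]
  (ρ : Representation ℂ G V) [ρ.IsIrreducible]

theorem finrank_intertwiningMap_mem_charDegrees
    [Nontrivial (θ.IntertwiningMap (kerRes S ρ))] (hτ : ∀ t, (τ t).1.1 = t)
    (hτN : ∀ n, τ ⟨S.inl n, inl_mem_inertia S θ n⟩ = kerTwist S θ n) :
    finrank ℂ (θ.IntertwiningMap (kerRes S ρ)) ∈ charDegrees (inertiaQuotient S θ) := by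
  have : Finite (inertiaQuotient S θ) :=
    .of_surjective _ (S.rightHom.subgroupMap_surjective (inertia S θ))
  have hψ (t : inertia S θ) (ht : inertiaProj S θ t = 1) :
      multiplicityRep S θ ρ (τ t) = 1 := by
    obtain ⟨n, hn⟩ := exists_inl_eq_of_rightHom_eq_one S (congrArg Subtype.val ht)
    obtain rfl : ⟨S.inl n, inl_mem_inertia S θ n⟩ = t := Subtype.ext hn
    refine LinearMap.ext fun f ↦ IntertwiningMap.ext (LinearMap.ext fun w ↦ ?_)
    change multiplicityRep S θ ρ (τ _) f w = f w
    rw [hτN, multiplicityRep_apply, snd_kerTwist_symm_apply, f.isIntertwining]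
    exact (kerRes S ρ).self_inv_apply n (f w)
  obtain ⟨ω, hω⟩ := exists_comp_eq_of_surjective (π := inertiaProj S θ)
    (S.rightHom.subgroupMap_surjective (inertia S θ))
    ((multiplicityRep S θ ρ).comp τ : Representation ℂ (inertia S θ) _) hψ
  have := isIrreducible_of_isIrreducible_comp (ρ := ω)
    (hω.symm ▸ isIrreducible_multiplicityRep_comp S θ ρ hτ)
  exact finrank_mem_charDegrees ω

end Upper

theorem mul_mem_charDegrees [Finite G] {d : ℕ} (hd : d ∈ charDegrees (inertiaQuotient S θ))
    (hτ : ∀ t, (τ t).1.1 = t)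
    (hτN : ∀ n, τ ⟨S.inl n, inl_mem_inertia S θ n⟩ = kerTwist S θ n) :
    (inertiaQuotient S θ).index * (finrank ℂ W * d) ∈ charDegrees G := by
  have : Finite (inertiaQuotient S θ) :=
    .of_surjective _ (S.rightHom.subgroupMap_surjective (inertia S θ))
  obtain ⟨ω, hω⟩ := exists_isIrreducible_of_mem_charDegrees hd
  have := nontrivial_of_isIrreducible θ
  have := nontrivial_of_isIrreducible ω
  obtain ⟨V, _, _, _, ρ, hρ, j, hj⟩ := exists_isIrreducible_intertwiningMap_comp
    (φ := (inertia S θ).subtype) Subtype.val_injective (extTensor τ ω)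
  obtain ⟨b, hb⟩ := exists_intertwiningMap_multiplicityRep_ne_zero hτ hτN hj
  have : Nontrivial (θ.IntertwiningMap (kerRes S ρ)) := by
    by_contra h
    rw [not_nontrivial_iff_subsingleton] at h
    exact hb (IntertwiningMap.ext (LinearMap.ext fun y ↦ Subsingleton.elim _ _))
  have := isIrreducible_comp (φ := inertiaProj S θ)
    (S.rightHom.subgroupMap_surjective (inertia S θ)) ω
  have := isIrreducible_multiplicityRep_comp S θ ρ hτ
  have hbij := (IsIrreducible.bijective_or_eq_zero b).resolve_right hb
  have hrank := (LinearEquiv.ofBijective b.toLinearMap hbij).finrank_eq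
  rw [finrank_fin_fun] at hrank
  rw [hrank, ← finrank_eq_index_mul_finrank S θ ρ]
  exact finrank_mem_charDegrees ρ

/-- Clifford theory: `m` is the degree of a constituent `θ` of the restriction to `N` of a character
of degree `n`, and `H` is the image in `Q` of the inertia group of `θ`. -/
theorem exists_index_mul_dvd_of_mem_charDegrees [Finite G] (S : GroupExtension N G Q) {n : ℕ}
    (hn : n ∈ charDegrees G) :
    ∃ m ∈ charDegrees N, ∃ H : Subgroup Q, H.index * m ∣ n ∧ (HasTrivialMultiplier ℂ H →
      (∃ d ∈ charDegrees H, n = H.index * (m * d)) ∧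
        ∀ d ∈ charDegrees H, H.index * (m * d) ∈ charDegrees G) := by
  have : Finite N := .of_injective _ S.inl_injective
  obtain ⟨ρ, hρ⟩ := exists_isIrreducible_of_mem_charDegrees hn
  have := nontrivial_of_isIrreducible ρ
  obtain ⟨p, hp⟩ := exists_isIrreducible_subrepresentation (kerRes S ρ)
  let i : p.toRepresentation.IntertwiningMap (kerRes S ρ) :=
    ⟨p.toSubmodule.subtype, fun _ ↦ rfl⟩
  have hi : i ≠ 0 := fun h0 ↦ by
    have := nontrivial_of_isIrreducible p.toRepresentation
    obtain ⟨v, hv⟩ := exists_ne (0 : p.toSubmodule)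
    exact hv (Subtype.ext (congrArg (fun e ↦ e v) h0))
  have : Nontrivial (p.toRepresentation.IntertwiningMap (kerRes S ρ)) := ⟨i, 0, hi⟩
  have hrank := finrank_eq_index_mul_finrank S p.toRepresentation ρ
  rw [finrank_fin_fun] at hrank
  refine ⟨_, finrank_mem_charDegrees p.toRepresentation, inertiaQuotient S p.toRepresentation,
    ⟨_, hrank.trans (mul_assoc _ _ _).symm⟩, fun h ↦ ?_⟩
  obtain ⟨τ, hτ, hτN⟩ := exists_section_twistGroup S p.toRepresentation h
  exact ⟨⟨_, finrank_intertwiningMap_mem_charDegrees ρ hτ hτN, hrank⟩,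
    fun d hd ↦ mul_mem_charDegrees hd hτ hτN⟩

theorem exists_index_mul_mem_charDegrees [Finite G] (S : GroupExtension N G Q) {m : ℕ}
    (hm : m ∈ charDegrees N) : ∃ H : Subgroup Q, HasTrivialMultiplier ℂ H →
      ∀ d ∈ charDegrees H, H.index * (m * d) ∈ charDegrees G := by
  have : Finite N := .of_injective _ S.inl_injective
  obtain ⟨θ, hθ⟩ := exists_isIrreducible_of_mem_charDegrees hm
  refine ⟨inertiaQuotient S θ, fun h d hd ↦ ?_⟩
  obtain ⟨τ, hτ, hτN⟩ := exists_section_twistGroup S θ h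
  simpa using mul_mem_charDegrees hd hτ hτN

end CliffordDegrees

/-! ### Groups with trivial multiplier -/

section Multiplier

variable {k E Q : Type} [Field k] [Group E] [Group Q]

theorem hasTrivialMultiplier_congr {Q' : Type} [Group Q'] (e : Q ≃* Q')
    (h : HasTrivialMultiplier k Q) : HasTrivialMultiplier k Q' := fun E _ S hS ↦
  h E { S with
    rightHom := e.symm.toMonoidHom.comp S.rightHom
    range_inl_eq_ker_rightHom := by
      ext g
      simp [S.range_inl_eq_ker_rightHom, MonoidHom.mem_ker]
    rightHom_surjective := e.symm.surjective.comp S.rightHom_surjective } hS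

/-- The integers `n` such that the `n`-th power map on the kernel `kˣ` of an extension extends to
the whole group; a central extension splits if `1` is one of them. -/
def extendablePowers (S : GroupExtension kˣ E Q) : AddSubgroup ℤ where
  carrier := {n | ∃ δ : E →* kˣ, ∀ c, δ (S.inl c) = c ^ n}
  add_mem' := by
    rintro a b ⟨f, hf⟩ ⟨g, hg⟩
    exact ⟨f * g, fun c ↦ by rw [MonoidHom.mul_apply, hf, hg, zpow_add]⟩
  zero_mem' := ⟨1, fun c ↦ by simp⟩
  neg_mem' := by
    rintro a ⟨f, hf⟩
    exact ⟨f⁻¹, fun c ↦ by rw [MonoidHom.inv_apply, hf, zpow_neg]⟩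

theorem hasTrivialMultiplier_of_one_mem_extendablePowers
    (h : ∀ (E : Type) [Group E] (S : GroupExtension kˣ E Q),
      S.inl.range ≤ Subgroup.center E → 1 ∈ extendablePowers S) : HasTrivialMultiplier k Q := by
  intro E _ S hS
  obtain ⟨δ, hδ⟩ := h E S hS
  exact ⟨δ, by simpa using hδ⟩

variable {S : GroupExtension kˣ E Q}

theorem commute_inl (hS : S.inl.range ≤ Subgroup.center E) (c : kˣ) (e : E) :
    Commute (S.inl c) e :=
  (Subgroup.mem_center_iff.1 (hS ⟨c, rfl⟩) e).symm

theorem exists_retraction_of_section (hS : S.inl.range ≤ Subgroup.center E) {R : Subgroup Q}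
    {s : R →* E} (hs : ∀ r, S.rightHom (s r) = r) :
    ∃ δ : R.comap S.rightHom →* kˣ, ∀ (x : R.comap S.rightHom) c, x = S.inl c → δ x = c := by
  let σ : R.comap S.rightHom →* E := s.comp (S.rightHom.subgroupComap R)
  have hσ (x) : S.rightHom (σ x) = S.rightHom x := hs _
  choose δ hδ using fun x : R.comap S.rightHom ↦
    exists_inl_eq_of_rightHom_eq_one S (g := (x : E) * (σ x)⁻¹)
      (by rw [map_mul, map_inv, hσ, mul_inv_cancel])
  refine ⟨.mk' δ fun x y ↦ S.inl_injective ?_, fun x c hx ↦ S.inl_injective ?_⟩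
  · have h := (commute_inl hS (δ y) (σ x)⁻¹).eq
    rw [hδ] at h
    calc S.inl (δ (x * y)) = x * (y * (σ y)⁻¹ * (σ x)⁻¹) := by
          rw [hδ, map_mul, Subgroup.coe_mul]; group
      _ = S.inl (δ x * δ y) := by rw [h, map_mul, hδ, hδ]; group
  · have h : S.rightHom.subgroupComap R x = 1 :=
      Subtype.ext (show S.rightHom x = 1 by rw [hx, rightHom_inl])
    change S.inl (δ x) = _
    rw [hδ, MonoidHom.comp_apply, h, map_one, inv_one, mul_one, hx]

theorem index_mem_extendablePowers (hS : S.inl.range ≤ Subgroup.center E) {R : Subgroup Q}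
    [R.FiniteIndex] {s : R →* E} (hs : ∀ r, S.rightHom (s r) = r) :
    (R.index : ℤ) ∈ extendablePowers S := by
  obtain ⟨δ, hδ⟩ := exists_retraction_of_section hS hs
  have hindex : (R.comap S.rightHom).index = R.index :=
    R.index_comap_of_surjective S.rightHom_surjective
  have : (R.comap S.rightHom).FiniteIndex := ⟨hindex ▸ Subgroup.FiniteIndex.index_ne_zero⟩
  refine ⟨MonoidHom.transfer δ, fun c ↦ ?_⟩
  rw [MonoidHom.transfer_eq_pow δ (S.inl c) fun n g _ ↦ by
    rw [mul_assoc, ← map_pow, (commute_inl hS _ g).eq, inv_mul_cancel_left], zpow_natCast, ← hindex]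
  exact hδ _ _ (map_pow S.inl c _).symm

theorem exists_section_zpowers [IsAlgClosed k] [Finite Q] (hS : S.inl.range ≤ Subgroup.center E)
    (r : Q) : ∃ s : Subgroup.zpowers r →* E, ∀ x, S.rightHom (s x) = x := by
  obtain ⟨e, he⟩ := S.rightHom_surjective r
  obtain ⟨z, hz⟩ := exists_inl_eq_of_rightHom_eq_one S (g := e ^ orderOf r)
    (by rw [map_pow, he, pow_orderOf_eq_one])
  obtain ⟨w, hw⟩ := IsAlgClosed.exists_pow_nat_eq (z : k) (orderOf_pos r)
  have hw0 : w ≠ 0 := by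
    rintro rfl
    exact z.ne_zero (hw.symm.trans (zero_pow (orderOf_pos r).ne'))
  have hpow : (S.inl (Units.mk0 w hw0)⁻¹ * e) ^ orderOf r = 1 := by
    rw [(commute_inl hS _ e).mul_pow, ← map_pow, ← hz, ← map_mul,
      inv_pow, show Units.mk0 w hw0 ^ orderOf r = z from Units.ext hw, inv_mul_cancel, map_one]
  have hgen (x : Subgroup.zpowers r) : x ∈ Subgroup.zpowers (⟨r, Subgroup.mem_zpowers r⟩ :
      Subgroup.zpowers r) := by
    obtain ⟨_, n, rfl⟩ := x
    exact ⟨n, Subtype.ext (by simp)⟩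
  refine ⟨monoidHomOfForallMemZpowers hgen (g' := S.inl (Units.mk0 w hw0)⁻¹ * e)
    (by simpa using orderOf_dvd_of_pow_eq_one hpow), fun x ↦ ?_⟩
  obtain ⟨n, rfl⟩ := hgen x
  simp [monoidHomOfForallMemZpowers_apply_gen, he]

theorem index_zpowers_mem_extendablePowers [IsAlgClosed k] [Finite Q]
    (hS : S.inl.range ≤ Subgroup.center E) (r : Q) :
    ((Subgroup.zpowers r).index : ℤ) ∈ extendablePowers S := by
  obtain ⟨s, hs⟩ := exists_section_zpowers hS r
  exact index_mem_extendablePowers hS hs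

theorem hasTrivialMultiplier_of_isCyclic [IsAlgClosed k] [Finite Q] [IsCyclic Q] :
    HasTrivialMultiplier k Q :=
  hasTrivialMultiplier_of_one_mem_extendablePowers fun E _ S hS ↦ by
    obtain ⟨r, hr⟩ := IsCyclic.exists_generator (α := Q)
    simpa [(Subgroup.eq_top_iff' _).2 hr] using index_zpowers_mem_extendablePowers hS r

open scoped commutatorElement

theorem commutatorElement_mul_of_mem_center {z : E} (hz : z ∈ Subgroup.center E) (a b : E) :
    ⁅z * a, b⁆ = ⁅a, b⁆ := by
  rw [commutatorElement_def, mul_inv_rev, show z * a * b * (a⁻¹ * z⁻¹) = z * (a * b * a⁻¹) * z⁻¹ by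
    group, ← Subgroup.mem_center_iff.1 hz, mul_inv_cancel_right, commutatorElement_def]

theorem commutatorElement_eq_of_rightHom_eq (hS : S.inl.range ≤ Subgroup.center E)
    {a a' b b' : E} (ha : S.rightHom a = S.rightHom a') (hb : S.rightHom b = S.rightHom b') :
    ⁅a, b⁆ = ⁅a', b'⁆ := by
  have left {a a' : E} (b : E) (ha : S.rightHom a = S.rightHom a') : ⁅a, b⁆ = ⁅a', b⁆ := by
    obtain ⟨c, hc⟩ := exists_inl_eq_of_rightHom_eq_one S (g := a * a'⁻¹)
      (by rw [map_mul, map_inv, ha, mul_inv_cancel])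
    rw [← commutatorElement_mul_of_mem_center (hS ⟨c, rfl⟩) a', hc, inv_mul_cancel_right]
  rw [left b ha, ← inv_inj, commutatorElement_inv, commutatorElement_inv, left a' hb]

theorem exists_commutator_pairing (hS : S.inl.range ≤ Subgroup.center E) {A : Type*} [CommGroup A]
    (u : A →* Q) : ∃ f : A → A →* kˣ, ∀ x y e e', S.rightHom e = u x → S.rightHom e' = u y →
      S.inl (f x y) = ⁅e, e'⁆ := by
  choose L hL using fun x ↦ S.rightHom_surjective (u x)
  have hexists (x y : A) : ∃ c, S.inl c = ⁅L x, L y⁆ := exists_inl_eq_of_rightHom_eq_one S (by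
    rw [map_commutatorElement, hL, hL, ← map_commutatorElement,
      commutatorElement_eq_one_iff_commute.2 (Commute.all _ _), map_one])
  choose f hf using hexists
  refine ⟨fun x ↦ .mk' (f x) fun y y' ↦ S.inl_injective ?_, fun x y e e' he he' ↦ ?_⟩
  · rw [map_mul, hf, commutatorElement_eq_of_rightHom_eq hS rfl (b' := L y * L y')
      (by rw [map_mul, hL, hL, hL, map_mul]), commutatorElement_mul_right_eq_mul_conj,
      ← hf x y', mul_assoc _ (L y), ← (commute_inl hS _ _).eq, ← mul_assoc, mul_inv_cancel_right,
      hf, hf]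
  · exact (hf x y).trans (commutatorElement_eq_of_rightHom_eq hS
      ((hL x).trans he.symm) ((hL y).trans he'.symm))

end Multiplier

section FieldOfOrderEight

open scoped commutatorElement

variable {F : Type} [Field F] (hF : Nat.card F = 8)
include hF

theorem charP_two : CharP F 2 := by
  have : Finite F := Nat.finite_of_card_ne_zero (by omega)
  have := Fintype.ofFinite F
  have h : ((2 : ℕ) : F) ^ 3 = 0 := by
    have := FiniteField.cast_card_eq_zero F
    rw [← Nat.card_eq_fintype_card, hF] at this
    exact_mod_cast this
  exact CharTwo.of_one_ne_zero_of_two_eq_zero one_ne_zero (pow_eq_zero_iff three_ne_zero |>.1 h)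

theorem pow_eight (x : F) : x ^ 8 = x := by
  have : Finite F := Nat.finite_of_card_ne_zero (by omega)
  have := Fintype.ofFinite F
  simpa [← Nat.card_eq_fintype_card, hF] using FiniteField.pow_card x

theorem pow_three_eq_or_inv_pow_three_eq {x : F} (h0 : x ≠ 0) (h1 : x ≠ 1) :
    x ^ 3 = x + 1 ∨ x⁻¹ ^ 3 = x⁻¹ + 1 := by
  have := charP_two hF
  have h2 : (2 : F) = 0 := CharTwo.two_eq_zero
  have h : (x ^ 3 - (x + 1)) * (x ^ 3 + x ^ 2 + 1) = 0 := by
    refine (mul_eq_zero.1 ?_).resolve_left (mul_ne_zero h0 (sub_ne_zero.2 h1))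
    linear_combination pow_eight hF x + (x - x ^ 6) * h2
  refine (mul_eq_zero.1 h).imp sub_eq_zero.1 fun h ↦ ?_
  field_simp
  linear_combination h - (x ^ 3 + x ^ 2) * h2

theorem exists_pow_three_eq : ∃ c : F, c ≠ 0 ∧ c ≠ 1 ∧ c ^ 3 = c + 1 := by
  have : Finite F := Nat.finite_of_card_ne_zero (by omega)
  obtain ⟨x, hx⟩ : ∃ x, x ∉ ({0, 1} : Set F) := by
    by_contra! h
    have := (Set.ncard_pair (zero_ne_one (α := F))).symm.trans
      ((congrArg Set.ncard (Set.eq_univ_of_forall h)).trans (Set.ncard_univ F))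
    omega
  rw [Set.mem_insert_iff, Set.mem_singleton_iff, not_or] at hx
  obtain h | h := pow_three_eq_or_inv_pow_three_eq hF hx.1 hx.2
  · exact ⟨x, hx.1, hx.2, h⟩
  · exact ⟨x⁻¹, inv_ne_zero hx.1, inv_ne_one.2 hx.2, h⟩

theorem eq_zero_of_map_inv {A : Type*} [AddCommGroup A] (g : F →+ A) (h1 : g 1 = 0)
    (hinv : ∀ x, g x⁻¹ = -g x) : g = 0 := by
  have := charP_two hF
  have h2 : (2 : F) = 0 := CharTwo.two_eq_zero
  have of_pow_three {c : F} (hc0 : c ≠ 0) (hc : c ^ 3 = c + 1) : g c = 0 := by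
    have hc7 : c ^ 7 = 1 := mul_left_cancel₀ hc0 (by linear_combination pow_eight hF c)
    have h3 : g (c ^ 3) = g c := by rw [hc, map_add, h1, add_zero]
    have h6 : g (c ^ 6) = g (c ^ 2) := by
      rw [show c ^ 6 = c ^ 2 + 1 by linear_combination (c ^ 3 + c + 1) * hc + c * h2, map_add, h1,
        add_zero]
    have hc6 : c ^ 6 = c⁻¹ := by field_simp; exact hc7
    have hc4 : c ^ 4 = (c ^ 3)⁻¹ := by field_simp; exact hc7
    have h4 : g (c ^ 4) = g (c ^ 2) + g c := by
      rw [show c ^ 4 = c ^ 2 + c by linear_combination c * hc, map_add]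
    rw [hc4, ← h6, hc6, hinv, hinv, h3, neg_add_cancel] at h4
    exact neg_eq_zero.1 h4
  ext x
  by_cases hx0 : x = 0
  · rw [hx0, map_zero, map_zero]
  by_cases hx1 : x = 1
  · rw [hx1, h1, AddMonoidHom.zero_apply]
  obtain h | h := pow_three_eq_or_inv_pow_three_eq hF hx0 hx1
  · exact of_pow_three hx0 h
  · rw [AddMonoidHom.zero_apply, ← neg_eq_zero, ← hinv]
    exact of_pow_three (inv_ne_zero hx0) h

variable {k E Q : Type} [Field k] [Group E] [Group Q] {S : GroupExtension kˣ E Q}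
  {u : Multiplicative F →* Q}

theorem commute_of_rightHom_eq (hS : S.inl.range ≤ Subgroup.center E)
    (hu : ∀ b : F, b ≠ 0 → ∃ q, ∀ x : F, q * u (.ofAdd x) * q⁻¹ = u (.ofAdd (b * x)))
    {e e' : E} {x y : F} (he : S.rightHom e = u (.ofAdd x)) (he' : S.rightHom e' = u (.ofAdd y)) :
    Commute e e' := by
  obtain ⟨f, hf⟩ := exists_commutator_pairing hS u
  choose L hL using fun x : F ↦ S.rightHom_surjective (u (.ofAdd x))
  have hscale {b : F} (hb : b ≠ 0) (x y : F) :
      f (.ofAdd (b * x)) (.ofAdd (b * y)) = f (.ofAdd x) (.ofAdd y) := S.inl_injective <| by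
    obtain ⟨q, hq⟩ := hu b hb
    obtain ⟨t, rfl⟩ := S.rightHom_surjective q
    rw [hf _ _ (t * L x * t⁻¹) (t * L y * t⁻¹) (by simp [hL, hq]) (by simp [hL, hq]),
      ← conjugate_commutatorElement, ← hf _ _ _ _ (hL x) (hL y), ← (commute_inl hS _ _).eq,
      mul_inv_cancel_right]
  have hswap (x y : F) : f (.ofAdd y) (.ofAdd x) = (f (.ofAdd x) (.ofAdd y))⁻¹ :=
    S.inl_injective <| by
      rw [map_inv, hf _ _ _ _ (hL x) (hL y), hf _ _ _ _ (hL y) (hL x), commutatorElement_inv]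
  have hone : MonoidHom.toAdditiveRight (f (.ofAdd 1)) = 0 := eq_zero_of_map_inv hF _
    (show f (.ofAdd 1) (.ofAdd 1) = 1 from S.inl_injective (by
      rw [hf _ _ _ _ (hL 1) (hL 1), commutatorElement_self, map_one]))
    fun y ↦ show f (.ofAdd 1) (.ofAdd y⁻¹) = (f (.ofAdd 1) (.ofAdd y))⁻¹ by
      obtain rfl | hy := eq_or_ne y 0
      · rw [inv_zero, ofAdd_zero, map_one, inv_one]
      · rw [← hswap, ← hscale hy, mul_inv_cancel₀ hy, mul_one]
  replace hone (y : F) : f (.ofAdd 1) (.ofAdd y) = 1 := DFunLike.congr_fun hone y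
  rw [← commutatorElement_eq_one_iff_commute, ← hf _ _ _ _ he he', ← map_one S.inl]
  congr 1
  obtain rfl | hx := eq_or_ne x 0
  · rw [hswap, ofAdd_zero, map_one, inv_one]
  · rw [← hone (x⁻¹ * y), ← hscale hx 1, mul_inv_cancel_left₀ hx, mul_one]

theorem exists_section_of_scaling (hS : S.inl.range ≤ Subgroup.center E)
    (hu : ∀ b : F, b ≠ 0 → ∃ q, ∀ x : F, q * u (.ofAdd x) * q⁻¹ = u (.ofAdd (b * x))) :
    ∃ s : Multiplicative F →* E, ∀ x, S.rightHom (s x) = u x := by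
  obtain ⟨c, hc0, hc1, -⟩ := exists_pow_three_eq hF
  obtain ⟨q, hq⟩ := hu c hc0
  obtain ⟨t, rfl⟩ := S.rightHom_surjective q
  choose L hL using fun x : F ↦ S.rightHom_surjective (u (.ofAdd x))
  have ht (y : F) : S.rightHom ⁅t, L y⁆ = u (.ofAdd ((c - 1) * y)) := by
    rw [commutatorElement_def, map_mul, map_mul, map_mul, map_inv, map_inv, hL, hq, ← map_inv,
      ← map_mul, ← ofAdd_neg, ← ofAdd_add, sub_one_mul, sub_eq_add_neg]
  have hc (y : F) : (c - 1) * ((c - 1)⁻¹ * y) = y := mul_inv_cancel_left₀ (sub_ne_zero.2 hc1) y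
  refine ⟨.mk' (fun x ↦ ⁅t, L ((c - 1)⁻¹ * x.toAdd)⁆) fun x y ↦ ?_, fun x ↦ ?_⟩
  · rw [toAdd_mul, mul_add, commutatorElement_eq_of_rightHom_eq hS rfl
      (b' := L ((c - 1)⁻¹ * x.toAdd) * L ((c - 1)⁻¹ * y.toAdd))
      (by rw [map_mul, hL, hL, hL, ofAdd_add, map_mul]), commutatorElement_mul_right_eq_mul_conj,
      mul_assoc _ (L _) ⁅_, _⁆, (commute_of_rightHom_eq hF hS hu (hL _) (ht _)).eq, ← mul_assoc,
      mul_inv_cancel_right]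
  · exact (ht _).trans (by rw [hc, ofAdd_toAdd])

theorem index_range_mem_extendablePowers [Finite Q] (hS : S.inl.range ≤ Subgroup.center E)
    (hinj : Function.Injective u)
    (hu : ∀ b : F, b ≠ 0 → ∃ q, ∀ x : F, q * u (.ofAdd x) * q⁻¹ = u (.ofAdd (b * x))) :
    (u.range.index : ℤ) ∈ extendablePowers S := by
  obtain ⟨s, hs⟩ := exists_section_of_scaling hF hS hu
  exact index_mem_extendablePowers hS
    (s := s.comp (MonoidHom.ofInjective hinj).symm.toMonoidHom) fun r ↦
      (hs _).trans (MonoidHom.apply_ofInjective_symm hinj r)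

end FieldOfOrderEight

/-! ### The group `SL(2, 8)` and its multiplier -/

section SpecialLinearGroupTwo

open Matrix MatrixGroups

variable {F : Type} [Field F]

/-- The upper unitriangular matrices of `SL(2, F)`, parametrized by their entry `x`. -/
def unipotent : Multiplicative F →* SL(2, F) where
  toFun x := ⟨!![1, x.toAdd; 0, 1], by simp⟩
  map_one' := Subtype.ext one_fin_two.symm
  map_mul' x y := Subtype.ext <| .symm <| (mul_fin_two ..).trans (by simp [add_comm])

/-- The diagonal matrices of `SL(2, F)`, parametrized by their first entry `a`. -/
def torus : Fˣ →* SL(2, F) where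
  toFun a := ⟨!![(a : F), 0; 0, (a : F)⁻¹], by simp⟩
  map_one' := Subtype.ext (by simp [one_fin_two])
  map_mul' a b := Subtype.ext <| .symm <| (mul_fin_two ..).trans (by simp [mul_comm])

/-- The matrix `!![0, 1; -1, 0]`, which swaps the two coordinate lines. -/
def weyl : SL(2, F) := ⟨!![0, 1; -1, 0], by simp⟩

@[simp]
theorem coe_unipotent (x : Multiplicative F) :
    (unipotent x : Matrix (Fin 2) (Fin 2) F) = !![1, x.toAdd; 0, 1] := rfl

@[simp]
theorem coe_torus (a : Fˣ) : (torus a : Matrix (Fin 2) (Fin 2) F) = !![(a : F), 0; 0, (a : F)⁻¹] :=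
  rfl

@[simp]
theorem coe_weyl : ((weyl : SL(2, F)) : Matrix (Fin 2) (Fin 2) F) = !![0, 1; -1, 0] := rfl

variable (F) in
/-- The subgroup of upper triangular matrices in `SL(2, F)`. -/
def borel : Subgroup SL(2, F) where
  carrier := {g | g 1 0 = 0}
  one_mem' := by simp
  mul_mem' {a b} (ha : a 1 0 = 0) (hb : b 1 0 = 0) := by
    simp [Matrix.mul_apply, Fin.sum_univ_two, ha, hb]
  inv_mem' {a} (ha : a 1 0 = 0) := by simp [Matrix.adjugate_fin_two, ha]

theorem mem_borel {g : SL(2, F)} : g ∈ borel F ↔ g 1 0 = 0 := Iff.rfl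

theorem unipotent_mem_borel (x : Multiplicative F) : unipotent x ∈ borel F := rfl

theorem torus_mem_borel (a : Fˣ) : torus a ∈ borel F := rfl

theorem unipotent_injective : Function.Injective (unipotent (F := F)) :=
  fun _ _ h ↦ congrArg (fun g : SL(2, F) ↦ g 0 1) h

theorem torus_injective : Function.Injective (torus (F := F)) :=
  fun _ _ h ↦ Units.ext (congrArg (fun g : SL(2, F) ↦ g 0 0) h)

theorem torus_mul_unipotent_mul_torus_inv (a : Fˣ) (x : F) :
    torus a * unipotent (.ofAdd x) * (torus a)⁻¹ = unipotent (.ofAdd (a ^ 2 * x)) := by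
  rw [mul_inv_eq_iff_eq_mul]
  refine Subtype.ext ?_
  simp [pow_two, mul_right_comm _ x]

theorem exists_eq_unipotent_mul_torus {g : SL(2, F)} (hg : g ∈ borel F) :
    ∃ x a, g = unipotent x * torus a := by
  obtain ⟨a, b, ha, rfl⟩ := SpecialLinearGroup.fin_two_exists_eq_mk_of_apply_zero_one_eq_zero g hg
  exact ⟨.ofAdd (b * a), .mk0 a ha, Subtype.ext (by simp [ha])⟩

theorem exists_unipotent_mul_mem_borel {g : SL(2, F)} (hg : g ∉ borel F) :
    ∃ x, weyl * (unipotent x * g) ∈ borel F := by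
  rw [mem_borel] at hg
  have hentry (x : F) :
      (weyl * (unipotent (.ofAdd x) * g) : SL(2, F)) 1 0 = -(x * g 1 0) + -g 0 0 := by
    simp [Matrix.mul_apply, Fin.sum_univ_two, coe_weyl, vecMul, dotProduct]
  refine ⟨.ofAdd (-g 0 0 / g 1 0), ?_⟩
  rw [mem_borel, hentry, div_mul_cancel₀ _ hg, neg_add_cancel]

theorem mem_borel_of_conj_unipotent {g : SL(2, F)} {x : F} (hx : x ≠ 0)
    (h : g * unipotent (.ofAdd x) * g⁻¹ ∈ borel F) : g ∈ borel F := by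
  rw [mem_borel] at h ⊢
  have hentry : (g * unipotent (.ofAdd x) * g⁻¹) 1 0 = -(x * g 1 0 ^ 2) := by
    simp only [Matrix.SpecialLinearGroup.coe_mul, Matrix.SpecialLinearGroup.coe_inv,
      coe_unipotent, toAdd_ofAdd, adjugate_fin_two, Matrix.mul_apply, of_apply, cons_val',
      cons_val_fin_one, Fin.sum_univ_two, cons_val_zero, cons_val_one]
    ring
  simpa [hx] using hentry.symm.trans h

theorem exists_eq_smul_add_smul_of_commute {A B : Matrix (Fin 2) (Fin 2) F}
    (hA : ∀ a : F, A ≠ a • 1) (hAB : Commute A B) : ∃ α β : F, B = α • A + β • 1 := by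
  have hcomm (i j : Fin 2) : (A * B) i j = (B * A) i j := by rw [hAB.eq]
  have h00 := hcomm 0 0
  have h01 := hcomm 0 1
  have h10 := hcomm 1 0
  simp only [Matrix.mul_apply, Fin.sum_univ_two] at h00 h01 h10
  have hsuff (α : F) (h00 : B 0 0 - B 1 1 = α * (A 0 0 - A 1 1)) (h01 : B 0 1 = α * A 0 1)
      (h10 : B 1 0 = α * A 1 0) : ∃ α β : F, B = α • A + β • 1 := by
    refine ⟨α, B 0 0 - α * A 0 0, ?_⟩
    ext i j
    fin_cases i <;> fin_cases j <;> simp [h01, h10]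
    linear_combination -h00
  by_cases hb : A 0 1 = 0
  · by_cases hc : A 1 0 = 0
    · by_cases hd : A 0 0 = A 1 1
      · exact absurd (by ext i j; fin_cases i <;> fin_cases j <;> simp [hb, hc, hd]) (hA (A 0 0))
      · have := sub_ne_zero.2 hd
        refine hsuff ((B 0 0 - B 1 1) / (A 0 0 - A 1 1)) ?_ ?_ ?_ <;> field_simp <;> grind
    · refine hsuff (B 1 0 / A 1 0) ?_ ?_ ?_ <;> field_simp <;> grind
  · refine hsuff (B 0 1 / A 0 1) ?_ ?_ ?_ <;> field_simp <;> grind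

theorem coe_sq_eq (g : SL(2, F)) : (g : Matrix (Fin 2) (Fin 2) F) ^ 2 =
    trace (g : Matrix (Fin 2) (Fin 2) F) • (g : Matrix (Fin 2) (Fin 2) F) - 1 := by
  have h := det_fin_two (g : Matrix (Fin 2) (Fin 2) F)
  rw [Matrix.SpecialLinearGroup.det_coe] at h
  ext i j
  fin_cases i <;> fin_cases j <;> simp [sq, Matrix.mul_apply, Fin.sum_univ_two, trace] <;> grind

theorem card_specialLinearGroup_two [Finite F] :
    Nat.card SL(2, F) * (Nat.card F - 1) =
      (Nat.card F ^ 2 - 1) * (Nat.card F ^ 2 - Nat.card F) := by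
  have := Fintype.ofFinite F
  have hcard : Nat.card SL(2, F) = Nat.card (GeneralLinearGroup.det (n := Fin 2) (R := F)).ker :=
    Nat.card_congr <| (Equiv.ofInjective _ SpecialLinearGroup.toGL_injective).trans
      (.setCongr SpecialLinearGroup.range_toGL)
  have h := Subgroup.card_mul_index (GeneralLinearGroup.det (n := Fin 2) (R := F)).ker
  rw [Subgroup.index_ker, MonoidHom.range_eq_top.2 GeneralLinearGroup.det_surjective, ← hcard,
    card_GL_field, Subgroup.card_top, Nat.card_units] at h
  simpa [Nat.card_eq_fintype_card, Fin.prod_univ_two] using h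

end SpecialLinearGroupTwo

section SpecialLinearGroupTwoChar

open Matrix MatrixGroups

variable {F : Type} [Field F]

theorem eq_one_of_coe_eq_smul_one [CharP F 2] {g : SL(2, F)} {a : F}
    (h : (g : Matrix (Fin 2) (Fin 2) F) = a • 1) : g = 1 := by
  have ha : a ^ 2 = 1 := by
    simpa [h, Matrix.det_smul] using Matrix.SpecialLinearGroup.det_coe g
  have ha' : (a - 1) ^ 2 = 0 := by
    rw [CharTwo.sub_eq_add, CharTwo.add_sq, ha, one_pow, CharTwo.add_self_eq_zero]
  refine Subtype.ext (h.trans ?_)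
  rw [sub_eq_zero.1 (pow_eq_zero_iff two_ne_zero |>.1 ha'), one_smul]
  rfl

theorem center_specialLinearGroup_two [CharP F 2] : Subgroup.center SL(2, F) = ⊥ := by
  refine (Subgroup.eq_bot_iff_forall _).2 fun g hg ↦ ?_
  obtain ⟨a, -, ha⟩ := Matrix.SpecialLinearGroup.mem_center_iff.1 hg
  exact eq_one_of_coe_eq_smul_one (ha.symm.trans (Matrix.smul_one_eq_diagonal a).symm)

theorem exists_eq_smul_add_smul_of_commute_of_ne_one [CharP F 2] {g h : SL(2, F)} (hg : g ≠ 1)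
    (hc : Commute g h) :
    ∃ α β : F, (h : Matrix (Fin 2) (Fin 2) F) = α • (g : Matrix (Fin 2) (Fin 2) F) + β • 1 :=
  exists_eq_smul_add_smul_of_commute (fun _ ha ↦ hg (eq_one_of_coe_eq_smul_one ha))
    (hc.map SpecialLinearGroup.coeMonoidHom)

theorem commute_of_commute_of_ne_one [CharP F 2] {g h h' : SL(2, F)} (hg : g ≠ 1)
    (hh : Commute g h) (hh' : Commute g h') : Commute h h' := by
  obtain ⟨α, β, e⟩ := exists_eq_smul_add_smul_of_commute_of_ne_one hg hh
  obtain ⟨α', β', e'⟩ := exists_eq_smul_add_smul_of_commute_of_ne_one hg hh'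
  refine SpecialLinearGroup.coeMonoidHom_injective ?_
  simp only [map_mul, SpecialLinearGroup.coeMonoidHom_apply, e, e', mul_add, add_mul,
    smul_mul_smul_comm, mul_one, one_mul, mul_comm α', mul_comm β']
  abel

theorem eq_or_eq_inv_of_commute_of_trace_eq [CharP F 2] {g h : SL(2, F)} (hc : Commute g h)
    (htr : trace (h : Matrix (Fin 2) (Fin 2) F) = trace (g : Matrix (Fin 2) (Fin 2) F))
    (h0 : trace (g : Matrix (Fin 2) (Fin 2) F) ≠ 0) : h = g ∨ h = g⁻¹ := by
  have h2 : (2 : F) = 0 := CharTwo.two_eq_zero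
  have hg : g ≠ 1 := by rintro rfl; simp [h2] at h0
  obtain ⟨α, β, e⟩ := exists_eq_smul_add_smul_of_commute_of_ne_one hg hc
  have hα : α = 1 := by
    rw [e] at htr
    simpa [h2, h0] using htr
  have hdet := det_fin_two (h : Matrix (Fin 2) (Fin 2) F)
  have hdet' := det_fin_two (g : Matrix (Fin 2) (Fin 2) F)
  rw [Matrix.SpecialLinearGroup.det_coe] at hdet hdet'
  rw [hα, one_smul] at e
  simp only [e, Matrix.add_apply, Matrix.smul_apply, one_apply_eq, smul_eq_mul,
    mul_one, Fin.isValue, ne_eq, zero_ne_one, one_ne_zero, not_false_eq_true, one_apply_ne,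
    mul_zero, add_zero] at hdet
  have hβ : β * (g 0 0 + g 1 1 + β) = 0 := by linear_combination hdet' - hdet
  obtain rfl | hβ := mul_eq_zero.1 hβ
  · exact .inl (Subtype.ext (by rw [e, zero_smul, add_zero]))
  · refine .inr (Subtype.ext ((e.trans ?_).trans (Matrix.SpecialLinearGroup.coe_inv g).symm))
    rw [Matrix.adjugate_fin_two]
    ext i j
    fin_cases i <;> fin_cases j <;> simp <;> grind

theorem pow_eight_eq_of_sq_eq [CharP F 2] {A : Type*} [Ring A] [Algebra F A] {x : A} {t : F}
    (hx : x ^ 2 = t • x + 1) : x ^ 8 = t ^ 7 • x + (t ^ 6 + t ^ 4 + 1) • 1 := by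
  have : (2 : F) = 0 := CharTwo.two_eq_zero
  have hsq (a b : F) : (a • x + b • 1) ^ 2 = (a ^ 2 * t) • x + (a ^ 2 + b ^ 2) • 1 := by
    simp only [sq, add_mul, mul_add, smul_mul_smul_comm, mul_one, one_mul]
    rw [← sq x, hx]
    match_scalars <;> grind
  rw [← one_smul F (1 : A)] at hx
  rw [show 8 = 2 * 2 * 2 from rfl, pow_mul, pow_mul, hx, hsq, hsq]
  match_scalars <;> grind

end SpecialLinearGroupTwoChar

section SpecialLinearGroupTwoEight

open Matrix MatrixGroups

variable {F : Type} [Field F] (hF : Nat.card F = 8)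
include hF

theorem pow_two_eq_one_of_trace_eq_zero {g : SL(2, F)}
    (h : trace (g : Matrix (Fin 2) (Fin 2) F) = 0) : g ^ 2 = 1 := by
  have := charP_two hF
  refine SpecialLinearGroup.coeMonoidHom_injective ?_
  rw [map_pow, map_one, SpecialLinearGroup.coeMonoidHom_apply, coe_sq_eq, h, zero_smul,
    CharTwo.sub_eq_add, zero_add]

theorem pow_eight_eq_of_trace_ne_zero {g : SL(2, F)} {t : F}
    (ht : trace (g : Matrix (Fin 2) (Fin 2) F) = t) (h : t ≠ 0) :
    (g : Matrix (Fin 2) (Fin 2) F) ^ 8 =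
      (g : Matrix (Fin 2) (Fin 2) F) + (t ^ 6 + t ^ 4 + 1) • 1 := by
  have := charP_two hF
  have hsq := coe_sq_eq g
  rw [CharTwo.sub_eq_add, ht] at hsq
  rw [pow_eight_eq_of_sq_eq hsq,
    show t ^ 7 = 1 from mul_left_cancel₀ h (by linear_combination pow_eight hF t), one_smul]

theorem pow_nine_eq_one_of_trace_eq {g : SL(2, F)} {t : F}
    (ht : trace (g : Matrix (Fin 2) (Fin 2) F) = t) (h : t ≠ 0) (h' : t ^ 6 + t ^ 4 + 1 = t) :
    g ^ 9 = 1 := by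
  have := charP_two hF
  have : (2 : F) = 0 := CharTwo.two_eq_zero
  refine SpecialLinearGroup.coeMonoidHom_injective ?_
  rw [map_pow, map_one, SpecialLinearGroup.coeMonoidHom_apply, pow_succ,
    pow_eight_eq_of_trace_ne_zero hF ht h, h', add_mul, ← sq, coe_sq_eq, ht, smul_one_mul]
  match_scalars <;> grind

theorem pow_eq_one_of_trace_ne_zero {g : SL(2, F)}
    (h : trace (g : Matrix (Fin 2) (Fin 2) F) ≠ 0) : g ^ 9 = 1 ∨ g ^ 7 = 1 := by
  have := charP_two hF
  have h2 : (2 : F) = 0 := CharTwo.two_eq_zero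
  obtain ⟨t, ht⟩ : ∃ t, trace (g : Matrix (Fin 2) (Fin 2) F) = t := ⟨_, rfl⟩
  rw [ht] at h
  have nine := pow_nine_eq_one_of_trace_eq hF ht h
  have seven (h' : t ^ 6 + t ^ 4 + 1 = 0) : g ^ 7 = 1 := by
    refine mul_left_cancel (a := g) (SpecialLinearGroup.coeMonoidHom_injective ?_)
    rw [← pow_succ', mul_one, map_pow, SpecialLinearGroup.coeMonoidHom_apply,
      pow_eight_eq_of_trace_ne_zero hF ht h, h', zero_smul, add_zero]
  by_cases h1 : t = 1
  · exact .inl (nine (by rw [h1]; linear_combination h2))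
  obtain h3 | h3 := pow_three_eq_or_inv_pow_three_eq hF h h1
  · exact .inl (nine (by grind))
  · field_simp at h3
    exact .inr (seven (by grind))

theorem card_specialLinearGroup_two_eight : Nat.card SL(2, F) = 504 := by
  have : Finite F := Nat.finite_of_card_ne_zero (by omega)
  have := card_specialLinearGroup_two (F := F)
  rw [hF] at this
  omega

theorem card_unipotent_range : Nat.card (unipotent (F := F)).range = 8 := by
  rw [← Nat.card_congr (MonoidHom.ofInjective unipotent_injective).toEquiv,
    Nat.card_congr Multiplicative.toAdd, hF]

theorem card_borel : Nat.card (borel F) = 56 := by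
  have : Finite F := Nat.finite_of_card_ne_zero (by omega)
  let f (p : Multiplicative F × Fˣ) : borel F :=
    ⟨unipotent p.1 * torus p.2, mul_mem (unipotent_mem_borel _) (torus_mem_borel _)⟩
  have hf : Function.Bijective f := by
    refine ⟨fun ⟨x, a⟩ ⟨y, b⟩ h ↦ ?_, fun ⟨g, hg⟩ ↦ ?_⟩
    · have h' := congrArg Subtype.val h
      have ha : a = b := Units.ext (by simpa [f] using congrArg (fun g : SL(2, F) ↦ g 0 0) h')
      subst ha
      exact Prod.ext (unipotent_injective (mul_right_cancel h')) rfl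
    · obtain ⟨x, a, rfl⟩ := exists_eq_unipotent_mul_torus hg
      exact ⟨(x, a), rfl⟩
  rw [← Nat.card_congr (.ofBijective f hf), Nat.card_prod, Nat.card_units,
    Nat.card_congr Multiplicative.toAdd, hF]

theorem exists_orderOf_eq_nine : ∃ g : SL(2, F), orderOf g = 9 := by
  have := charP_two hF
  have : (2 : F) = 0 := CharTwo.two_eq_zero
  have := Fact.mk Nat.prime_three
  obtain ⟨c, hc0, hc1, hc⟩ := exists_pow_three_eq hF
  let g : SL(2, F) := ⟨!![0, 1; 1, c], by simp [CharTwo.neg_eq]⟩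
  have hg : trace (g : Matrix (Fin 2) (Fin 2) F) = c := by simp [g, trace_fin_two]
  refine ⟨g, orderOf_eq_prime_pow (p := 3) (n := 1) (fun h ↦ hc1 ?_)
    (pow_nine_eq_one_of_trace_eq hF hg hc0 (by grind))⟩
  have h3 := congrArg SpecialLinearGroup.coeMonoidHom h
  rw [map_pow, map_one, SpecialLinearGroup.coeMonoidHom_apply] at h3
  simpa [g, pow_succ, mul_apply, Fin.sum_univ_two] using congrFun₂ h3 0 0

theorem exists_orderOf_torus_eq_seven : ∃ a : Fˣ, orderOf (torus a) = 7 := by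
  have : Finite F := Nat.finite_of_card_ne_zero (by omega)
  have := Fact.mk Nat.prime_seven
  obtain ⟨a, ha⟩ := exists_prime_orderOf_dvd_card' (G := Fˣ) 7 (by rw [Nat.card_units, hF])
  exact ⟨a, (orderOf_injective _ torus_injective a).trans ha⟩

theorem exists_torus_conj_unipotent {b : F} (hb : b ≠ 0) :
    ∃ a : Fˣ, ∀ x, torus a * unipotent (.ofAdd x) * (torus a)⁻¹ = unipotent (.ofAdd (b * x)) := by
  refine ⟨.mk0 (b ^ 4) (pow_ne_zero 4 hb), fun x ↦ ?_⟩
  rw [torus_mul_unipotent_mul_torus_inv, Units.val_mk0, ← pow_mul, pow_eight hF]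

end SpecialLinearGroupTwoEight

section Multiplier

open Matrix MatrixGroups

theorem index_eq_of_card_eq {Q : Type*} [Group Q] {a b : ℕ} (hQ : Nat.card Q = a * b) (ha : 0 < a)
    {R : Subgroup Q} (hR : Nat.card R = a) : R.index = b :=
  Nat.eq_of_mul_eq_mul_left ha (by rw [← hQ, ← R.card_mul_index, hR])

variable {F : Type} [Field F] (hF : Nat.card F = 8)
include hF

theorem hasTrivialMultiplier_specialLinearGroup {k : Type} [Field k] [IsAlgClosed k] :
    HasTrivialMultiplier k SL(2, F) :=
  hasTrivialMultiplier_of_one_mem_extendablePowers fun E _ S hS ↦ by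
    have : Finite F := Nat.finite_of_card_ne_zero (by omega)
    have hcard := card_specialLinearGroup_two_eight hF
    obtain ⟨g, hg⟩ := exists_orderOf_eq_nine hF
    obtain ⟨a, ha⟩ := exists_orderOf_torus_eq_seven hF
    have h63 := index_range_mem_extendablePowers hF hS unipotent_injective fun b hb ↦
      (exists_torus_conj_unipotent hF hb).imp' torus fun _ h ↦ h
    have h56 := index_zpowers_mem_extendablePowers hS g
    have h72 := index_zpowers_mem_extendablePowers hS (torus a)
    rw [index_eq_of_card_eq (a := 8) (b := 63) hcard (by decide) (card_unipotent_range hF)] at h63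
    rw [index_eq_of_card_eq (b := 56) hcard (by decide) ((Nat.card_zpowers g).trans hg)] at h56
    rw [index_eq_of_card_eq (b := 72) hcard (by decide) ((Nat.card_zpowers _).trans ha)] at h72
    simpa using sub_mem (sub_mem (zsmul_mem h63 31) (zsmul_mem h56 31)) (zsmul_mem h72 3)

theorem hasTrivialMultiplier_borel {k : Type} [Field k] [IsAlgClosed k] :
    HasTrivialMultiplier k (borel F) :=
  hasTrivialMultiplier_of_one_mem_extendablePowers fun E _ S hS ↦ by
    have : Finite F := Nat.finite_of_card_ne_zero (by omega)
    have hcard := card_borel hF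
    obtain ⟨a, ha⟩ := exists_orderOf_torus_eq_seven hF
    let u := (unipotent (F := F)).codRestrict (borel F) unipotent_mem_borel
    have hinj : Function.Injective u := fun x y h ↦ unipotent_injective (congrArg Subtype.val h)
    have hu : Nat.card u.range = 8 := by
      rw [← Nat.card_congr (MonoidHom.ofInjective hinj).toEquiv,
        Nat.card_congr Multiplicative.toAdd, hF]
    let t : borel F := ⟨torus a, torus_mem_borel a⟩
    have ht : Nat.card (Subgroup.zpowers t) = 7 :=
      (Nat.card_zpowers t).trans ((Subgroup.orderOf_mk _ _).trans ha)
    have h7 := index_range_mem_extendablePowers hF hS hinj fun b hb ↦ by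
      obtain ⟨a, ha⟩ := exists_torus_conj_unipotent hF hb
      exact ⟨⟨torus a, torus_mem_borel a⟩, fun x ↦ Subtype.ext (ha x)⟩
    have h8 := index_zpowers_mem_extendablePowers hS t
    rw [index_eq_of_card_eq (b := 7) hcard (by decide) hu] at h7
    rw [index_eq_of_card_eq (b := 8) hcard (by decide) ht] at h8
    simpa using sub_mem h8 h7

end Multiplier

/-! ### Subgroups of `SL(2, 8)` -/

section Sylow

variable {H : Type*} [Group H] {p : ℕ}

theorem isPGroup_centralizer [Fact p.Prime]
    (hord : ∀ x : H, ∃ q k, q.Prime ∧ orderOf x = q ^ k) {x : H} (hx1 : x ≠ 1) {j : ℕ}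
    (hx : orderOf x = p ^ j) : IsPGroup p (Subgroup.centralizer {x}) := by
  have hp : p.Prime := Fact.out
  have hj : j ≠ 0 := by
    rintro rfl
    exact hx1 (orderOf_eq_one_iff.1 hx)
  refine IsPGroup.iff_orderOf.2 fun ⟨g, hg⟩ ↦ ?_
  rw [Subgroup.orderOf_mk]
  obtain ⟨r, l, hr, hl⟩ := hord g
  obtain rfl | hpr := eq_or_ne p r
  · exact ⟨l, hl⟩
  obtain ⟨s, m, hs, hm⟩ := hord (x * g)
  have hxg : Commute x g := (Subgroup.mem_centralizer_singleton_iff.1 hg).symm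
  have hcop : (orderOf x).Coprime (orderOf g) := by
    rw [hx, hl]
    exact .pow _ _ ((Nat.coprime_primes hp hr).2 hpr)
  rw [hxg.orderOf_mul_eq_mul_orderOf_of_coprime hcop, hx, hl] at hm
  have hps : p = s := (Nat.prime_dvd_prime_iff_eq hp hs).1 <|
    hp.dvd_of_dvd_pow (hm ▸ dvd_mul_of_dvd_left (dvd_pow_self p hj) _)
  refine ⟨0, hl.trans ?_⟩
  by_contra hl0
  have hl0 : l ≠ 0 := by
    rintro rfl
    exact hl0 rfl
  exact hpr <| hps.trans <| .symm <| (Nat.prime_dvd_prime_iff_eq hr hs).1 <|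
    hr.dvd_of_dvd_pow (hm ▸ dvd_mul_of_dvd_right (dvd_pow_self r hl0) _)

theorem exists_ne_one_forall_commute [Finite H] [Fact p.Prime] {P : Subgroup H} (hP : IsPGroup p P)
    {x : H} (hx : x ∈ P) (hx1 : x ≠ 1) : ∃ z ∈ P, z ≠ 1 ∧ ∀ y ∈ P, Commute z y := by
  have : Nontrivial P := ⟨⟨x, hx⟩, 1, fun h ↦ hx1 (congrArg Subtype.val h)⟩
  have := hP.center_nontrivial
  obtain ⟨⟨z, hz⟩, hz1⟩ := exists_ne (1 : Subgroup.center P)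
  exact ⟨z, z.2, fun h ↦ hz1 (Subtype.ext (Subtype.ext h)), fun y hy ↦
    congrArg Subtype.val (Subgroup.mem_center_iff.1 hz ⟨y, hy⟩).symm⟩

theorem mem_sylow_of_commute [Finite H] [Fact p.Prime]
    (hca : ∀ x y z : H, x ≠ 1 → Commute x y → Commute x z → Commute y z)
    (hord : ∀ x : H, ∃ q k, q.Prime ∧ orderOf x = q ^ k) (P : Sylow p H) {x y : H} (hx : x ∈ P)
    (hx1 : x ≠ 1) (hxy : Commute x y) : y ∈ P := by
  obtain ⟨z, -, hz1, hz⟩ := exists_ne_one_forall_commute P.isPGroup' hx hx1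
  have hP : P.toSubgroup ≤ Subgroup.centralizer {x} := fun a ha ↦
    Subgroup.mem_centralizer_singleton_iff.2 (hca z x a hz1 (hz x hx) (hz a ha)).symm.eq
  obtain ⟨j, hj⟩ := IsPGroup.iff_orderOf.1 P.isPGroup' ⟨x, hx⟩
  have hC := isPGroup_centralizer hord hx1 ((Subgroup.orderOf_mk x hx).symm.trans hj)
  exact (P.is_maximal' hC hP).le (Subgroup.mem_centralizer_singleton_iff.2 hxy.symm.eq)

theorem card_modEq_card_fixedPoints_of_stabilizer {P X : Type*} [Group P] [MulAction P X]
    [Finite X] [Finite P]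
    (h : ∀ x ∉ MulAction.fixedPoints P X, MulAction.stabilizer P x = ⊥) :
    Nat.card X ≡ Nat.card (MulAction.fixedPoints P X) [MOD Nat.card P] := by
  let Y : SubMulAction P X :=
    ⟨(MulAction.fixedPoints P X)ᶜ, fun g x hx hgx ↦ hx fun k ↦ by
      have h1 := hgx g⁻¹
      rw [inv_smul_smul] at h1
      rw [h1, hgx k]⟩
  have hY : ∀ y : Y, MulAction.stabilizer P y = ⊥ := fun y ↦
    (SubMulAction.stabilizer_of_subMul y).trans (h y y.2)
  have hcard : Nat.card P ∣ Nat.card Y :=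
    ⟨_, (Nat.card_congr (MulAction.selfEquivOrbitsQuotientProd hY)).trans
      (by rw [Nat.card_prod, mul_comm])⟩
  have hXY : Nat.card (MulAction.fixedPoints P X) + Nat.card Y = Nat.card X :=
    Set.ncard_add_ncard_compl (MulAction.fixedPoints P X)
  rw [← hXY]
  simpa using (Nat.modEq_zero_iff_dvd.2 hcard).add_left (Nat.card (MulAction.fixedPoints P X))

variable {P : Sylow p H}

theorem card_sylow_modEq_one_of_commute [Finite H] [Fact p.Prime]
    (hP : ∀ (P : Sylow p H) (x y : H), x ∈ P → x ≠ 1 → Commute x y → y ∈ P) :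
    Nat.card (Sylow p H) ≡ 1 [MOD Nat.card P] := by
  have hfix : MulAction.fixedPoints P (Sylow p H) = {P} := by
    ext Q
    exact P.isPGroup'.sylow_mem_fixedPoints_iff.trans
      ⟨fun h ↦ Sylow.ext (P.is_maximal' Q.isPGroup' h), fun h ↦ (congrArg _ h).ge⟩
  have hstab (Q : Sylow p H) (hQ : Q ∉ MulAction.fixedPoints P (Sylow p H)) :
      MulAction.stabilizer P Q = ⊥ := by
    refine (Subgroup.eq_bot_iff_forall _).2 fun a ha ↦ ?_
    by_contra ha1
    have ha1 : (a : H) ≠ 1 := fun h ↦ ha1 (Subtype.ext h)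
    have haQ : (a : H) ∈ Q :=
      (P.isPGroup'.inf_normalizer_sylow Q ▸ Subgroup.mem_inf.2
        ⟨a.2, Sylow.smul_eq_iff_mem_normalizer.1 ha⟩ : (a : H) ∈ P.toSubgroup ⊓ Q.toSubgroup).2
    obtain ⟨z, -, hz1, hz⟩ := exists_ne_one_forall_commute Q.isPGroup' haQ ha1
    have hzP := hP P a z a.2 ha1 (hz a haQ).symm
    have hPQ := Q.is_maximal' P.isPGroup' fun y hy ↦ hP P z y hzP hz1 (hz y hy)
    exact hQ (hfix ▸ Sylow.ext hPQ.symm)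
  simpa [hfix] using card_modEq_card_fixedPoints_of_stabilizer hstab

theorem card_normalizer_le_card_mul_ncard {x : H} (hx : ∀ y, Commute x y → y ∈ P) {T : Set H}
    (hT : T.Finite) (hxT : ∀ g ∈ Subgroup.normalizer (P : Set H), g * x * g⁻¹ ∈ T) :
    Nat.card (Subgroup.normalizer (P : Set H)) ≤ Nat.card P * T.ncard := by
  set N := Subgroup.normalizer (P : Set H)
  have hPN : P.toSubgroup ≤ N := P.toSubgroup.le_normalizer
  have : Finite T := hT
  let f (g : N ⧸ P.toSubgroup.subgroupOf N) : T := ⟨g.out * x * (g.out : H)⁻¹, hxT _ g.out.2⟩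
  have hf : Function.Injective f := by
    intro g h hgh
    have hgh : (g.out * x * (g.out : H)⁻¹ : H) = h.out * x * (h.out : H)⁻¹ :=
      congrArg Subtype.val hgh
    rw [← g.out_eq', ← h.out_eq', QuotientGroup.eq, Subgroup.mem_subgroupOf]
    refine hx _ (Eq.trans ?_ (mul_assoc _ _ _).symm)
    simpa [mul_assoc] using congrArg (fun y ↦ (g.out : H)⁻¹ * y * h.out) hgh
  rw [← Subgroup.card_mul_index (P.toSubgroup.subgroupOf N),
    
    Nat.card_congr (Subgroup.subgroupOfEquivOfLe hPN).toEquiv]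
  exact Nat.mul_le_mul_left _ (Nat.card_le_card_of_injective f hf)

end Sylow

theorem sylow_ne_bot_of_card_eq {H : Type*} [Group H] {p : ℕ} [Fact p.Prime] {P : Sylow p H}
    {k : ℕ} (hk : k ≠ 0) (hP : Nat.card P = p ^ k) : P.toSubgroup ≠ ⊥ := fun h ↦
  (Nat.one_lt_pow hk (Nat.Prime.one_lt Fact.out)).ne' (hP.symm.trans (Subgroup.card_eq_one.2 h))

section SubgroupsOfSL

open Matrix MatrixGroups

variable {F : Type} [Field F] (hF : Nat.card F = 8)
include hF

theorem finite_specialLinearGroup : Finite SL(2, F) :=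
  Nat.finite_of_card_ne_zero (by rw [card_specialLinearGroup_two_eight hF]; decide)

theorem exists_orderOf_eq_prime_pow (g : SL(2, F)) : ∃ q k, q.Prime ∧ orderOf g = q ^ k := by
  have horder {q n : ℕ} (hq : q.Prime) (h : g ^ q ^ n = 1) : ∃ q k, q.Prime ∧ orderOf g = q ^ k :=
    ((Nat.dvd_prime_pow hq).1 (orderOf_dvd_of_pow_eq_one h)).imp' (fun _ ↦ q) fun k hk ↦
      ⟨k, hq, hk.2⟩
  by_cases ht : trace (g : Matrix (Fin 2) (Fin 2) F) = 0
  · exact horder (n := 1) Nat.prime_two (pow_two_eq_one_of_trace_eq_zero hF ht)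
  obtain h | h := pow_eq_one_of_trace_ne_zero hF ht
  · exact horder (n := 2) Nat.prime_three h
  · exact horder (n := 1) Nat.prime_seven (by rwa [pow_one])

/-- The unipotent upper triangular matrices, as a Sylow 2-subgroup of `SL(2, F)`. -/
def unipotentSylow : Sylow 2 SL(2, F) :=
  IsPGroup.toSylow (P := (unipotent (F := F)).range)
    (.of_card (n := 3) (card_unipotent_range hF)) (by
      rw [index_eq_of_card_eq (b := 63) (card_specialLinearGroup_two_eight hF) (by decide)
        (card_unipotent_range hF)]
      decide)

variable {H : Subgroup SL(2, F)} {p : ℕ} [Fact p.Prime]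

theorem commute_of_commute_of_mem_of_ne_one {x y z : H} (hx : x ≠ 1) (hy : Commute x y)
    (hz : Commute x z) : Commute y z := by
  have := charP_two hF
  exact .of_map Subtype.val_injective (f := H.subtype) <|
    commute_of_commute_of_ne_one (fun h ↦ hx (Subtype.ext h)) (hy.map H.subtype)
      (hz.map H.subtype)

theorem mem_sylow_of_commute_of_ne_one (P : Sylow p H) (x y : H) (hx : x ∈ P) (hx1 : x ≠ 1)
    (hxy : Commute x y) : y ∈ P := by
  have := finite_specialLinearGroup hF
  exact mem_sylow_of_commute (fun _ _ _ ↦ commute_of_commute_of_mem_of_ne_one hF)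
    (fun x ↦ Subgroup.orderOf_coe x ▸ exists_orderOf_eq_prime_pow hF x) P hx hx1 hxy

theorem commute_of_mem_sylow (P : Sylow p H) {x y : H} (hx : x ∈ P) (hx1 : x ≠ 1) (hy : y ∈ P) :
    Commute x y := by
  have := finite_specialLinearGroup hF
  obtain ⟨z, -, hz1, hz⟩ := exists_ne_one_forall_commute P.isPGroup' hx hx1
  exact commute_of_commute_of_mem_of_ne_one hF hz1 (hz x hx) (hz y hy)

theorem trace_ne_zero_of_mem_sylow (hp : p ≠ 2) (P : Sylow p H) {x : H} (hx : x ∈ P)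
    (hx1 : x ≠ 1) :
    trace ((x : SL(2, F)) : Matrix (Fin 2) (Fin 2) F) ≠ 0 := fun ht ↦ by
  have h2 : x ^ 2 = 1 := Subtype.ext (pow_two_eq_one_of_trace_eq_zero hF ht)
  obtain ⟨k, hk⟩ := P.isPGroup' ⟨x, hx⟩
  have hcop : Nat.Coprime 2 (p ^ k) :=
    .pow_right _ ((Nat.coprime_primes Nat.prime_two Fact.out).2 hp.symm)
  refine hx1 (orderOf_eq_one_iff.1 (Nat.eq_one_of_dvd_coprimes hcop ?_ ?_))
  · exact orderOf_dvd_of_pow_eq_one h2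
  · exact orderOf_dvd_of_pow_eq_one (congrArg Subtype.val hk)

theorem card_normalizer_le_card_mul_two (hp : p ≠ 2) {P : Sylow p H} (hP : P.toSubgroup ≠ ⊥) :
    Nat.card (Subgroup.normalizer (P : Set H)) ≤ Nat.card P * 2 := by
  have := charP_two hF
  obtain ⟨x, hx, hx1⟩ := P.toSubgroup.bot_or_exists_ne_one.resolve_left hP
  have hT : ({x, x⁻¹} : Set H).ncard ≤ 2 := by
    simpa using Set.ncard_insert_le x {x⁻¹}
  refine (card_normalizer_le_card_mul_ncard
    (fun y ↦ mem_sylow_of_commute_of_ne_one hF P x y hx hx1) (Set.toFinite _)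
    fun g hg ↦ ?_).trans (Nat.mul_le_mul_left _ hT)
  have hgx : g * x * g⁻¹ ∈ P := (hg x).1 hx
  have htr : trace ((g * x * g⁻¹ : H) : SL(2, F)).1 = trace (x : SL(2, F)).1 := by
    have h := trace_mul_comm ((g * x : H) : SL(2, F)).1 ((g⁻¹ : H) : SL(2, F)).1
    have hx' : g⁻¹ * (g * x) = x := inv_mul_cancel_left g x
    exact h.trans (congrArg (fun y : H ↦ trace (y : SL(2, F)).1) hx')
  exact (eq_or_eq_inv_of_commute_of_trace_eq
    ((commute_of_mem_sylow hF P hx hx1 hgx).map H.subtype) htr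
    (trace_ne_zero_of_mem_sylow hF hp P hx hx1)).imp (fun h ↦ Subtype.ext h) fun h ↦ Subtype.ext h

theorem card_normalizer_le_card_mul_pred {P : Sylow 2 H} (hP : P.toSubgroup ≠ ⊥) :
    Nat.card (Subgroup.normalizer (P : Set H)) ≤ Nat.card P * (Nat.card P - 1) := by
  have := finite_specialLinearGroup hF
  obtain ⟨x, hx, hx1⟩ := P.toSubgroup.bot_or_exists_ne_one.resolve_left hP
  have hT : ((P : Set H) \ {1}).ncard = Nat.card P - 1 :=
    Set.ncard_sdiff_singleton_of_mem (one_mem P)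
  exact hT ▸ card_normalizer_le_card_mul_ncard
    (fun y ↦ mem_sylow_of_commute_of_ne_one hF P x y hx hx1) (Set.toFinite _)
    fun g hg ↦ ⟨(hg x).1 hx, fun h ↦ hx1 (conj_eq_one_iff.1 h)⟩

theorem exists_conj_mem_unipotent_range {P : Subgroup SL(2, F)} (hP : IsPGroup 2 P) :
    ∃ s : SL(2, F), ∀ x ∈ P, s * x * s⁻¹ ∈ (unipotent (F := F)).range := by
  have := finite_specialLinearGroup hF
  obtain ⟨Q, hPQ⟩ := hP.exists_le_sylow
  obtain ⟨s, hs⟩ := MulAction.exists_smul_eq SL(2, F) Q (unipotentSylow hF)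
  refine ⟨s, fun x hx ↦ ?_⟩
  have h : s * x * s⁻¹ ∈ s • Q := Subgroup.smul_mem_pointwise_smul x (MulAut.conj s) _ (hPQ hx)
  rwa [hs] at h

theorem exists_conj_normalizer_mem_borel {P : Sylow 2 H} (hP : P.toSubgroup ≠ ⊥) :
    ∃ s : SL(2, F), ∀ h ∈ Subgroup.normalizer (P : Set H), s * h * s⁻¹ ∈ borel F := by
  obtain ⟨s, hs⟩ := exists_conj_mem_unipotent_range hF (P.isPGroup'.map H.subtype)
  obtain ⟨x, hx, hx1⟩ := P.toSubgroup.bot_or_exists_ne_one.resolve_left hP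
  obtain ⟨y, hy⟩ := hs x (Subgroup.mem_map_of_mem H.subtype hx)
  refine ⟨s, fun h hh ↦ mem_borel_of_conj_unipotent (x := y.toAdd) (fun hy0 ↦ hx1 ?_) ?_⟩
  · rw [toAdd_eq_zero.1 hy0, map_one] at hy
    exact Subtype.ext (conj_eq_one_iff.1 hy.symm)
  · obtain ⟨z, hz⟩ := hs _ (Subgroup.mem_map_of_mem H.subtype ((hh x).1 hx))
    have : s * h * s⁻¹ * unipotent y * (s * h * s⁻¹)⁻¹ = unipotent z := by
      rw [hy, hz]
      simp [mul_assoc]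
    exact this ▸ unipotent_mem_borel z

theorem card_normalizer_dvd {P : Sylow 2 H} (hP : P.toSubgroup ≠ ⊥) :
    Nat.card (Subgroup.normalizer (P : Set H)) ∣ 56 := by
  obtain ⟨s, hs⟩ := exists_conj_normalizer_mem_borel hF hP
  have hinj : Function.Injective ((MulAut.conj s).toMonoidHom.comp H.subtype) :=
    (MulAut.conj s).injective.comp H.subtype_injective
  rw [← card_borel hF, ← Subgroup.card_map_of_injective hinj]
  exact Subgroup.card_dvd_of_le (Subgroup.map_le_iff_le_comap.2 hs)

theorem exists_sylow_card_eq {k : ℕ} (hk : p ^ k ∣ Nat.card H) (hk' : ¬ p ^ (k + 1) ∣ Nat.card H) :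
    ∃ P : Sylow p H, Nat.card P = p ^ k ∧
      ∃ e n, Nat.card (Subgroup.normalizer (P : Set H)) = p ^ k * e ∧
        Nat.card H = p ^ k * e * n ∧ n ≡ 1 [MOD p ^ k] := by
  have := finite_specialLinearGroup hF
  obtain ⟨P⟩ := Sylow.nonempty (p := p) (G := H)
  obtain ⟨j, hj⟩ := IsPGroup.iff_card.1 P.isPGroup'
  have hp : 1 < p := Nat.Prime.one_lt Fact.out
  have hkj : k ≤ j := (Nat.pow_dvd_pow_iff_le_right hp).1 (hj ▸ P.pow_dvd_card_of_pow_dvd_card hk)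
  have hjk : ¬ k + 1 ≤ j := fun h ↦
    hk' ((pow_dvd_pow p h).trans (hj ▸ P.toSubgroup.card_subgroup_dvd_card))
  obtain rfl : j = k := by omega
  obtain ⟨e, he⟩ : Nat.card P ∣ Nat.card (Subgroup.normalizer (P : Set H)) :=
    Subgroup.card_dvd_of_le P.toSubgroup.le_normalizer
  rw [hj] at he
  refine ⟨P, hj, e, Nat.card (Sylow p H), he, ?_, ?_⟩
  · rw [P.card_eq_index_normalizer, ← he, Subgroup.card_mul_index]
  · exact hj ▸ card_sylow_modEq_one_of_commute (mem_sylow_of_commute_of_ne_one hF)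

theorem card_div_mod_le_two (hp : p ≠ 2) {k : ℕ} (hk0 : k ≠ 0) (hk : p ^ k ∣ Nat.card H)
    (hk' : ¬ p ^ (k + 1) ∣ Nat.card H) : Nat.card H / p ^ k % p ^ k ≤ 2 := by
  obtain ⟨P, hP, e, n, he, hn, hn1⟩ := exists_sylow_card_eq hF hk hk'
  have hpos : 0 < p ^ k := pow_pos (Nat.Prime.pos Fact.out) k
  have hle := card_normalizer_le_card_mul_two hF hp (sylow_ne_bot_of_card_eq hk0 hP)
  rw [hP, he] at hle
  calc Nat.card H / p ^ k % p ^ k = e * n % p ^ k := by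
        rw [hn, mul_assoc, Nat.mul_div_cancel_left _ hpos]
    _ = e * 1 % p ^ k := hn1.mul_left e
    _ ≤ e * 1 := Nat.mod_le _ _
    _ ≤ 2 := by simpa using Nat.le_of_mul_le_mul_left hle hpos

theorem two_pow_mul_card_div_mod_dvd {k : ℕ} (hk0 : k ≠ 0) (hk : 2 ^ k ∣ Nat.card H)
    (hk' : ¬ 2 ^ (k + 1) ∣ Nat.card H) : 2 ^ k * (Nat.card H / 2 ^ k % 2 ^ k) ∣ 56 := by
  obtain ⟨P, hP, e, n, he, hn, hn1⟩ := exists_sylow_card_eq hF hk hk'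
  have hpos : 0 < 2 ^ k := pow_pos two_pos k
  have hP0 := sylow_ne_bot_of_card_eq hk0 hP
  have hle := card_normalizer_le_card_mul_pred hF hP0
  rw [hP, he] at hle
  have hlt : e < 2 ^ k := by have := Nat.le_of_mul_le_mul_left hle hpos; omega
  have hmod : Nat.card H / 2 ^ k % 2 ^ k = e :=
    calc Nat.card H / 2 ^ k % 2 ^ k = e * n % 2 ^ k := by
          rw [hn, mul_assoc, Nat.mul_div_cancel_left _ hpos]
      _ = e * 1 % 2 ^ k := hn1.mul_left e
      _ = e := by rw [mul_one, Nat.mod_eq_of_lt hlt]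
  rw [hmod, ← he]
  exact card_normalizer_dvd hF hP0

theorem nonempty_mulEquiv_borel (hH : Nat.card H = 56) : Nonempty (H ≃* borel F) := by
  have := finite_specialLinearGroup hF
  obtain ⟨P, hP, e, n, he, hn, hn1⟩ := exists_sylow_card_eq hF (p := 2) (k := 3) (H := H)
    (by rw [hH]; decide) (by rw [hH]; decide)
  have hn7 : e * n = 7 := by
    rw [hH, mul_assoc] at hn
    omega
  have hn1 : n = 1 := by
    obtain h | h := (Nat.dvd_prime Nat.prime_seven).1 (Dvd.intro_left e hn7)
    · exact h
    · rw [h] at hn1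
      exact absurd hn1 (by decide)
  have hN : Subgroup.normalizer (P : Set H) = ⊤ :=
    Subgroup.eq_top_of_card_eq _ (by rw [he, hn, hn1, mul_one])
  obtain ⟨s, hs⟩ := exists_conj_normalizer_mem_borel hF
    (sylow_ne_bot_of_card_eq three_ne_zero hP)
  have hinj : Function.Injective (MulAut.conj s).toMonoidHom := (MulAut.conj s).injective
  have hle : H.map (MulAut.conj s).toMonoidHom ≤ borel F :=
    Subgroup.map_le_iff_le_comap.2 fun h hh ↦ hs ⟨h, hh⟩ (hN ▸ Subgroup.mem_top _)
  have heq : H.map (MulAut.conj s).toMonoidHom = borel F :=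
    Subgroup.eq_of_le_of_card_ge hle (by
      rw [Subgroup.card_map_of_injective hinj, hH, card_borel hF])
  exact ⟨(H.equivMapOfInjective _ hinj).trans (.subgroupCongr heq)⟩

theorem card_eq_or_dvd_index :
    Nat.card H = 504 ∨ Nat.card H = 56 ∨
      8 ∣ H.index ∨ 28 ∣ H.index ∨ 36 ∣ H.index ∨ 63 ∣ H.index := by
  have := Fact.mk Nat.prime_seven
  have hdivisors : ∀ m ∈ Nat.divisors 504,
      (3 ^ 2 ∣ m → ¬ 3 ^ (2 + 1) ∣ m → m / 3 ^ 2 % 3 ^ 2 ≤ 2) →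
      (7 ^ 1 ∣ m → ¬ 7 ^ (1 + 1) ∣ m → m / 7 ^ 1 % 7 ^ 1 ≤ 2) →
      (2 ^ 2 ∣ m → ¬ 2 ^ (2 + 1) ∣ m → 2 ^ 2 * (m / 2 ^ 2 % 2 ^ 2) ∣ 56) →
      (2 ^ 3 ∣ m → ¬ 2 ^ (3 + 1) ∣ m → 2 ^ 3 * (m / 2 ^ 3 % 2 ^ 3) ∣ 56) →
      m = 504 ∨ m = 56 ∨ 8 ∣ 504 / m ∨ 28 ∣ 504 / m ∨ 36 ∣ 504 / m ∨ 63 ∣ 504 / m := by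
    decide +kernel
  have hcard := H.card_mul_index
  rw [card_specialLinearGroup_two_eight hF] at hcard
  have hpos : 0 < Nat.card H := Nat.pos_of_ne_zero fun h ↦ by simp [h] at hcard
  rw [Nat.eq_div_of_mul_eq_right hpos.ne' hcard]
  exact hdivisors _ (Nat.mem_divisors.2 ⟨⟨_, hcard.symm⟩, by decide⟩)
    (card_div_mod_le_two hF (by decide) (by decide))
    (card_div_mod_le_two hF (by decide) (by decide))
    (two_pow_mul_card_div_mod_dvd hF (by decide)) (two_pow_mul_card_div_mod_dvd hF (by decide))

theorem subgroup_specialLinearGroup_cases (H : Subgroup SL(2, F)) :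
    H = ⊤ ∨ (Nonempty (H ≃* borel F) ∧ H.index = 9) ∨
      8 ∣ H.index ∨ 28 ∣ H.index ∨ 36 ∣ H.index ∨ 63 ∣ H.index := by
  have := finite_specialLinearGroup hF
  have hcard := card_specialLinearGroup_two_eight hF
  obtain h | h | h := card_eq_or_dvd_index hF (H := H)
  · exact .inl (Subgroup.eq_top_of_card_eq _ (h.trans hcard.symm))
  · exact .inr (.inl ⟨nonempty_mulEquiv_borel hF h, index_eq_of_card_eq hcard (by decide) h⟩)
  · exact .inr (.inr h)

end SubgroupsOfSL

/-! ### Automorphisms of `SL(2, 8)` -/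

section AutomorphismsOfSL

open Matrix MatrixGroups

theorem mulAut_smul_smul_sylow {H : Type*} [Group H] {p : ℕ} (φ : MulAut H) (h : H)
    (P : Sylow p H) : φ • h • P = φ h • φ • P := by
  have : φ * MulAut.conj h = MulAut.conj (φ h) * φ := by ext; simp
  rw [Sylow.smul_def, Sylow.smul_def, smul_smul, this, mul_smul]

theorem normal_range_conj (H : Type*) [Group H] : (MulAut.conj : H →* MulAut H).range.Normal where
  conj_mem := by
    rintro _ ⟨h, rfl⟩ φ
    exact ⟨φ h, by ext; simp⟩

variable {F : Type} [Field F]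

theorem exists_conj_unipotent_eq {g : SL(2, F)} (hg : g ∈ borel F) :
    ∃ c : F, ∀ x, g * unipotent (.ofAdd x) * g⁻¹ = unipotent (.ofAdd (c * x)) := by
  obtain ⟨y, a, rfl⟩ := exists_eq_unipotent_mul_torus hg
  refine ⟨a ^ 2, fun x ↦ ?_⟩
  rw [← torus_mul_unipotent_mul_torus_inv]
  have h := torus_mul_unipotent_mul_torus_inv a x
  calc unipotent y * torus a * unipotent (.ofAdd x) * (unipotent y * torus a)⁻¹
      = unipotent y * (torus a * unipotent (.ofAdd x) * (torus a)⁻¹) * (unipotent y)⁻¹ := by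
        group
    _ = torus a * unipotent (.ofAdd x) * (torus a)⁻¹ := by
        rw [h, ← map_mul, mul_comm, map_mul, mul_inv_cancel_right]

variable (hF : Nat.card F = 8)
include hF

theorem mem_unipotentSylow {g : SL(2, F)} :
    g ∈ unipotentSylow hF ↔ ∃ x : F, unipotent (.ofAdd x) = g := Iff.rfl

theorem smul_unipotentSylow_eq_iff {g : SL(2, F)} :
    g • unipotentSylow hF = unipotentSylow hF ↔ g ∈ borel F := by
  have := finite_specialLinearGroup hF
  refine ⟨fun h ↦ ?_, fun h ↦ ?_⟩
  · have h1 : g * unipotent (.ofAdd 1) * g⁻¹ ∈ g • unipotentSylow hF :=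
      Subgroup.smul_mem_pointwise_smul _ (MulAut.conj g) _
        ((mem_unipotentSylow hF).2 ⟨1, rfl⟩)
    obtain ⟨x, hx⟩ := (mem_unipotentSylow hF).1 (h ▸ h1)
    exact mem_borel_of_conj_unipotent one_ne_zero (hx ▸ unipotent_mem_borel _)
  · obtain ⟨c, hc⟩ := exists_conj_unipotent_eq h
    refine Sylow.ext ((g • unipotentSylow hF).3 (unipotentSylow hF).2 ?_).symm
    rintro _ ⟨_, hu, rfl⟩
    obtain ⟨x, rfl⟩ := (mem_unipotentSylow hF).1 hu
    exact (mem_unipotentSylow hF).2 ⟨c * x, (hc x).symm⟩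

/-- The lower unitriangular matrices, as a Sylow 2-subgroup of `SL(2, F)`. -/
def oppositeSylow : Sylow 2 SL(2, F) := (weyl : SL(2, F))⁻¹ • unipotentSylow hF

theorem apply_zero_one_eq_zero_of_smul_oppositeSylow_eq {g : SL(2, F)}
    (h : g • oppositeSylow hF = oppositeSylow hF) : g 0 1 = 0 := by
  rw [oppositeSylow, eq_inv_smul_iff, smul_smul, smul_smul, smul_unipotentSylow_eq_iff,
    mem_borel] at h
  simpa [Matrix.mul_apply, Fin.sum_univ_two, Matrix.adjugate_fin_two, vecMul, dotProduct] using h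

theorem exists_eq_unipotent_smul_oppositeSylow {Q : Sylow 2 SL(2, F)}
    (hQ : Q ≠ unipotentSylow hF) : ∃ x : F, Q = unipotent (.ofAdd x) • oppositeSylow hF := by
  have := finite_specialLinearGroup hF
  obtain ⟨g, rfl⟩ := MulAction.exists_smul_eq SL(2, F) (unipotentSylow hF) Q
  obtain ⟨x, hx⟩ := exists_unipotent_mul_mem_borel (mt (smul_unipotentSylow_eq_iff hF).2 hQ)
  rw [← smul_unipotentSylow_eq_iff hF, mul_smul, mul_smul, ← eq_inv_smul_iff] at hx
  exact ⟨(x⁻¹).toAdd, by rw [ofAdd_toAdd, map_inv, eq_inv_smul_iff, hx, oppositeSylow]⟩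

theorem eq_one_of_forall_smul_sylow_eq {g : SL(2, F)} (h : ∀ Q : Sylow 2 SL(2, F), g • Q = Q) :
    g = 1 := by
  have := charP_two hF
  have h10 : g 1 0 = 0 := (smul_unipotentSylow_eq_iff hF).1 (h _)
  have h01 := apply_zero_one_eq_zero_of_smul_oppositeSylow_eq hF (h _)
  have hu : ((unipotent (.ofAdd (1 : F)))⁻¹ * (g * unipotent (.ofAdd (1 : F)))) •
      oppositeSylow hF = oppositeSylow hF := by
    rw [mul_smul, mul_smul, h, inv_smul_smul]
  have h11 : g 0 0 = g 1 1 := by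
    simpa [Matrix.mul_apply, Fin.sum_univ_two, Matrix.adjugate_fin_two, h10, h01,
      ← sub_eq_add_neg, sub_eq_zero] using apply_zero_one_eq_zero_of_smul_oppositeSylow_eq hF hu
  refine eq_one_of_coe_eq_smul_one (a := g 0 0) ?_
  ext i j
  fin_cases i <;> fin_cases j <;> simp [h10, h01, h11]

theorem mulAut_eq_one_of_forall_smul_sylow_eq {φ : MulAut SL(2, F)}
    (h : ∀ Q : Sylow 2 SL(2, F), φ • Q = Q) : φ = 1 := by
  refine MulEquiv.ext fun g ↦ (inv_mul_eq_one (a := g).1 <|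
    eq_one_of_forall_smul_sylow_eq hF fun Q ↦ ?_).symm
  have := mulAut_smul_smul_sylow φ g Q
  rw [h, h] at this
  rw [mul_smul, ← this, inv_smul_smul]

/-- The automorphisms of `SL(2, F)` that preserve the upper and the lower unitriangular matrices and
fix the unipotent matrix with entry `1`. -/
def pinnedAut : Subgroup (MulAut SL(2, F)) :=
  MulAction.stabilizer _ (unipotentSylow hF) ⊓ MulAction.stabilizer _ (oppositeSylow hF) ⊓
    MulAction.stabilizer _ (unipotent (.ofAdd (1 : F)))

theorem unipotentSylow_ne_oppositeSylow : oppositeSylow hF ≠ unipotentSylow hF := by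
  rw [oppositeSylow, Ne, smul_unipotentSylow_eq_iff, inv_mem_iff, mem_borel]
  simp

theorem torus_smul_oppositeSylow (a : Fˣ) : torus a • oppositeSylow hF = oppositeSylow hF := by
  rw [oppositeSylow, eq_inv_smul_iff, smul_smul, smul_smul, smul_unipotentSylow_eq_iff, mem_borel]
  simp [Matrix.mul_apply, Fin.sum_univ_two, Matrix.adjugate_fin_two]

theorem exists_conj_mul_smul_eq (φ : MulAut SL(2, F)) :
    ∃ g, (MulAut.conj g * φ) • unipotentSylow hF = unipotentSylow hF ∧
      (MulAut.conj g * φ) • oppositeSylow hF = oppositeSylow hF := by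
  have := finite_specialLinearGroup hF
  obtain ⟨s, hs⟩ := MulAction.exists_smul_eq SL(2, F) (φ • unipotentSylow hF) (unipotentSylow hF)
  obtain ⟨x, hx⟩ := exists_eq_unipotent_smul_oppositeSylow hF
    (Q := s • φ • oppositeSylow hF) fun h ↦ by
      rw [← hs, smul_left_cancel_iff, smul_left_cancel_iff] at h
      exact unipotentSylow_ne_oppositeSylow hF h
  refine ⟨(unipotent (.ofAdd x))⁻¹ * s, ?_, ?_⟩
  · rw [mul_smul, ← Sylow.smul_def, mul_smul, hs, smul_unipotentSylow_eq_iff]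
    exact inv_mem (unipotent_mem_borel _)
  · rw [mul_smul, ← Sylow.smul_def, mul_smul, hx, inv_smul_smul]

theorem exists_conj_mul_mem_pinnedAut (φ : MulAut SL(2, F)) :
    ∃ g, MulAut.conj g * φ ∈ pinnedAut hF := by
  obtain ⟨g, hU, hV⟩ := exists_conj_mul_smul_eq hF φ
  set ψ := MulAut.conj g * φ with hψ
  have h1 : ψ (unipotent (.ofAdd (1 : F))) ∈ ψ • unipotentSylow hF :=
    Subgroup.smul_mem_pointwise_smul _ ψ _ ((mem_unipotentSylow hF).2 ⟨1, rfl⟩)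
  rw [hU] at h1
  obtain ⟨b, hb⟩ := (mem_unipotentSylow hF).1 h1
  have hb0 : b ≠ 0 := by
    rintro rfl
    rw [ofAdd_zero, map_one, eq_comm, map_eq_one_iff ψ ψ.injective,
      map_eq_one_iff _ unipotent_injective] at hb
    exact one_ne_zero (Multiplicative.ofAdd.injective hb)
  obtain ⟨a, ha⟩ := exists_torus_conj_unipotent hF (inv_ne_zero hb0)
  refine ⟨torus a * g, ?_⟩
  rw [map_mul, mul_assoc, ← hψ]
  refine ⟨⟨?_, ?_⟩, ?_⟩
  · change _ • _ = _
    rw [mul_smul, hU, ← Sylow.smul_def, smul_unipotentSylow_eq_iff]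
    exact torus_mem_borel a
  · change _ • _ = _
    rw [mul_smul, hV, ← Sylow.smul_def, torus_smul_oppositeSylow]
  · change MulAut.conj (torus a) (ψ _) = _
    rw [← hb, MulAut.conj_apply, ha, inv_mul_cancel₀ hb0]

theorem unipotent_apply_unipotent {φ : MulAut SL(2, F)} (hφ : φ ∈ pinnedAut hF) (x : F) :
    unipotent (.ofAdd (φ (unipotent (.ofAdd x)) 0 1)) = φ (unipotent (.ofAdd x)) := by
  have h : φ (unipotent (.ofAdd x)) ∈ φ • unipotentSylow hF :=
    Subgroup.smul_mem_pointwise_smul _ φ _ ((mem_unipotentSylow hF).2 ⟨x, rfl⟩)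
  rw [hφ.1.1] at h
  obtain ⟨y, hy⟩ := (mem_unipotentSylow hF).1 h
  rw [← hy]
  rfl

/-- The field endomorphism that describes the action of a pinned automorphism on the upper
unitriangular matrices. -/
def pinnedAutRingHom (φ : pinnedAut hF) : F →+* F where
  toFun x := φ.1 (unipotent (.ofAdd x)) 0 1
  map_zero' := by simp
  map_one' := congrArg (fun g : SL(2, F) ↦ g 0 1) φ.2.2
  map_add' x y := Multiplicative.ofAdd.injective <| unipotent_injective <| by
    have h := unipotent_apply_unipotent hF φ.2
    rw [h, ofAdd_add, ofAdd_add, map_mul, map_mul, map_mul, h, h]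
  map_mul' x y := by
    have h := unipotent_apply_unipotent hF φ.2
    by_cases hx : x = 0
    · simp [hx]
    obtain ⟨a, ha⟩ := exists_torus_conj_unipotent hF hx
    have hb : φ.1 (torus a) ∈ borel F := by
      rw [← smul_unipotentSylow_eq_iff hF]
      conv_lhs => rw [← φ.2.1.1]
      rw [← mulAut_smul_smul_sylow, (smul_unipotentSylow_eq_iff hF).2 (torus_mem_borel a)]
      exact φ.2.1.1
    obtain ⟨c, hc⟩ := exists_conj_unipotent_eq hb
    have hmul (y : F) : φ.1 (unipotent (.ofAdd (x * y))) 0 1 =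
        c * φ.1 (unipotent (.ofAdd y)) 0 1 := by
      refine Multiplicative.ofAdd.injective (unipotent_injective ?_)
      rw [h, ← hc, h, ← ha, map_mul, map_mul, map_inv]
    have h1 : φ.1 (unipotent (.ofAdd 1)) 0 1 = 1 :=
      congrArg (fun g : SL(2, F) ↦ g 0 1) φ.2.2
    have hxc := hmul 1
    rw [mul_one, h1, mul_one] at hxc
    rw [hmul, hxc]

theorem unipotent_pinnedAutRingHom (φ : pinnedAut hF) (x : F) :
    unipotent (.ofAdd (pinnedAutRingHom hF φ x)) = φ.1 (unipotent (.ofAdd x)) :=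
  unipotent_apply_unipotent hF φ.2 x

theorem pinnedAutRingHom_mul (φ ψ : pinnedAut hF) :
    pinnedAutRingHom hF (φ * ψ) = (pinnedAutRingHom hF φ).comp (pinnedAutRingHom hF ψ) :=
  RingHom.ext fun x ↦ Multiplicative.ofAdd.injective <| unipotent_injective <| by
    rw [RingHom.comp_apply, unipotent_pinnedAutRingHom, unipotent_pinnedAutRingHom,
      unipotent_pinnedAutRingHom]
    rfl

theorem eq_one_of_pinnedAutRingHom_eq_id {φ : pinnedAut hF}
    (h : pinnedAutRingHom hF φ = RingHom.id F) : φ = 1 := by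
  refine Subtype.ext (mulAut_eq_one_of_forall_smul_sylow_eq hF fun Q ↦ ?_)
  by_cases hQ : Q = unipotentSylow hF
  · exact hQ ▸ φ.2.1.1
  · obtain ⟨x, rfl⟩ := exists_eq_unipotent_smul_oppositeSylow hF hQ
    rw [mulAut_smul_smul_sylow, ← unipotent_pinnedAutRingHom, h, RingHom.id_apply]
    exact congrArg _ φ.2.1.2

theorem card_pinnedAut_dvd : Nat.card (pinnedAut hF) ∣ 3 := by
  have := charP_two hF
  have : Finite F := Nat.finite_of_card_ne_zero (by omega)
  let := ZMod.algebra F 2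
  let Φ : pinnedAut hF →* (F →ₐ[ZMod 2] F) :=
    { toFun φ := { pinnedAutRingHom hF φ with
        commutes' := RingHom.congr_fun (Subsingleton.elim
          ((pinnedAutRingHom hF φ).comp (algebraMap (ZMod 2) F)) _) }
      map_one' := AlgHom.ext fun x ↦ rfl
      map_mul' φ ψ := AlgHom.ext (RingHom.congr_fun (pinnedAutRingHom_mul hF φ ψ)) }
  have hΦ : Function.Injective Φ.toHomUnits := (injective_iff_map_eq_one _).2 fun φ hφ ↦
    eq_one_of_pinnedAutRingHom_eq_id hF (congrArg (fun u ↦ (u.1 : F →+* F)) hφ)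
  have hrank : 2 ^ Module.finrank (ZMod 2) F = 2 ^ 3 := by
    have := Module.natCard_eq_pow_finrank (K := ZMod 2) (V := F)
    rwa [hF, Nat.card_zmod, eq_comm] at this
  refine (Subgroup.card_dvd_of_injective _ hΦ).trans (dvd_of_eq ?_)
  rw [Nat.card_congr (AlgEquiv.algHomUnitsEquiv (ZMod 2) F).toEquiv,
    IsGalois.card_aut_eq_finrank, Nat.pow_right_injective le_rfl hrank]

theorem index_conj_range_dvd : (MulAut.conj : SL(2, F) →* _).range.index ∣ 3 := by
  have := normal_range_conj SL(2, F)
  let q := QuotientGroup.mk' (MulAut.conj : SL(2, F) →* _).range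
  have hq : Function.Surjective (q.comp (pinnedAut hF).subtype) := fun y ↦ by
    obtain ⟨φ, rfl⟩ := QuotientGroup.mk'_surjective _ y
    obtain ⟨g, hg⟩ := exists_conj_mul_mem_pinnedAut hF φ
    have hqg : q (MulAut.conj g) = 1 :=
      (QuotientGroup.eq_one_iff _).2 (MonoidHom.mem_range.2 ⟨g, rfl⟩)
    exact ⟨⟨_, hg⟩, (map_mul q _ _).trans (by rw [hqg, one_mul])⟩
  exact (Subgroup.card_dvd_of_surjective _ hq).trans (card_pinnedAut_dvd hF)

end AutomorphismsOfSL

/-! ### Two-transitive actions -/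

section TwoTransitive

open Module Representation

open MonoidAlgebra

variable (k Γ X : Type*) [Field k] [Group Γ] [MulAction Γ X]

/-- The sum of coordinates, as an intertwining map from the permutation representation on `X` to the
trivial representation. Its kernel is the deleted permutation representation. -/
noncomputable def augmentation : IntertwiningMap (ofMulAction k Γ X) (trivial k Γ k) where
  toLinearMap := Finsupp.linearCombination k (fun _ ↦ (1 : k)) ∘ₗ (coeffLinearEquiv k).toLinearMap
  isIntertwining' g := by ext; simp

variable {k Γ X}

@[simp]
theorem augmentation_single (x : X) (a : k) : augmentation k Γ X (single x a) = a := by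
  simp [augmentation]

theorem augmentation_apply [Fintype X] (v : k[X]) :
    augmentation k Γ X v = ∑ x, v.coeff x := by
  simp [augmentation, Finsupp.linearCombination_apply, Finsupp.sum_fintype]

variable (k Γ X) in
theorem finrank_ker_augmentation_add_one [Finite X] [Nonempty X] :
    finrank k (augmentation k Γ X).ker.toSubmodule + 1 = Nat.card X := by
  have hsurj : LinearMap.range (augmentation k Γ X).toLinearMap = ⊤ :=
    LinearMap.range_eq_top.2 fun a ↦ ⟨single (Classical.arbitrary X) a, augmentation_single _ _⟩
  have h := (augmentation k Γ X).toLinearMap.finrank_range_add_finrank_ker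
  rw [hsurj, finrank_top, finrank_self, (coeffLinearEquiv k).finrank_eq] at h
  have := Fintype.ofFinite X
  rw [add_comm, Nat.card_eq_fintype_card, ← finrank_finsupp_self k]
  exact h

theorem single_sub_single_mem_ker (x y : X) :
    (single x 1 - single y 1 : k[X]) ∈ (augmentation k Γ X).ker := by
  simp [IntertwiningMap.mem_ker, map_sub]

theorem ker_augmentation_le {W : Submodule k k[X]} [Finite X] (x₀ : X)
    (h : ∀ x, single x 1 - single x₀ 1 ∈ W) : (augmentation k Γ X).ker.toSubmodule ≤ W := by
  have := Fintype.ofFinite X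
  intro v hv
  have hsum : ∑ x, v.coeff x = 0 := (augmentation_apply v).symm.trans hv
  have hv' : v = ∑ x, v.coeff x • (single x 1 - single x₀ 1 : k[X]) := by
    simp only [smul_sub, Finset.sum_sub_distrib, ← Finset.sum_smul, hsum, zero_smul, sub_zero]
    exact MonoidAlgebra.ext <| Finsupp.ext fun y ↦ by simp
  rw [hv']
  exact W.sum_mem fun x _ ↦ W.smul_mem _ (h x)

theorem exists_mem_constant_off [Finite Γ] [Finite X] [CharZero k]
    [MulAction.IsMultiplyPretransitive Γ X 2] {W : Submodule k k[X]}
    (hW : ∀ g : Γ, ∀ v ∈ W, ofMulAction k Γ X g v ∈ W)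
    {v : k[X]} (hv : v ∈ W) {x₀ : X} (hx₀ : v.coeff x₀ ≠ 0) :
    ∃ w ∈ W, w.coeff x₀ ≠ 0 ∧ ∀ x ≠ x₀, ∀ y ≠ x₀, w.coeff x = w.coeff y := by
  have := Fintype.ofFinite (MulAction.stabilizer Γ x₀)
  let σ : Representation k (MulAction.stabilizer Γ x₀) k[X] :=
    (ofMulAction k Γ X).comp (Subgroup.subtype _)
  have hnorm (x : X) : (σ.norm v).coeff x =
      ∑ g : MulAction.stabilizer Γ x₀, v.coeff ((g : Γ)⁻¹ • x) := by
    simp [Representation.norm, σ, LinearMap.sum_apply]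
  refine ⟨σ.norm v, ?_, ?_, fun x hx y hy ↦ ?_⟩
  · rw [Representation.norm, LinearMap.sum_apply]
    exact W.sum_mem fun g _ ↦ hW g v hv
  · have (g : MulAction.stabilizer Γ x₀) : v.coeff ((g : Γ)⁻¹ • x₀) = v.coeff x₀ := by
      rw [inv_smul_eq_iff.2 g.2.symm]
    simp [hnorm, this, hx₀]
  · obtain ⟨g, hg₀, rfl⟩ := MulAction.is_two_pretransitive_iff.1 ‹_› hy.symm hx.symm
    have hg : ofMulAction k Γ X g (σ.norm v) = σ.norm v := σ.self_norm_apply ⟨g, hg₀⟩ v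
    conv_lhs => rw [← hg, coeff_ofMulAction, inv_smul_smul]

theorem single_sub_single_mem [Finite X] [CharZero k]
    [MulAction.IsMultiplyPretransitive Γ X 2] {W : Submodule k k[X]}
    (hW : ∀ g : Γ, ∀ v ∈ W, ofMulAction k Γ X g v ∈ W) {w : k[X]} (hw : w ∈ W)
    (hsum : augmentation k Γ X w = 0) {x₀ : X} (hx₀ : w.coeff x₀ ≠ 0)
    (hconst : ∀ x ≠ x₀, ∀ y ≠ x₀, w.coeff x = w.coeff y) (x : X) :
    single x 1 - single x₀ 1 ∈ W := by
  obtain rfl | hx := eq_or_ne x x₀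
  · simp
  have := Fintype.ofFinite X
  have : Nonempty X := ⟨x⟩
  have hne : w.coeff x₀ - w.coeff x ≠ 0 := fun h ↦ hx₀ <| by
    have (y : X) : w.coeff y = w.coeff x₀ := by
      obtain rfl | hy := eq_or_ne y x₀
      · rfl
      · rw [hconst y hy x hx, ← sub_eq_zero.1 h]
    simpa [augmentation_apply, this] using hsum
  obtain ⟨g, hg₀, hg⟩ := MulAction.is_two_pretransitive_iff.1 ‹_› hx.symm hx
  have hdiff : ofMulAction k Γ X g w - w =
      (w.coeff x₀ - w.coeff x) • (single x 1 - single x₀ 1) := by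
    refine MonoidAlgebra.ext <| Finsupp.ext fun y ↦ ?_
    obtain rfl | hy₀ := eq_or_ne y x₀
    · simp [inv_smul_eq_iff.2 hg.symm, hx]
    obtain rfl | hy := eq_or_ne y x
    · simp [inv_smul_eq_iff.2 hg₀.symm, hx.symm]
    have hgy : g⁻¹ • y ≠ x₀ := fun h ↦ hy (by rw [← hg₀, ← h, smul_inv_smul])
    simp [hconst _ hgy y hy₀, hy.symm, hy₀.symm]
  rw [← Submodule.smul_mem_iff W hne, ← hdiff]
  exact W.sub_mem (hW g w hw) hw

theorem isIrreducible_ker_augmentation [Finite Γ] [Finite X] [CharZero k] [Nontrivial X]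
    [MulAction.IsMultiplyPretransitive Γ X 2] :
    (augmentation k Γ X).ker.toRepresentation.IsIrreducible := by
  have : Nontrivial (augmentation k Γ X).ker.toSubmodule := by
    obtain ⟨x, y, hxy⟩ := exists_pair_ne X
    refine (Submodule.nontrivial_iff_ne_bot).2 (Submodule.ne_bot_iff _ |>.2
      ⟨_, single_sub_single_mem_ker x y, sub_ne_zero.2 fun h ↦ hxy ?_⟩)
    exact MonoidAlgebra.single_left_injective one_ne_zero h
  refine isIrreducible_of_invariant fun p hp ↦ or_iff_not_imp_left.2 fun hbot ↦ ?_
  obtain ⟨⟨v, hvker⟩, hv, hv0⟩ := (Submodule.ne_bot_iff p).1 hbot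
  let W := p.map (augmentation k Γ X).ker.toSubmodule.subtype
  have hW (g : Γ) (v) (hv : v ∈ W) : ofMulAction k Γ X g v ∈ W := by
    obtain ⟨v, hv, rfl⟩ := hv
    exact ⟨_, hp g v hv, rfl⟩
  obtain ⟨x₀, hx₀⟩ : ∃ x₀, v.coeff x₀ ≠ 0 := by
    by_contra! h
    exact hv0 (Subtype.ext (MonoidAlgebra.ext (Finsupp.ext h)))
  obtain ⟨w, hw, hwx₀, hconst⟩ := exists_mem_constant_off hW (Submodule.mem_map_of_mem hv) hx₀
  have hsum : augmentation k Γ X w = 0 := by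
    obtain ⟨w, -, rfl⟩ := hw
    exact w.2
  have hle : (augmentation k Γ X).ker.toSubmodule ≤ W :=
    ker_augmentation_le x₀ (single_sub_single_mem hW hw hsum hwx₀ hconst)
  refine Submodule.eq_top_iff'.2 fun u ↦ ?_
  obtain ⟨u', hu', h⟩ := hle u.2
  exact Subtype.ext h ▸ hu'

end TwoTransitive

theorem card_sub_one_mem_charDegrees {Γ X : Type} [Group Γ] [Finite Γ] [MulAction Γ X] [Finite X]
    [Nontrivial X] (h : MulAction.IsMultiplyPretransitive Γ X 2) :
    Nat.card X - 1 ∈ charDegrees Γ := by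
  have := isIrreducible_ker_augmentation (k := ℂ) (Γ := Γ) (X := X)
  rw [← finrank_ker_augmentation_add_one ℂ Γ X, Nat.add_sub_cancel]
  exact finrank_mem_charDegrees (augmentation ℂ Γ X).ker.toRepresentation

section TwoTransitiveActions

open Matrix MatrixGroups

theorem isMultiplyPretransitive_two_of_forall_ne {Γ X : Type*} [Group Γ] [MulAction Γ X] (x₀ x₁ : X)
    (h : ∀ a b : X, a ≠ b → ∃ g : Γ, g • a = x₀ ∧ g • b = x₁) :
    MulAction.IsMultiplyPretransitive Γ X 2 :=
  MulAction.is_two_pretransitive_iff.2 fun {a b c d} hab hcd ↦ by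
    obtain ⟨g, hga, hgb⟩ := h a b hab
    obtain ⟨g', hgc, hgd⟩ := h c d hcd
    exact ⟨g'⁻¹ * g, by rw [mul_smul, hga, ← hgc, inv_smul_smul],
      by rw [mul_smul, hgb, ← hgd, inv_smul_smul]⟩

variable {F : Type} [Field F] (hF : Nat.card F = 8)
include hF

theorem stabilizer_unipotentSylow :
    MulAction.stabilizer SL(2, F) (unipotentSylow hF) = borel F :=
  Subgroup.ext fun _ ↦ smul_unipotentSylow_eq_iff hF

theorem index_borel : (borel F).index = 9 :=
  index_eq_of_card_eq (card_specialLinearGroup_two_eight hF) (by norm_num) (card_borel hF)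

theorem card_sylow_two : Nat.card (Sylow 2 SL(2, F)) = 9 := by
  have := finite_specialLinearGroup hF
  rw [← index_borel hF, ← stabilizer_unipotentSylow hF,
    MulAction.index_stabilizer_of_transitive]

theorem exists_torus_smul_eq {x : F} (hx : x ≠ 0) : ∃ a : Fˣ,
    torus a • unipotent (.ofAdd x) • oppositeSylow hF =
      unipotent (.ofAdd (1 : F)) • oppositeSylow hF := by
  obtain ⟨a, ha⟩ := exists_torus_conj_unipotent hF (inv_ne_zero hx)
  refine ⟨a, ?_⟩
  rw [← inv_mul_cancel₀ hx, ← ha, mul_smul, mul_smul, ← torus_smul_oppositeSylow hF a,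
    inv_smul_smul, torus_smul_oppositeSylow]

theorem isMultiplyPretransitive_stabilizer : MulAction.IsMultiplyPretransitive
    (MulAction.stabilizer SL(2, F) (unipotentSylow hF))
    (SubMulAction.ofStabilizer SL(2, F) (unipotentSylow hF)) 2 := by
  have hu (x : F) : unipotent (.ofAdd x) • unipotentSylow hF = unipotentSylow hF :=
    (smul_unipotentSylow_eq_iff hF).2 (unipotent_mem_borel _)
  have hopp := unipotentSylow_ne_oppositeSylow hF
  have hone : unipotent (.ofAdd (1 : F)) • oppositeSylow hF ≠ unipotentSylow hF := fun h ↦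
    hopp (smul_left_cancel _ (h.trans (hu 1).symm))
  refine isMultiplyPretransitive_two_of_forall_ne ⟨_, hopp⟩ ⟨_, hone⟩ ?_
  rintro ⟨P, hP⟩ ⟨Q, hQ⟩ hne
  obtain ⟨x, rfl⟩ := exists_eq_unipotent_smul_oppositeSylow hF hP
  obtain ⟨y, rfl⟩ := exists_eq_unipotent_smul_oppositeSylow hF hQ
  have hxy : -x + y ≠ 0 := fun h ↦ by
    obtain rfl := neg_add_eq_zero.1 h
    exact hne rfl
  obtain ⟨a, ha⟩ := exists_torus_smul_eq hF hxy
  refine ⟨⟨torus a * unipotent (.ofAdd (-x)), ?_⟩, Subtype.ext ?_, Subtype.ext ?_⟩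
  · rw [stabilizer_unipotentSylow]
    exact mul_mem (torus_mem_borel a) (unipotent_mem_borel _)
  · change (torus a * unipotent (.ofAdd (-x))) • unipotent (.ofAdd x) • oppositeSylow hF = _
    rw [mul_smul, ofAdd_neg, map_inv, inv_smul_smul, torus_smul_oppositeSylow]
  · change (torus a * unipotent (.ofAdd (-x))) • unipotent (.ofAdd y) • oppositeSylow hF = _
    rw [mul_smul, ← mul_smul (unipotent _), ← map_mul, ← ofAdd_add, ha]

theorem isMultiplyPretransitive_sylow :
    MulAction.IsMultiplyPretransitive SL(2, F) (Sylow 2 SL(2, F)) 2 := by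
  have := finite_specialLinearGroup hF
  have := SubMulAction.ofStabilizer.isMultiplyPretransitive.2
    (isMultiplyPretransitive_stabilizer hF)
  exact MulAction.isMultiplyPretransitive_of_le (n := 3) (by norm_num) (by
    rw [card_sylow_two hF]
    norm_num)

theorem seven_mem_charDegrees_borel : 7 ∈ charDegrees (borel F) := by
  have := finite_specialLinearGroup hF
  rw [← stabilizer_unipotentSylow hF]
  have h := SubMulAction.nat_card_ofStabilizer_add_one_eq SL(2, F) (unipotentSylow hF)
  rw [card_sylow_two hF] at h
  have : Nontrivial (SubMulAction.ofStabilizer SL(2, F) (unipotentSylow hF)) :=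
    Finite.one_lt_card_iff_nontrivial.1 (by omega)
  have := card_sub_one_mem_charDegrees (isMultiplyPretransitive_stabilizer hF)
  rwa [show Nat.card _ = 8 from by omega] at this

theorem eight_mem_charDegrees {G : Type} [Group G] [Finite G] {α : G →* MulAut SL(2, F)}
    (hα : MulAut.conj.range ≤ α.range) : 8 ∈ charDegrees G := by
  have := finite_specialLinearGroup hF
  let := MulAction.compHom (Sylow 2 SL(2, F)) α
  have hcard := card_sylow_two hF
  have : Nontrivial (Sylow 2 SL(2, F)) := Finite.one_lt_card_iff_nontrivial.1 (by omega)
  have h := card_sub_one_mem_charDegrees (Γ := G) (X := Sylow 2 SL(2, F)) ?_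
  · rwa [hcard] at h
  refine MulAction.is_two_pretransitive_iff.2 fun hab hcd ↦ ?_
  obtain ⟨s, hs, hs'⟩ := MulAction.is_two_pretransitive_iff.1
    (isMultiplyPretransitive_sylow hF) hab hcd
  obtain ⟨g, hg⟩ := hα ⟨s, rfl⟩
  have hgs (P : Sylow 2 SL(2, F)) : g • P = s • P := congrArg (· • P) hg
  exact ⟨g, (hgs _).trans hs, (hgs _).trans hs'⟩

end TwoTransitiveActions

/-! ### Degrees of `SL(2, 8)` -/

section CharacterCongruence

open Module Representation

variable {k P V : Type*} [Field k] [CharZero k] [Group P] [Finite P] [AddCommGroup V] [Module k V]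
  [FiniteDimensional k V]

theorem card_mul_finrank_invariants (σ : Representation k P V) {c : k}
    (hc : ∀ g ≠ 1, σ.character g = c) :
    (Nat.card P * finrank k σ.invariants : k) = finrank k V + (Nat.card P - 1) * c := by
  have := Fintype.ofFinite P
  have hP : (Nat.card P : k) ≠ 0 := mod_cast Nat.card_pos.ne'
  let := invertibleOfNonzero hP
  have hsum : ∑ g, (σ.character g - c) = finrank k V - c := by
    rw [Finset.sum_eq_single 1 (fun g _ hg ↦ sub_eq_zero.2 (hc g hg)) (by simp), char_one]
  rw [Finset.sum_sub_distrib, Finset.sum_const, Finset.card_univ, ← Nat.card_eq_fintype_card,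
    nsmul_eq_mul] at hsum
  rw [← card_inv_mul_sum_char_eq_finrank, mul_inv_cancel_left₀ hP]
  linear_combination hsum

theorem finrank_modEq_finrank_invariants (σ : Representation k P V) {u : P} (hu : orderOf u = 2)
    (hc : ∀ g ≠ 1, σ.character g = σ.character u) :
    finrank k V ≡ finrank k σ.invariants [MOD Nat.card P - 1] := by
  let τ : Representation k (Subgroup.zpowers u) V := σ.comp (Subgroup.zpowers u).subtype
  have hcu := card_mul_finrank_invariants τ fun g hg ↦ hc g (mod_cast hg)
  have hcP := card_mul_finrank_invariants σ hc
  rw [Nat.card_zpowers, hu] at hcu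
  rw [Nat.ModEq.comm, Nat.modEq_iff_dvd, Nat.cast_pred Nat.card_pos]
  refine ⟨finrank k σ.invariants - 2 * finrank k τ.invariants + finrank k V, ?_⟩
  rw [← Int.cast_inj (α := k)]
  push_cast
  linear_combination ((Nat.card P : k) - 1) * hcu - hcP

end CharacterCongruence

section DegreesSpecialLinearGroup

open Module Representation Matrix MatrixGroups

variable {F : Type} [Field F]

/-- `unipotent` with values in the Borel subgroup. -/
def unipotentBorel : Multiplicative F →* borel F := unipotent.codRestrict _ unipotent_mem_borel

/-- `torus` with values in the Borel subgroup. -/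
def torusBorel : Fˣ →* borel F := torus.codRestrict _ torus_mem_borel

theorem exists_eq_unipotentBorel_mul_torusBorel (g : borel F) :
    ∃ x a, g = unipotentBorel x * torusBorel a := by
  obtain ⟨x, a, h⟩ := exists_eq_unipotent_mul_torus g.2
  exact ⟨x, a, Subtype.ext h⟩

theorem torus_mul_weyl (a : Fˣ) : torus a * weyl =
    unipotent (.ofAdd (a : F)) * (weyl * unipotent (.ofAdd (a : F)⁻¹) * weyl⁻¹) *
      unipotent (.ofAdd (a : F)) := by
  refine Matrix.SpecialLinearGroup.ext _ _ fun i j ↦ ?_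
  fin_cases i <;> fin_cases j <;>
    simp [coe_weyl, Matrix.mul_apply, Fin.sum_univ_two, Matrix.adjugate_fin_two]

theorem eq_top_of_forall_unipotent_mem {K : Subgroup SL(2, F)} [hK : K.Normal]
    (h : ∀ x, unipotent x ∈ K) : K = ⊤ := by
  have htw (a : Fˣ) : torus a * weyl ∈ K := by
    rw [torus_mul_weyl]
    exact mul_mem (mul_mem (h _) (hK.conj_mem _ (h _) _)) (h _)
  have hw : weyl ∈ K := by simpa using htw 1
  have hborel {g : SL(2, F)} (hg : g ∈ borel F) : g ∈ K := by
    obtain ⟨x, a, rfl⟩ := exists_eq_unipotent_mul_torus hg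
    exact mul_mem (h x) ((K.mul_mem_cancel_right hw).1 (htw a))
  refine (Subgroup.eq_top_iff' K).2 fun g ↦ ?_
  by_cases hg : g ∈ borel F
  · exact hborel hg
  · obtain ⟨x, hx⟩ := exists_unipotent_mul_mem_borel hg
    exact (K.mul_mem_cancel_left (h x)).1 ((K.mul_mem_cancel_left hw).1 (hborel hx))

variable {k V : Type*} [Field k] [AddCommGroup V] [Module k V] [FiniteDimensional k V]

/-- The vectors fixed by the unipotent matrices in a representation of the Borel subgroup. -/
noncomputable def unipotentInvariants (σ : Representation k (borel F) V) : Submodule k V :=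
  Representation.invariants (σ.comp unipotentBorel : Representation k (Multiplicative F) V)

omit [FiniteDimensional k V] in
theorem apply_mem_unipotentInvariants (σ : Representation k (borel F) V) (g : borel F) {v : V}
    (hv : v ∈ unipotentInvariants σ) : σ g v ∈ unipotentInvariants σ := by
  intro (x : Multiplicative F)
  obtain ⟨c, hc⟩ := exists_conj_unipotent_eq (inv_mem g.2)
  have hx : unipotentBorel x * g = g * unipotentBorel (.ofAdd (c * x.toAdd)) := by
    rw [← inv_mul_eq_iff_eq_mul, ← mul_assoc]
    refine Subtype.ext ((congrArg (_ * ·) (inv_inv _).symm).trans (hc x.toAdd))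
  change σ (unipotentBorel x) (σ g v) = σ g v
  rw [← Module.End.mul_apply, ← map_mul, hx, map_mul, Module.End.mul_apply]
  exact congrArg (σ g) (hv _)

theorem exists_finrank_eq_one_of_unipotentInvariants_ne_bot [IsAlgClosed k]
    {σ : Representation k (borel F) V} (h : unipotentInvariants σ ≠ ⊥) :
    ∃ X : Submodule k V, finrank k X = 1 ∧ ∀ g, ∀ v ∈ X, σ g v ∈ X := by
  have := Submodule.nontrivial_iff_ne_bot.2 h
  let τ : Subrepresentation (σ.comp torusBorel : Representation k Fˣ V) :=
    ⟨unipotentInvariants σ, fun a _ ↦ apply_mem_unipotentInvariants σ _⟩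
  have : Nontrivial τ.toSubmodule := this
  obtain ⟨p, hp⟩ := exists_isIrreducible_subrepresentation τ.toRepresentation
  refine ⟨p.toSubmodule.map τ.toSubmodule.subtype, ?_, ?_⟩
  · rw [Submodule.finrank_map_subtype_eq]
    exact IsIrreducible.finrank_eq_one_of_isMulCommutative p.toRepresentation
  · rintro g _ ⟨v, hv, rfl⟩
    obtain ⟨x, a, rfl⟩ := exists_eq_unipotentBorel_mul_torusBorel g
    refine ⟨τ.toRepresentation a v, p.apply_mem_toSubmodule a hv, ?_⟩
    rw [map_mul, Module.End.mul_apply]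
    exact (show _ ∈ unipotentInvariants σ from (τ.toRepresentation a v).2) x |>.symm

variable (hF : Nat.card F = 8)
include hF

theorem orderOf_ofAdd_one : orderOf (Multiplicative.ofAdd (1 : F)) = 2 := by
  have := charP_two hF
  rw [orderOf_ofAdd_eq_addOrderOf]
  exact CharP.eq F (CharP.addOrderOf_one F) this

theorem finrank_modEq_finrank_unipotentInvariants [CharZero k] (σ : Representation k (borel F) V) :
    finrank k V ≡ finrank k (unipotentInvariants σ) [MOD 7] := by
  have hcard : Nat.card (Multiplicative F) = 8 := hF
  have : Finite (Multiplicative F) := Nat.finite_of_card_ne_zero (by omega)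
  have hc (x : F) (hx : x ≠ 0) : σ.character (unipotentBorel (.ofAdd x)) =
      σ.character (unipotentBorel (.ofAdd (1 : F))) := by
    obtain ⟨a, ha⟩ := exists_torus_conj_unipotent hF hx
    rw [← char_conj σ (unipotentBorel (.ofAdd (1 : F))) (torusBorel a)]
    exact congrArg σ.character (Subtype.ext ((ha 1).trans (by rw [mul_one]; rfl)).symm)
  have := finrank_modEq_finrank_invariants
    (σ.comp unipotentBorel : Representation k (Multiplicative F) V) (orderOf_ofAdd_one hF) hc
  rwa [hcard] at this

theorem charDegrees_borel_subset : charDegrees (borel F) ⊆ {1, 7} := fun n hn ↦ by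
  have := finite_specialLinearGroup hF
  obtain ⟨σ, hσ⟩ := exists_isIrreducible_of_mem_charDegrees hn
  have := nontrivial_of_isIrreducible σ
  have hpos := finrank_pos (R := ℂ) (M := Fin n → ℂ)
  rw [finrank_fin_fun] at hpos
  by_cases h : unipotentInvariants σ = ⊥
  · have hmod := finrank_modEq_finrank_unipotentInvariants hF σ
    have hsq := finrank_sq_le_card σ
    rw [card_borel hF, finrank_fin_fun] at hsq
    rw [h, finrank_bot, finrank_fin_fun, Nat.modEq_zero_iff_dvd] at hmod
    obtain ⟨m, rfl⟩ := hmod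
    have : m ≤ 1 := by nlinarith
    interval_cases m <;> simp_all
  · obtain ⟨X, hX, hσX⟩ := exists_finrank_eq_one_of_unipotentInvariants_ne_bot h
    obtain rfl | rfl := eq_bot_or_eq_top_of_invariant X hσX
    · simp at hX
    · simp_all

theorem charDegrees_specialLinearGroup_subset :
    charDegrees SL(2, F) ⊆ {1, 7, 8, 9, 14, 21} := fun n hn ↦ by
  have := finite_specialLinearGroup hF
  obtain ⟨ρ, hρ⟩ := exists_isIrreducible_of_mem_charDegrees hn
  have := nontrivial_of_isIrreducible ρ
  have hpos := finrank_pos (R := ℂ) (M := Fin n → ℂ)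
  let σ : Representation ℂ (borel F) (Fin n → ℂ) := ρ.comp (borel F).subtype
  have hmod := finrank_modEq_finrank_unipotentInvariants hF σ
  rw [finrank_fin_fun] at hmod hpos
  by_cases hbot : unipotentInvariants σ = ⊥
  · rw [hbot, finrank_bot, Nat.modEq_zero_iff_dvd] at hmod
    have hsq := finrank_sq_le_card ρ
    rw [card_specialLinearGroup_two_eight hF, finrank_fin_fun] at hsq
    obtain ⟨m, rfl⟩ := hmod
    have : m ≤ 3 := by nlinarith
    interval_cases m <;> simp_all
  by_cases htop : unipotentInvariants σ = ⊤
  · left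
    rw [← finrank_fin_fun ℂ (n := n)]
    refine finrank_eq_one_of_ker_eq_top ρ (eq_top_of_forall_unipotent_mem fun x ↦ ?_)
    exact LinearMap.ext fun v ↦ (htop ▸ Submodule.mem_top : v ∈ unipotentInvariants σ) x
  have hlt := Submodule.finrank_lt htop
  obtain ⟨X, hX, hσX⟩ := exists_finrank_eq_one_of_unipotentInvariants_ne_bot hbot
  have hX0 : X ≠ ⊥ := by
    rintro rfl
    simp at hX
  have h9 := finrank_le_index_mul_finrank (borel F) ρ hX0 fun t ht ↦ hσX ⟨t, ht⟩
  have hinv := Submodule.one_le_finrank_iff.2 hbot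
  rw [index_borel hF, hX, finrank_fin_fun] at h9
  rw [finrank_fin_fun] at hlt
  simp only [Set.mem_insert_iff, Set.mem_singleton_iff]
  unfold Nat.ModEq at hmod
  omega

end DegreesSpecialLinearGroup

/-! ### Extensions and the two-prime hypothesis -/

section Extensions

open Matrix MatrixGroups

variable {G : Type} [Group G]

/-- The extension of `G ⧸ M` by a normal subgroup `M`. -/
def quotientExtension (M : Subgroup G) [M.Normal] : GroupExtension M G (G ⧸ M) where
  inl := M.subtype
  rightHom := QuotientGroup.mk' M
  inl_injective := M.subtype_injective
  range_inl_eq_ker_rightHom := M.range_subtype.trans (QuotientGroup.ker_mk' M).symm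
  rightHom_surjective := QuotientGroup.mk'_surjective M

variable {p : ℕ} [hp : Fact p.Prime] {M : Subgroup G} [M.Normal]

theorem index_subgroup_quotient_eq (hM : M.index ∣ p) (H : Subgroup (G ⧸ M)) :
    H.index = 1 ∨ H.index = p :=
  (Nat.dvd_prime hp.out).1 (H.index_dvd_card.trans hM)

variable [Finite G]

theorem exists_mem_charDegrees_of_index_dvd_prime (hM : M.index ∣ p) {n : ℕ}
    (hn : n ∈ charDegrees G) : ∃ m ∈ charDegrees M, n = m ∨ n = p * m := by
  have : IsCyclic (G ⧸ M) := isCyclic_of_card_dvd_prime hM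
  obtain ⟨m, hm, H, -, h⟩ := exists_index_mul_dvd_of_mem_charDegrees (quotientExtension M) hn
  obtain ⟨⟨d, hd, rfl⟩, -⟩ := h hasTrivialMultiplier_of_isCyclic
  rw [charDegrees_eq_singleton_of_isMulCommutative] at hd
  refine ⟨m, hm, (index_subgroup_quotient_eq hM H).imp (fun h ↦ ?_) fun h ↦ ?_⟩ <;> simp_all

theorem mem_charDegrees_or_mul_mem_of_index_dvd_prime (hM : M.index ∣ p) {m : ℕ}
    (hm : m ∈ charDegrees M) : m ∈ charDegrees G ∨ p * m ∈ charDegrees G := by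
  have : IsCyclic (G ⧸ M) := isCyclic_of_card_dvd_prime hM
  obtain ⟨H, h⟩ := exists_index_mul_mem_charDegrees (quotientExtension M) hm
  have hmem := h hasTrivialMultiplier_of_isCyclic 1 one_mem_charDegrees
  refine (index_subgroup_quotient_eq hM H).imp (fun h ↦ ?_) fun h ↦ ?_ <;> simp_all

variable {F : Type} [Field F] (hF : Nat.card F = 8)
include hF

theorem charDegrees_cases_of_surjective {π : G →* SL(2, F)} (hπ : Function.Surjective π) {c : ℕ}
    (hc : c ∈ charDegrees G) :
    (∃ m, 8 * m ∈ charDegrees G ∧ ∃ d ∈ ({1, 7, 8, 9, 14, 21} : Set ℕ), c = m * d) ∨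
      (∃ m, 63 * m ∈ charDegrees G ∧ c = 9 * m) ∨ 8 ∣ c ∨ 28 ∣ c ∨ 36 ∣ c ∨ 63 ∣ c := by
  have := finite_specialLinearGroup hF
  let S : GroupExtension π.ker G SL(2, F) :=
    ⟨π.ker.subtype, π, π.ker.subtype_injective, π.ker.range_subtype, hπ⟩
  obtain ⟨m, -, H, hdvd, h⟩ := exists_index_mul_dvd_of_mem_charDegrees S hc
  replace hdvd := (Dvd.intro _ rfl).trans hdvd
  obtain rfl | ⟨⟨e⟩, hH⟩ | h8 | h28 | h36 | h63 := subgroup_specialLinearGroup_cases hF H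
  · have e : (⊤ : Subgroup SL(2, F)) ≃* SL(2, F) := Subgroup.topEquiv
    obtain ⟨⟨d, hd, rfl⟩, hmem⟩ := h <|
      hasTrivialMultiplier_congr e.symm (hasTrivialMultiplier_specialLinearGroup hF)
    rw [charDegrees_congr e] at hd hmem
    refine .inl ⟨m, ?_, d, charDegrees_specialLinearGroup_subset hF hd, by simp⟩
    simpa [mul_comm] using hmem 8 (eight_mem_charDegrees hF le_rfl)
  · obtain ⟨⟨d, hd, rfl⟩, hmem⟩ := h <|
      hasTrivialMultiplier_congr e.symm (hasTrivialMultiplier_borel hF)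
    rw [charDegrees_congr e] at hd hmem
    rw [hH] at hmem ⊢
    obtain rfl | rfl := charDegrees_borel_subset hF hd
    · refine .inr (.inl ⟨m, ?_, by rw [mul_one]⟩)
      convert! hmem 7 (seven_mem_charDegrees_borel hF) using 1
      ring
    · refine .inr (.inr (.inr (.inr (.inr ⟨m, by ring⟩))))
  · exact .inr (.inr (.inl (h8.trans hdvd)))
  · exact .inr (.inr (.inr (.inl (h28.trans hdvd))))
  · exact .inr (.inr (.inr (.inr (.inl (h36.trans hdvd)))))
  · exact .inr (.inr (.inr (.inr (.inr (h63.trans hdvd)))))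

end Extensions

section TwoPrimeHypothesis

open ArithmeticFunction.Omega ArithmeticFunction

variable {G : Type} [Group G]

theorem eq_of_dvd_of_two_lt_length (hG : TwoPrimeHypothesis G) {a x y : ℕ}
    (ha : 2 < a.primeFactorsList.length) (hx : x ∈ charDegrees G) (hy : y ∈ charDegrees G)
    (hax : a ∣ x) (hay : a ∣ y) : x = y := by
  by_contra hne
  have hgcd : Nat.gcd x y ≠ 0 := fun h ↦ hne <| by
    rw [Nat.eq_zero_of_gcd_eq_zero_left h, Nat.eq_zero_of_gcd_eq_zero_right h]
  have hsub := Nat.primeFactorsList_sublist_of_dvd (Nat.dvd_gcd hax hay) hgcd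
  exact ha.not_ge (hsub.length_le.trans (hG x hx y hy hne))

theorem exists_eq_of_dvd (hG : TwoPrimeHypothesis G) {a : ℕ} (ha : 2 < a.primeFactorsList.length) :
    ∃ z, ∀ x ∈ charDegrees G, a ∣ x → x = z := by
  by_cases! h : ∃ z ∈ charDegrees G, a ∣ z
  · obtain ⟨z, hz, haz⟩ := h
    exact ⟨z, fun x hx hax ↦ eq_of_dvd_of_two_lt_length hG ha hx hz hax haz⟩
  · exact ⟨0, fun x hx hax ↦ (h x hx hax).elim⟩

theorem two_lt_length_primeFactorsList_nine_mul {m : ℕ} (hm : 1 < m) :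
    2 < (9 * m).primeFactorsList.length := by
  have h9 : Ω 9 = 2 := by simp [cardFactors_apply]
  have := cardFactors_pos_iff_one_lt.2 hm
  rw [← cardFactors_apply, cardFactors_mul (by norm_num) (by omega)]
  omega

open Matrix MatrixGroups

theorem conj_injective_of_center_eq_bot {S : Type*} [Group S] (hS : Subgroup.center S = ⊥) :
    Function.Injective (MulAut.conj : S →* MulAut S) := by
  rw [← MonoidHom.ker_eq_bot_iff, eq_bot_iff, ← hS]
  intro z hz
  refine Subgroup.mem_center_iff.2 fun g ↦ ?_
  exact (mul_inv_eq_iff_eq_mul.1 (congrArg (fun f : MulAut S ↦ f g) hz : z * g * z⁻¹ = g)).symm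

theorem exists_surjective_comap_range_conj {S : Type*} [Group S] (hS : Subgroup.center S = ⊥)
    {α : G →* MulAut S} (hα : MulAut.conj.range ≤ α.range) :
    ∃ π : (MulAut.conj : S →* MulAut S).range.comap α →* S, Function.Surjective π := by
  let e := MonoidHom.ofInjective (conj_injective_of_center_eq_bot hS)
  refine ⟨e.symm.toMonoidHom.comp (α.subgroupComap _), e.symm.surjective.comp ?_⟩
  rintro ⟨_, s, rfl⟩
  obtain ⟨g, hg⟩ := hα ⟨s, rfl⟩
  exact ⟨⟨g, s, hg.symm⟩, Subtype.ext hg⟩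

variable {F : Type} [Field F] (hF : Nat.card F = 8) [Finite G] (hG : TwoPrimeHypothesis G)
  {α : G →* MulAut SL(2, F)} (hα : MulAut.conj.range ≤ α.range)
include hF hG hα

theorem charDegrees_cases {n : ℕ} (hn : n ∈ charDegrees G) :
    n ∈ ({1, 3, 7, 8, 9, 14, 21, 27, 42} : Set ℕ) ∨ 28 ∣ n ∨ 36 ∣ n ∨ 63 ∣ n := by
  have := charP_two hF
  have := normal_range_conj SL(2, F)
  have hM : ((MulAut.conj : SL(2, F) →* _).range.comap α).index ∣ 3 := by
    rw [Subgroup.index_comap]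
    exact (Subgroup.relIndex_dvd_index_of_normal _ _).trans (index_conj_range_dvd hF)
  obtain ⟨π, hπ⟩ := exists_surjective_comap_range_conj center_specialLinearGroup_two hα
  have h8 {x : ℕ} (hx : x ∈ charDegrees G) (h : 8 ∣ x) : x = 8 :=
    eq_of_dvd_of_two_lt_length hG (by simp) hx (eight_mem_charDegrees hF hα) h dvd_rfl
  obtain ⟨c, hc, hnc⟩ := exists_mem_charDegrees_of_index_dvd_prime hM hn
  have hcn : c ∣ n := by
    obtain rfl | rfl := hnc
    exacts [dvd_rfl, dvd_mul_left ..]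
  obtain ⟨m, hm, d, hd, rfl⟩ | ⟨m, hm, rfl⟩ | h | h | h | h :=
    charDegrees_cases_of_surjective hF hπ hc
  · have hm1 : m = 1 := by
      obtain h | h := mem_charDegrees_or_mul_mem_of_index_dvd_prime hM hm
      · have := h8 h (dvd_mul_right ..)
        omega
      · have := h8 h ⟨3 * m, by ring⟩
        omega
    subst hm1
    simp only [Set.mem_insert_iff, Set.mem_singleton_iff] at hd ⊢
    have := h8 hn
    omega
  · by_cases! h1 : 1 < m
    · obtain ⟨k, hk, h63, h9⟩ : ∃ k ∈ charDegrees G, 63 ∣ k ∧ 9 * m ∣ k := by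
        obtain h | h := mem_charDegrees_or_mul_mem_of_index_dvd_prime hM hm
        · exact ⟨_, h, dvd_mul_right .., 7, by ring⟩
        · exact ⟨_, h, ⟨3 * m, by ring⟩, 21, by ring⟩
      rw [eq_of_dvd_of_two_lt_length hG (two_lt_length_primeFactorsList_nine_mul h1) hn hk hcn h9]
      exact .inr (.inr (.inr h63))
    · interval_cases m <;> obtain rfl | rfl := hnc <;> simp
  · simp [h8 hn (h.trans hcn)]
  · exact .inr (.inl (h.trans hcn))
  · exact .inr (.inr (.inl (h.trans hcn)))
  · exact .inr (.inr (.inr (h.trans hcn)))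

theorem ncard_charDegrees_le : (charDegrees G).ncard ≤ 12 := by
  obtain ⟨a, ha⟩ := exists_eq_of_dvd hG (a := 28) (by simp)
  obtain ⟨b, hb⟩ := exists_eq_of_dvd hG (a := 36) (by simp)
  obtain ⟨c, hc⟩ := exists_eq_of_dvd hG (a := 63) (by simp)
  let D : Finset ℕ := [1, 3, 7, 8, 9, 14, 21, 27, 42, a, b, c].toFinset
  have hsub : charDegrees G ⊆ D := fun n hn ↦ by
    obtain h | h | h | h := charDegrees_cases hF hG hα hn
    · simp only [Set.mem_insert_iff, Set.mem_singleton_iff] at h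
      simp only [D, List.coe_toFinset, List.mem_cons, Set.mem_ofPred_eq]
      tauto
    · simp [D, ha n hn h]
    · simp [D, hb n hn h]
    · simp [D, hc n hn h]
  calc (charDegrees G).ncard ≤ (D : Set ℕ).ncard := Set.ncard_le_ncard hsub D.finite_toSet
    _ = D.card := Set.ncard_coe_finset D
    _ ≤ 12 := List.toFinset_card_le _

end TwoPrimeHypothesis

section QuotientIsomorphism

theorem range_conj_le_range_congr_comp_conjNormal {Q S : Type*} [Group Q] [Group S]
    {K : Subgroup Q} [K.Normal] (e : K ≃* S) :
    MulAut.conj.range ≤ ((MulAut.congr e).toMonoidHom.comp MulAut.conjNormal).range := by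
  rintro _ ⟨s, rfl⟩
  refine ⟨e.symm s, MulEquiv.ext fun x ↦ ?_⟩
  have hconj : MulAut.conjNormal (e.symm s : Q) (e.symm x) =
      e.symm s * e.symm x * (e.symm s)⁻¹ := rfl
  change e (MulAut.conjNormal (e.symm s : Q) (e.symm x)) = s * x * s⁻¹
  simp only [hconj, map_mul, map_inv, MulEquiv.apply_symm_apply]

open Matrix MatrixGroups in
/-- The identification of `PSL₂` with `SL₂` in characteristic two. -/
noncomputable def psl2EquivOfCharTwo (F : Type) [Field F] [CharP F 2] : PSL2 F ≃* SL(2, F) :=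
  (QuotientGroup.quotientMulEquivOfEq center_specialLinearGroup_two).trans
    QuotientGroup.quotientBot

end QuotientIsomorphism

end TwoPrime

theorem cd_bound_psl2_8_general
    (F : Type) [Field F] (hF : Nat.card F = 8)
    (G : Type) [Group G] [Finite G] (hG : TwoPrimeHypothesis G)
    (N M : Subgroup G) [N.Normal] [M.Normal]
    (hiso : Nonempty ((M.map (QuotientGroup.mk' N)) ≃* PSL2 F)) :
    (charDegrees G).ncard ≤ 12 := by
  obtain ⟨e⟩ := hiso
  have := TwoPrime.charP_two hF
  have hK : (M.map (QuotientGroup.mk' N)).Normal :=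
    Subgroup.Normal.map inferInstance _ (QuotientGroup.mk'_surjective N)
  let E := e.trans (TwoPrime.psl2EquivOfCharTwo F)
  let φ := (MulAut.congr E).toMonoidHom.comp MulAut.conjNormal
  have hφ : MulAut.conj.range ≤ (φ.comp (QuotientGroup.mk' N)).range := by
    rw [MonoidHom.range_comp, QuotientGroup.range_mk', ← MonoidHom.range_eq_map]
    exact TwoPrime.range_conj_le_range_congr_comp_conjNormal E
  exact TwoPrime.ncard_charDegrees_le hF hG hφ

/-- If `G` satisfies the two-prime hypothesis and has normal subgroups `N ≤ M` with
`M/N ≅ PSL₂(8)` and the centralizer of `M/N` in `G/N` trivial, then `|cd(G)| ≤ 13`. -/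
theorem cd_bound_psl2_8
    (F : Type) [Field F] [Fintype F] (hF : Fintype.card F = 8)
    (G : Type) [Group G] [Finite G] (hG : TwoPrimeHypothesis G)
    (N M : Subgroup G) [N.Normal] [M.Normal] (hNM : N ≤ M)
    (hiso : Nonempty ((M.map (QuotientGroup.mk' N)) ≃* PSL2 F))
    (hcent : Subgroup.centralizer ((M.map (QuotientGroup.mk' N)) : Set (G ⧸ N)) = ⊥) :
    (charDegrees G).ncard ≤ 13 :=
  (cd_bound_psl2_8_general F (Nat.card_eq_fintype_card.trans hF) G hG N M hiso).trans (by norm_num)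
end
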